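/- There exists a constant c > 0 such that for all positive integers k and t, if T is a strongly c·kt-connected tournament, then there is a partition {V₁, …, V_t} of the vertex set of T such that the subtournament T[V_i] is strongly k-connected for every i ∈ [t]. -/

import Mathlib

open Finset

namespace TournamentPartition

/-! ### Basic constants from the paper -/

def rho : ℕ := 10 ^ 4
def sigma1 : ℕ := 10 ^ 60
def sigma2 : ℕ := 10 ^ 4
def sigma3 : ℕ := 10

/-- `s` contains at least `m` elements satisfying `P`. -/
def ManyIn {α : Type*} (s : Finset α) (m : ℝ) (P : α → Prop) : Prop :=
  ∃ s' : Finset α, s' ⊆ s ∧ m ≤ (s'.card : ℝ) ∧ ∀ x ∈ s', P x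

section Defs

variable {V I : Type*}

/-- `E u v` means that the edge between `u` and `v` is directed from `u` to `v`. -/
def IsTournament (E : V → V → Prop) : Prop :=
  (∀ v, ¬ E v v) ∧ ∀ u v : V, u ≠ v → (E u v ↔ ¬ E v u)

/-- There is a directed path from `u` to `v` all of whose vertices lie in `S`. -/
def ReachWithin (E : V → V → Prop) (S : Set V) (u v : V) : Prop :=
  Relation.ReflTransGen (fun a b => a ∈ S ∧ b ∈ S ∧ E a b) u v

def StronglyConnectedOn (E : V → V → Prop) (S : Set V) : Prop :=
  ∀ u ∈ S, ∀ v ∈ S, ReachWithin E S u v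

/-- A directed path, as a list of distinct vertices with consecutive edges. -/
def IsDiPath (E : V → V → Prop) (l : List V) : Prop :=
  l ≠ [] ∧ l.Nodup ∧ l.Chain' E

variable [Fintype V] [DecidableEq V]

/-- The set `S` induces a strongly `k`-connected subtournament. -/
def StronglyKConnectedOn (E : V → V → Prop) (k : ℕ) (S : Finset V) : Prop :=
  k + 1 ≤ S.card ∧
    ∀ Z : Finset V, Z.card ≤ k → StronglyConnectedOn E ((S \ Z : Finset V) : Set V)

def StronglyKConnected (E : V → V → Prop) (k : ℕ) : Prop :=
  StronglyKConnectedOn E k Finset.univ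

def outN (E : V → V → Prop) [DecidableRel E] (u : V) : Finset V :=
  Finset.univ.filter fun v => E u v

def inN (E : V → V → Prop) [DecidableRel E] (u : V) : Finset V :=
  Finset.univ.filter fun v => E v u

/-- A system of gadgets `U(α)` with special sets `S⁺(α), S⁻(α) ⊆ S(α) ⊆ U(α)`,
exceptional sets `X(α)` and special vertices `s⁺(α), s⁻(α) ∈ S(α)`. -/
structure GadgetSystem (V I : Type*) where
  U : I → Finset V
  S : I → Finset V
  Sp : I → Finset V
  Sm : I → Finset V
  X : I → Finset V
  sp : I → V
  sm : I → V
  sp_mem : ∀ α, sp α ∈ S α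
  sm_mem : ∀ α, sm α ∈ S α
  Sp_subset : ∀ α, Sp α ⊆ S α
  Sm_subset : ∀ α, Sm α ⊆ S α
  S_subset : ∀ α, S α ⊆ U α

variable [Fintype I] [DecidableEq I]

def Vokay (G : GadgetSystem V I) : Finset V :=
  Finset.univ \ Finset.univ.biUnion G.S

/-- Vertices of `V_okay` having no out-neighbour in `S⁻(α)` for at least `k*t` indices `α`. -/
def VbadP (E : V → V → Prop) [DecidableRel E] (G : GadgetSystem V I) (k t : ℕ) : Finset V :=
  (Vokay G).filter fun u =>
    k * t ≤ (Finset.univ.filter fun α : I => ∀ v ∈ G.Sm α, ¬ E u v).card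

/-- Vertices of `V_okay` having no in-neighbour in `S⁺(α)` for at least `k*t` indices `α`. -/
def VbadM (E : V → V → Prop) [DecidableRel E] (G : GadgetSystem V I) (k t : ℕ) : Finset V :=
  (Vokay G).filter fun u =>
    k * t ≤ (Finset.univ.filter fun α : I => ∀ v ∈ G.Sp α, ¬ E v u).card

def Vbad (E : V → V → Prop) [DecidableRel E] (G : GadgetSystem V I) (k t : ℕ) : Finset V :=
  VbadP E G k t ∩ VbadM E G k t

def VgoodP (E : V → V → Prop) [DecidableRel E] (G : GadgetSystem V I) (k t : ℕ) : Finset V :=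
  Vokay G \ VbadP E G k t

def VgoodM (E : V → V → Prop) [DecidableRel E] (G : GadgetSystem V I) (k t : ℕ) : Finset V :=
  Vokay G \ VbadM E G k t

def Vgood (E : V → V → Prop) [DecidableRel E] (G : GadgetSystem V I) (k t : ℕ) : Finset V :=
  VgoodP E G k t ∩ VgoodM E G k t

/-- `W(C) = V ∖ ⋃_{α ∈ C} U(α)`. -/
def Wof (G : GadgetSystem V I) (C : Finset I) : Finset V :=
  Finset.univ \ C.biUnion G.U

def NokayP (E : V → V → Prop) [DecidableRel E] (G : GadgetSystem V I) (u : V) : Finset V :=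
  outN E u ∩ Vokay G

def NokayM (E : V → V → Prop) [DecidableRel E] (G : GadgetSystem V I) (u : V) : Finset V :=
  inN E u ∩ Vokay G

def NgoodP (E : V → V → Prop) [DecidableRel E] (G : GadgetSystem V I) (k t : ℕ) (u : V) :
    Finset V :=
  outN E u ∩ VgoodP E G k t

def NgoodM (E : V → V → Prop) [DecidableRel E] (G : GadgetSystem V I) (k t : ℕ) (u : V) :
    Finset V :=
  inN E u ∩ Vgood E G k t

/-! ### Properties (G1)–(G9) -/

def CondG1 (G : GadgetSystem V I) : Prop :=
  ∀ α β : I, α ≠ β → Disjoint (G.U α) (G.U β)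

def CondG2 (G : GadgetSystem V I) (k t : ℕ) : Prop :=
  ∀ α : I, (G.S α).card ≤ rho ∧ (G.X α).card ≤ rho * sigma1 * k * t

def CondG3 (E : V → V → Prop) (G : GadgetSystem V I) : Prop :=
  ∀ α : I, ∀ u ∈ G.Sm α, ∀ v ∈ G.Sp α, ReachWithin E (G.U α : Set V) u v

def CondG4 (E : V → V → Prop) (G : GadgetSystem V I) : Prop :=
  ∀ α : I, ∀ x : V, x ∉ G.X α →
    (E x (G.sp α) → ∀ u ∈ G.U α \ G.S α, E x u) ∧
    (E (G.sm α) x → ∀ u ∈ G.U α \ G.S α, E u x)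

def CondG5 (E : V → V → Prop) [DecidableRel E] (G : GadgetSystem V I) (k t : ℕ) : Prop :=
  ∀ u ∈ Vokay G,
    10 ^ 12 * (VbadP E G k t).card ≤ (outN E u).card ∧
    10 ^ 12 * (VbadM E G k t).card ≤ (inN E u).card

/-- Properties (G1)–(G5) of a gadget system. -/
def GadgetHyp (E : V → V → Prop) [DecidableRel E] (G : GadgetSystem V I) (k t : ℕ) : Prop :=
  CondG1 G ∧ CondG2 G k t ∧ CondG3 E G ∧ CondG4 E G ∧ CondG5 E G k t

def CondG6 (E : V → V → Prop) [DecidableRel E] (G : GadgetSystem V I) (k t : ℕ) : Prop :=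
  (Fintype.card V : ℝ) / 2 ≤ ((Vgood E G k t).card : ℝ)

def CondG7 (E : V → V → Prop) [DecidableRel E] (G : GadgetSystem V I) (k t τ₁ : ℕ) : Prop :=
  ∀ u ∈ Vokay G,
    max ((10 : ℝ) ^ 11 * ((VbadP E G k t).card : ℝ)) (((τ₁ * k * t : ℕ) : ℝ) / 2)
      ≤ ((outN E u ∩ VgoodP E G k t).card : ℝ)

def CondG8 (E : V → V → Prop) [DecidableRel E] (G : GadgetSystem V I) (k t τ₁ : ℕ) : Prop :=
  ∀ u ∈ Vokay G,
    max ((10 : ℝ) ^ 11 * ((VbadM E G k t).card : ℝ)) (((τ₁ * k * t : ℕ) : ℝ) / 2)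
      ≤ ((inN E u ∩ Vgood E G k t).card : ℝ)

def CondG9 (E : V → V → Prop) [DecidableRel E] (G : GadgetSystem V I) (k t τ₁ : ℕ) : Prop :=
  ∀ u : V,
    max ((10 : ℝ) ^ 11 * (((Finset.univ \ Vokay G).card : ℕ) : ℝ)) (((τ₁ * k * t : ℕ) : ℝ) / 2)
      ≤ ((outN E u ∩ Vokay G).card : ℝ) ∧
    max ((10 : ℝ) ^ 11 * (((Finset.univ \ Vokay G).card : ℕ) : ℝ)) (((τ₁ * k * t : ℕ) : ℝ) / 2)
      ≤ ((inN E u ∩ Vokay G).card : ℝ)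

/-- Properties (G6)–(G9) of a gadget system. -/
def GadgetHyp2 (E : V → V → Prop) [DecidableRel E] (G : GadgetSystem V I) (k t τ₁ : ℕ) :
    Prop :=
  CondG6 E G k t ∧ CondG7 E G k t τ₁ ∧ CondG8 E G k t τ₁ ∧ CondG9 E G k t τ₁

/-! ### Available vertices -/

def AvailA1 (E : V → V → Prop) [DecidableRel E] (G : GadgetSystem V I) (k t : ℕ)
    (W : Finset V) (u : V) : Prop :=
  u ∈ Vgood E G k t ∩ W

def AvailA2 (E : V → V → Prop) [DecidableRel E] (G : GadgetSystem V I) (k t τ₂ : ℕ)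
    (W : Finset V) (u : V) : Prop :=
  u ∈ (VgoodP E G k t \ VgoodM E G k t) ∩ W ∧
    ManyIn (inN E u) ((τ₂ * k * t : ℕ) : ℝ) (AvailA1 E G k t W)

def AvailA3 (E : V → V → Prop) [DecidableRel E] (G : GadgetSystem V I) (k t τ₂ : ℕ)
    (W : Finset V) (u : V) : Prop :=
  u ∈ (VgoodM E G k t \ VgoodP E G k t) ∩ W ∧
    ManyIn (outN E u) ((τ₂ * k * t : ℕ) : ℝ)
      (fun v => AvailA1 E G k t W v ∨ AvailA2 E G k t τ₂ W v)

def AvailA4 (E : V → V → Prop) [DecidableRel E] (G : GadgetSystem V I) (k t τ₂ : ℕ)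
    (W : Finset V) (u : V) : Prop :=
  u ∈ Vbad E G k t ∩ W ∧
    ManyIn (outN E u) ((τ₂ * k * t : ℕ) : ℝ)
      (fun v => AvailA1 E G k t W v ∨ AvailA2 E G k t τ₂ W v) ∧
    ManyIn (inN E u) ((τ₂ * k * t : ℕ) : ℝ) (AvailA1 E G k t W)

/-- `u` is available (for `α`) with respect to a family `𝒜`, where `W = W(𝒜 ∖ {α})`. -/
def Available (E : V → V → Prop) [DecidableRel E] (G : GadgetSystem V I) (k t τ₂ : ℕ)
    (W : Finset V) (u : V) : Prop :=
  AvailA1 E G k t W u ∨ AvailA2 E G k t τ₂ W u ∨ AvailA3 E G k t τ₂ W u ∨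
    AvailA4 E G k t τ₂ W u

/-! ### Eligible and helpful vertices -/

/-- Indices `α ∈ 𝒜` such that `u` has no out-neighbour in `S⁻(α)`. -/
def MissOut (E : V → V → Prop) [DecidableRel E] (G : GadgetSystem V I) (𝒜 : Finset I)
    (u : V) : Finset I :=
  𝒜.filter fun α => ∀ v ∈ G.Sm α, ¬ E u v

/-- Indices `α ∈ 𝒜` such that `u` has no in-neighbour in `S⁺(α)`. -/
def MissIn (E : V → V → Prop) [DecidableRel E] (G : GadgetSystem V I) (𝒜 : Finset I)
    (u : V) : Finset I :=
  𝒜.filter fun α => ∀ v ∈ G.Sp α, ¬ E v u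

def Nice1 (E : V → V → Prop) [DecidableRel E] (G : GadgetSystem V I) (k t : ℕ)
    (𝒜 : Finset I) (W : Finset V) (u : V) : Prop :=
  u ∈ Vgood E G k t ∩ W ∧ (MissOut E G 𝒜 u).card ≤ k ∧ (MissIn E G 𝒜 u).card ≤ k

def Nice2 (E : V → V → Prop) [DecidableRel E] (G : GadgetSystem V I) (k t : ℕ) (m : ℝ)
    (𝒜 : Finset I) (W : Finset V) (u : V) : Prop :=
  u ∈ (VgoodP E G k t \ VgoodM E G k t) ∩ W ∧ (MissOut E G 𝒜 u).card ≤ k ∧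
    ManyIn (inN E u) m (Nice1 E G k t 𝒜 W)

def Nice3 (E : V → V → Prop) [DecidableRel E] (G : GadgetSystem V I) (k t : ℕ) (m : ℝ)
    (𝒜 : Finset I) (W : Finset V) (u : V) : Prop :=
  u ∈ (VgoodM E G k t \ VgoodP E G k t) ∩ W ∧ (MissIn E G 𝒜 u).card ≤ k ∧
    ManyIn (outN E u) m (fun v => Nice1 E G k t 𝒜 W v ∨ Nice2 E G k t m 𝒜 W v)

def Nice4 (E : V → V → Prop) [DecidableRel E] (G : GadgetSystem V I) (k t : ℕ) (m : ℝ)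
    (𝒜 : Finset I) (W : Finset V) (u : V) : Prop :=
  u ∈ Vbad E G k t ∩ W ∧
    ManyIn (inN E u) m (Nice1 E G k t 𝒜 W) ∧
    ManyIn (outN E u) m (fun v => Nice1 E G k t 𝒜 W v ∨ Nice2 E G k t m 𝒜 W v)

def NiceFor (E : V → V → Prop) [DecidableRel E] (G : GadgetSystem V I) (k t : ℕ) (m : ℝ)
    (𝒜 : Finset I) (W : Finset V) (u : V) : Prop :=
  Nice1 E G k t 𝒜 W u ∨ Nice2 E G k t m 𝒜 W u ∨ Nice3 E G k t m 𝒜 W u ∨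
    Nice4 E G k t m 𝒜 W u

/-- `u` is eligible for `𝒜` in `W`. -/
def Eligible (E : V → V → Prop) [DecidableRel E] (G : GadgetSystem V I) (k t τ₃ : ℕ)
    (𝒜 : Finset I) (W : Finset V) (u : V) : Prop :=
  NiceFor E G k t ((τ₃ * k * t : ℕ) : ℝ) 𝒜 W u

/-- `u` is helpful for `𝒜` in `W`. -/
def Helpful (E : V → V → Prop) [DecidableRel E] (G : GadgetSystem V I) (k t : ℕ)
    (𝒜 : Finset I) (W : Finset V) (u : V) : Prop :=
  NiceFor E G k t (k : ℝ) 𝒜 W u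

end Defs

noncomputable def phi0 (τ₁ : ℕ) : ℝ := (τ₁ : ℝ) / 4
noncomputable def phi1 (τ₁ : ℕ) : ℝ := phi0 τ₁ / (2 ^ 6 * (rho : ℝ))
noncomputable def phi2 (τ₁ : ℕ) : ℝ := phi1 τ₁ / (2 ^ 14 * (rho : ℝ) ^ 2)
noncomputable def phi3 (τ₁ : ℕ) : ℝ := phi2 τ₁ / (2 ^ 14 * (rho : ℝ) ^ 2)

section Basics

variable {V : Type*}

open Classical in
/-- The out-neighbours of `v` inside the finite set `S`; in-neighbours are
obtained with `flip E`. -/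
noncomputable def nb (E : V → V → Prop) (S : Finset V) (v : V) : Finset V := {w ∈ S | E v w}

lemma mem_nb {E : V → V → Prop} {S : Finset V} {v w : V} : w ∈ nb E S v ↔ w ∈ S ∧ E v w := by
  simp [nb]

lemma nb_subset (E : V → V → Prop) (S : Finset V) (v : V) : nb E S v ⊆ S :=
  fun _ h => (mem_nb.1 h).1

lemma nb_mono {E : V → V → Prop} {S T : Finset V} (h : S ⊆ T) (v : V) : nb E S v ⊆ nb E T v :=
  fun _ hw => mem_nb.2 ⟨h (mem_nb.1 hw).1, (mem_nb.1 hw).2⟩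

lemma IsTournament.rev {E : V → V → Prop} (h : IsTournament E) : IsTournament (flip E) :=
  ⟨h.1, fun u v huv => h.2 v u huv.symm⟩

lemma IsTournament.asymm {E : V → V → Prop} (h : IsTournament E) {u v : V} (huv : E u v) :
    ¬ E v u := by
  rcases eq_or_ne u v with rfl | hne
  · exact h.1 _
  · exact (h.2 u v hne).1 huv

lemma IsTournament.ne {E : V → V → Prop} (h : IsTournament E) {u v : V} (huv : E u v) : u ≠ v := by
  rintro rfl; exact h.1 _ huv

lemma IsTournament.total {E : V → V → Prop} (h : IsTournament E) {u v : V} (huv : u ≠ v) :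
    E u v ∨ E v u := by
  by_cases hvu : E v u
  · exact Or.inr hvu
  · exact Or.inl ((h.2 u v huv).2 hvu)

lemma IsTournament.of_not {E : V → V → Prop} (h : IsTournament E) {u v : V} (huv : u ≠ v)
    (hn : ¬ E u v) : E v u := (h.total huv).resolve_left hn

lemma ReachWithin.mono {E : V → V → Prop} {S T : Set V} (hST : S ⊆ T) {u v : V}
    (h : ReachWithin E S u v) : ReachWithin E T u v :=
  Relation.ReflTransGen.mono (fun _ _ hab => ⟨hST hab.1, hST hab.2.1, hab.2.2⟩) _ _ h

lemma ReachWithin.refl (E : V → V → Prop) (S : Set V) (u : V) : ReachWithin E S u u :=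
  Relation.ReflTransGen.refl

lemma ReachWithin.trans {E : V → V → Prop} {S : Set V} {u v w : V}
    (h : ReachWithin E S u v) (h' : ReachWithin E S v w) : ReachWithin E S u w :=
  Relation.ReflTransGen.trans h h'

lemma ReachWithin.single {E : V → V → Prop} {S : Set V} {u v : V} (hu : u ∈ S) (hv : v ∈ S)
    (h : E u v) : ReachWithin E S u v :=
  Relation.ReflTransGen.single ⟨hu, hv, h⟩

lemma ReachWithin.rev {E : V → V → Prop} {S : Set V} {u v : V}
    (h : ReachWithin E S u v) : ReachWithin (flip E) S v u := by
  induction h with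
  | refl => exact ReachWithin.refl _ _ _
  | tail _ hbc ih => exact (ReachWithin.single hbc.2.1 hbc.1 hbc.2.2).trans ih

lemma ReachWithin.mem_of_closed {E : V → V → Prop} {S A : Set V} {u v : V}
    (hA : ∀ a ∈ A, ∀ b ∈ S, E a b → b ∈ A) (hu : u ∈ A)
    (h : ReachWithin E S u v) : v ∈ A := by
  induction h with
  | refl => exact hu
  | tail _ hbc ih => exact hA _ ih _ hbc.2.1 hbc.2.2

lemma StronglyConnectedOn.rev {E : V → V → Prop} {S : Set V} (h : StronglyConnectedOn E S) :
    StronglyConnectedOn (flip E) S :=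
  fun u hu v hv => (h v hv u hu).rev

lemma stronglyConnectedOn_of_closed {E : V → V → Prop} {S : Set V}
    (h : ∀ A ⊆ S, A.Nonempty → (∀ a ∈ A, ∀ b ∈ S, E a b → b ∈ A) → S ⊆ A) :
    StronglyConnectedOn E S := by
  intro u hu v hv
  have := h {w | w ∈ S ∧ ReachWithin E S u w} (fun w hw => hw.1) ⟨u, hu, ReachWithin.refl _ _ _⟩
    (fun a ha b hb hab => ⟨hb, ha.2.trans (ReachWithin.single ha.1 hb hab)⟩) hv
  exact this.2

variable [DecidableEq V]

lemma StronglyKConnectedOn.rev {E : V → V → Prop} {k : ℕ} {S : Finset V}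
    (h : StronglyKConnectedOn E k S) : StronglyKConnectedOn (flip E) k S :=
  ⟨h.1, fun Z hZ => (h.2 Z hZ).rev⟩

lemma StronglyKConnectedOn.mono {E : V → V → Prop} {k l : ℕ} {S : Finset V}
    (h : StronglyKConnectedOn E k S) (hl : l ≤ k) : StronglyKConnectedOn E l S :=
  ⟨by have := h.1; omega, fun Z hZ => h.2 Z (hZ.trans hl)⟩

lemma StronglyKConnectedOn.closed_eq {E : V → V → Prop} {k : ℕ} {S : Finset V}
    (h : StronglyKConnectedOn E k S) {Z A : Finset V} (hZ : #Z ≤ k) (hAne : A.Nonempty)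
    (hAS : A ⊆ S \ Z) (hA : ∀ a ∈ A, ∀ b ∈ S \ Z, E a b → b ∈ A) : A = S \ Z := by
  obtain ⟨a, ha⟩ := hAne
  refine Subset.antisymm hAS fun v hv => ?_
  have := h.2 Z hZ a (by exact_mod_cast hAS ha) v (by exact_mod_cast hv)
  exact ReachWithin.mem_of_closed (A := (A : Set V))
    (fun a ha b hb hab => hA a ha b (by exact_mod_cast hb) hab) ha this

lemma StronglyKConnectedOn.card_nb {E : V → V → Prop} (hE : IsTournament E) {k : ℕ}
    {S : Finset V} (h : StronglyKConnectedOn E k S) (hk : 1 ≤ k) {v : V} (hv : v ∈ S) :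
    k + 1 ≤ #(nb E S v) := by
  have key : ∀ w ∈ S, #(nb E S w) ≤ k → {w} = S \ nb E S w := by
    intro w hw hc
    refine h.closed_eq hc (singleton_nonempty w) ?_ ?_
    · simp [hw, mem_nb, hE.1]
    · intro a ha b hb hab
      rw [mem_singleton] at ha; subst ha
      rw [mem_sdiff, mem_nb] at hb
      exact absurd ⟨hb.1, hab⟩ hb.2
  by_contra hlt
  push Not at hlt
  have h1 := key v hv (by omega)
  have h2 := card_sdiff_add_card_eq_card (nb_subset E S v)
  rw [← h1, card_singleton] at h2
  have h3 := h.1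
  have hne : (nb E S v).Nonempty := by rw [← card_pos]; omega
  obtain ⟨w, hw⟩ := hne
  have hw' := mem_nb.1 hw
  have hvw : v ≠ w := hE.ne hw'.2
  have hss : nb E S w ⊆ (S.erase v).erase w := by
    intro x hx
    have hx' := mem_nb.1 hx
    rw [mem_erase, mem_erase]
    refine ⟨(hE.ne hx'.2).symm, ?_, hx'.1⟩
    rintro rfl; exact hE.asymm hw'.2 hx'.2
  have h4 := card_le_card hss
  rw [card_erase_of_mem (mem_erase.2 ⟨hvw.symm, hw'.1⟩), card_erase_of_mem hv] at h4
  have h5 := key w hw'.1 (by omega)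
  have : v ∈ S \ nb E S w := by
    rw [mem_sdiff, mem_nb]; exact ⟨hv, fun hh => hE.asymm hw'.2 hh.2⟩
  rw [← h5, mem_singleton] at this
  exact hvw this

/-- Adding vertices with more than `k` neighbours in both directions preserves strong
`k`-connectivity. -/
lemma StronglyKConnectedOn.extend {E : V → V → Prop} {k : ℕ} {S S' : Finset V}
    (h : StronglyKConnectedOn E k S) (hS : S ⊆ S')
    (hout : ∀ v ∈ S', v ∉ S → k < #(nb E S v)) (hin : ∀ v ∈ S', v ∉ S → k < #(nb (flip E) S v)) :
    StronglyKConnectedOn E k S' := by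
  refine ⟨h.1.trans (card_le_card hS), fun Z hZ => ?_⟩
  have hsub : ((S \ Z : Finset V) : Set V) ⊆ ((S' \ Z : Finset V) : Set V) := by
    exact_mod_cast sdiff_subset_sdiff hS (Subset.refl Z)
  have key : ∀ (F : V → V → Prop), (∀ v ∈ S', v ∉ S → k < #(nb F S v)) → ∀ u ∈ S' \ Z,
      ∃ s ∈ S \ Z, ReachWithin F ((S' \ Z : Finset V) : Set V) u s := by
    intro F hF u hu
    by_cases huS : u ∈ S
    · exact ⟨u, mem_sdiff.2 ⟨huS, (mem_sdiff.1 hu).2⟩, ReachWithin.refl _ _ _⟩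
    · obtain ⟨s, hs, hsZ⟩ := exists_mem_notMem_of_card_lt_card
        (lt_of_le_of_lt hZ (hF u (mem_sdiff.1 hu).1 huS))
      have hs' := mem_nb.1 hs
      have hsS : s ∈ S \ Z := mem_sdiff.2 ⟨hs'.1, hsZ⟩
      exact ⟨s, hsS, ReachWithin.single (by exact_mod_cast hu)
        (hsub (by exact_mod_cast hsS)) hs'.2⟩
  intro u hu v hv
  obtain ⟨s, hs, hus⟩ := key E hout u (by exact_mod_cast hu)
  obtain ⟨s', hs', hvs⟩ := key _ hin v (by exact_mod_cast hv)
  exact (hus.trans ((h.2 Z hZ s (by exact_mod_cast hs) s' (by exact_mod_cast hs')).mono hsub)).trans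
    hvs.rev

end Basics

section Paths

variable {V : Type*}

/-- There is a walk of length `d` from `u` to `v` inside `S`. -/
def WalkIn (E : V → V → Prop) (S : Finset V) : ℕ → V → V → Prop
  | 0, u, v => u ∈ S ∧ u = v
  | d + 1, u, v => ∃ w, u ∈ S ∧ E u w ∧ WalkIn E S d w v

lemma WalkIn.trans {E : V → V → Prop} {S : Finset V} {a b : ℕ} {u v w : V}
    (h : WalkIn E S a u v) (h' : WalkIn E S b v w) : WalkIn E S (a + b) u w := by
  induction a generalizing u with
  | zero => obtain ⟨_, rfl⟩ := h; simpa using h'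
  | succ a ih =>
    obtain ⟨z, hu, hz, hzv⟩ := h
    rw [Nat.succ_add]
    exact ⟨z, hu, hz, ih hzv⟩

lemma WalkIn.single {E : V → V → Prop} {S : Finset V} {u v : V} (hu : u ∈ S) (hv : v ∈ S)
    (h : E u v) : WalkIn E S 1 u v := ⟨v, hu, h, hv, rfl⟩

lemma ReachWithin.exists_walkIn {E : V → V → Prop} {S : Finset V} {u v : V} (hu : u ∈ S)
    (h : ReachWithin E (S : Set V) u v) : ∃ d, WalkIn E S d u v := by
  induction h with
  | refl => exact ⟨0, hu, rfl⟩
  | tail _ hbc ih =>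
    obtain ⟨d, hd⟩ := ih
    exact ⟨d + 1, hd.trans (WalkIn.single (by exact_mod_cast hbc.1) (by exact_mod_cast hbc.2.1)
      hbc.2.2)⟩

lemma WalkIn.exists_fun {E : V → V → Prop} {S : Finset V} {d : ℕ} {u v : V}
    (h : WalkIn E S d u v) : ∃ p : ℕ → V, p 0 = u ∧ p d = v ∧ (∀ i ≤ d, p i ∈ S) ∧
      ∀ i < d, E (p i) (p (i + 1)) := by
  induction d generalizing u with
  | zero =>
    obtain ⟨hu, rfl⟩ := h
    exact ⟨fun _ => u, rfl, rfl, fun _ _ => hu, fun _ h => absurd h (Nat.not_lt_zero _)⟩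
  | succ d ih =>
    obtain ⟨z, hu, hz, hzv⟩ := h
    obtain ⟨p, h0, hd, hS, hE⟩ := ih hzv
    refine ⟨fun i => Nat.casesOn i u p, rfl, hd, ?_, ?_⟩
    · rintro (_ | i) hi
      · exact hu
      · exact hS i (by omega)
    · rintro (_ | i) hi
      · simpa [h0] using hz
      · exact hE i (by omega)

variable [DecidableEq V]

/-- A path `P` from `x ∈ X` to `y ∈ Y` behaving like a shortest one; `Sp` consists of the
first two and the last two vertices. -/
structure LinkPath (E : V → V → Prop) (S X Y P Sp : Finset V) (x y : V) : Prop where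
  sub : P ⊆ S
  sp_sub : Sp ⊆ P
  sp_card : #Sp ≤ 4
  x_mem : x ∈ X
  y_mem : y ∈ Y
  x_sp : x ∈ Sp
  y_sp : y ∈ Sp
  x_eq : ∀ p ∈ P, p ∈ X → p = x
  y_eq : ∀ p ∈ P, p ∈ Y → p = y
  reach : ReachWithin E (P : Set V) x y
  toX : ∀ p ∈ P, p ∉ Sp → ∀ x' ∈ X, E p x'
  ofY : ∀ p ∈ P, p ∉ Sp → ∀ y' ∈ Y, E y' p
  fewOut : ∀ u ∈ S, u ∉ P → (∃ x' ∈ X, E x' u) → #(nb E P u) ≤ 3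
  fewIn : ∀ u ∈ S, u ∉ P → (∃ y' ∈ Y, E u y') → #(nb (flip E) P u) ≤ 3

lemma exists_linkPath {E : V → V → Prop} (hE : IsTournament E) {K : ℕ} {S X Y : Finset V}
    (h : StronglyKConnectedOn E K S) (hK : 4 ≤ K) (hX : X ⊆ S) (hY : Y ⊆ S)
    (hXne : X.Nonempty) (hYne : Y.Nonempty) :
    ∃ P Sp x y, LinkPath E S X Y P Sp x y ∧ StronglyKConnectedOn E (K - 4) (S \ P) := by
  classical
  have hex : ∃ d, ∃ x ∈ X, ∃ y ∈ Y, WalkIn E S d x y := by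
    obtain ⟨x, hx⟩ := hXne
    obtain ⟨y, hy⟩ := hYne
    have := h.2 ∅ (by simp) x (by simpa using hX hx) y (by simpa using hY hy)
    rw [sdiff_empty] at this
    obtain ⟨d, hd⟩ := this.exists_walkIn (hX hx)
    exact ⟨d, x, hx, y, hy, hd⟩
  obtain ⟨l, ⟨x, hx, y, hy, hw⟩, hmin⟩ : ∃ l, (∃ x ∈ X, ∃ y ∈ Y, WalkIn E S l x y) ∧
      ∀ d, ∀ x ∈ X, ∀ y ∈ Y, WalkIn E S d x y → l ≤ d :=
    ⟨Nat.find hex, Nat.find_spec hex, fun d x hx y hy hd => Nat.find_min' hex ⟨x, hx, y, hy, hd⟩⟩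
  obtain ⟨p, rfl, rfl, hpS, hpE⟩ := hw.exists_fun
  have hsub : ∀ i d, i + d ≤ l → WalkIn E S d (p i) (p (i + d)) := by
    intro i d hid
    induction d with
    | zero => exact ⟨hpS i (by omega), rfl⟩
    | succ d ih =>
      exact (ih (by omega)).trans (WalkIn.single (hpS _ (by omega)) (hpS _ (by omega))
        (hpE _ (by omega)))
  have hpre : ∀ i ≤ l, WalkIn E S i (p 0) (p i) := fun i hi => by
    simpa using hsub 0 i (by omega)
  have hpost : ∀ i ≤ l, WalkIn E S (l - i) (p i) (p l) := fun i hi => by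
    have := hsub i (l - i) (by omega)
    rwa [Nat.add_sub_cancel' hi] at this
  have hcut : ∀ i ≤ l, ∀ j ≤ l, ∀ d, WalkIn E S d (p i) (p j) → j ≤ i + d := by
    intro i hi j hj d hd
    have := hmin _ _ hx _ hy (((hpre i hi).trans hd).trans (hpost j hj))
    omega
  have hcutX : ∀ x' ∈ X, ∀ j ≤ l, ∀ d, WalkIn E S d x' (p j) → j ≤ d := by
    intro x' hx' j hj d hd
    have := hmin _ _ hx' _ hy (hd.trans (hpost j hj))
    omega
  have hcutY : ∀ y' ∈ Y, ∀ j ≤ l, ∀ d, WalkIn E S d (p j) y' → l ≤ j + d := by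
    intro y' hy' j hj d hd
    exact hmin _ _ hx _ hy' ((hpre j hj).trans hd)
  have hinj : ∀ i ≤ l, ∀ j ≤ l, p i = p j → j ≤ i := by
    intro i hi j hj hij
    exact hcut i hi j hj 0 ⟨hpS i hi, hij⟩
  set P : Finset V := (range (l + 1)).image p with hP
  have memP : ∀ {v}, v ∈ P ↔ ∃ i ≤ l, p i = v := by
    intro v; simp [hP]
  set Sp : Finset V := {p 0, p (min 1 l), p (l - 1), p l} with hSp
  have hspl : ∀ j ≤ l, p j ∉ Sp → 2 ≤ j ∧ j + 2 ≤ l := by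
    intro j hj hjs
    simp only [hSp, mem_insert, mem_singleton, not_or] at hjs
    have h0 : j ≠ 0 := by rintro rfl; exact hjs.1 rfl
    have h1 : j ≠ 1 := by
      rintro rfl; rw [min_eq_left hj] at hjs; exact hjs.2.1 rfl
    have h2 : j ≠ l := by rintro rfl; exact hjs.2.2.2 rfl
    have h3 : j ≠ l - 1 := by rintro rfl; exact hjs.2.2.1 rfl
    omega
  have hSpP : Sp ⊆ P := by
    intro v hv
    simp only [hSp, mem_insert, mem_singleton] at hv
    rw [memP]
    rcases hv with rfl | rfl | rfl | rfl
    · exact ⟨0, by omega, rfl⟩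
    · exact ⟨min 1 l, min_le_right _ _, rfl⟩
    · exact ⟨l - 1, by omega, rfl⟩
    · exact ⟨l, le_refl _, rfl⟩
  have hPS : P ⊆ S := by
    intro v hv; obtain ⟨i, hi, rfl⟩ := memP.1 hv; exact hpS i hi
  have hxeq : ∀ v ∈ P, v ∈ X → v = p 0 := by
    intro v hv hvX
    obtain ⟨i, hi, rfl⟩ := memP.1 hv
    have := hcutX _ hvX i hi 0 ⟨hpS i hi, rfl⟩
    rw [Nat.le_zero.1 this]
  have hyeq : ∀ v ∈ P, v ∈ Y → v = p l := by
    intro v hv hvY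
    obtain ⟨i, hi, rfl⟩ := memP.1 hv
    have := hcutY _ hvY i hi 0 ⟨hpS i hi, rfl⟩
    rw [show i = l by omega]
  refine ⟨P, Sp, p 0, p l, ⟨hPS, hSpP, ?_, hx, hy, by simp [hSp], by simp [hSp], hxeq, hyeq,
    ?_, ?_, ?_, ?_, ?_⟩, ?_, ?_⟩
  · exact card_le_four
  · have : ∀ i ≤ l, ReachWithin E (P : Set V) (p 0) (p i) := by
      intro i hi
      induction i with
      | zero => exact ReachWithin.refl _ _ _
      | succ i ih =>
        exact (ih (by omega)).trans (ReachWithin.single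
          (by exact_mod_cast memP.2 ⟨i, by omega, rfl⟩)
          (by exact_mod_cast memP.2 ⟨i + 1, by omega, rfl⟩) (hpE i (by omega)))
    exact this l le_rfl
  · intro q hq hqs x' hx'
    obtain ⟨j, hj, rfl⟩ := memP.1 hq
    have hj2 := hspl j hj hqs
    have hne : p j ≠ x' := by
      rintro rfl
      have := hcutX _ hx' j hj 0 ⟨hpS j hj, rfl⟩
      omega
    refine hE.of_not hne.symm fun hc => ?_
    have := hcutX x' hx' j hj 1 (WalkIn.single (hX hx') (hpS j hj) hc)
    omega
  · intro q hq hqs y' hy'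
    obtain ⟨j, hj, rfl⟩ := memP.1 hq
    have hj2 := hspl j hj hqs
    have hne : p j ≠ y' := by
      rintro rfl
      have := hcutY _ hy' j hj 0 ⟨hpS j hj, rfl⟩
      omega
    refine hE.of_not hne fun hc => ?_
    have := hcutY y' hy' j hj 1 (WalkIn.single (hpS j hj) (hY hy') hc)
    omega
  · rintro u hu huP ⟨x', hx', hxu⟩
    have : nb E P u ⊆ (range 3).image p := by
      intro q hq
      obtain ⟨hq, huq⟩ := mem_nb.1 hq
      obtain ⟨j, hj, rfl⟩ := memP.1 hq
      have := hcutX x' hx' j hj _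
        ((WalkIn.single (hX hx') hu hxu).trans (WalkIn.single hu (hpS j hj) huq))
      exact mem_image_of_mem _ (mem_range.2 (by omega))
    exact (card_le_card this).trans (card_image_le.trans (by simp))
  · rintro u hu huP ⟨y', hy', hyu⟩
    have : nb (flip E) P u ⊆ ((range 3).image fun i => p (l - i)) := by
      intro q hq
      obtain ⟨hq, huq⟩ := mem_nb.1 hq
      obtain ⟨j, hj, rfl⟩ := memP.1 hq
      have := hcutY y' hy' j hj _
        ((WalkIn.single (hpS j hj) hu huq).trans (WalkIn.single hu (hY hy') hyu))
      refine mem_image.2 ⟨l - j, mem_range.2 (by omega), ?_⟩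
      rw [show l - (l - j) = j by omega]
    exact (card_le_card this).trans (card_image_le.trans (by simp))
  · have h1 := h.card_nb hE (by omega) (hX hx)
    have h2 : (nb E S (p 0)) \ {p 1} ⊆ S \ P := by
      intro v hv
      rw [mem_sdiff, mem_singleton] at hv
      obtain ⟨hvn, hv1⟩ := hv
      obtain ⟨hvS, hv⟩ := mem_nb.1 hvn
      refine mem_sdiff.2 ⟨hvS, fun hvP => ?_⟩
      obtain ⟨j, hj, rfl⟩ := memP.1 hvP
      have := hcut 0 (by omega) j hj 1 (WalkIn.single (hX hx) hvS hv)
      have hj1 : j = 0 ∨ j = 1 := by omega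
      rcases hj1 with rfl | rfl
      · exact hE.1 _ hv
      · exact hv1 rfl
    have h3 := card_le_card h2
    have h4 := le_card_sdiff {p 1} (nb E S (p 0))
    rw [card_singleton] at h4
    omega
  · intro Z hZ
    refine stronglyConnectedOn_of_closed fun A₀ hA₀ hne hcl => ?_
    by_contra hcon
    obtain ⟨b₀, hb₀, hb₀A⟩ := Set.not_subset.1 hcon
    simp only [coe_sdiff, Set.mem_sdiff, mem_coe] at hb₀
    set A : Finset V := {v ∈ S | v ∈ A₀} with hA
    have memA : ∀ {v}, v ∈ A ↔ v ∈ A₀ := by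
      intro v
      simp only [hA, mem_filter]
      refine ⟨fun hv => hv.2, fun hv => ⟨?_, hv⟩⟩
      have := hA₀ hv
      simp only [coe_sdiff, Set.mem_sdiff, mem_coe] at this
      exact this.1.1
    have hAmem : ∀ {v}, v ∈ A₀ → (v ∈ S ∧ v ∉ P) ∧ v ∉ Z := by
      intro v hv
      have := hA₀ hv
      simpa only [coe_sdiff, Set.mem_sdiff, mem_coe] using this
    obtain ⟨a₀, ha₀⟩ := hne
    obtain ⟨i₀, hi₀l, hi₀, hi₀m⟩ : ∃ i₀ ≤ l + 1,
        (i₀ ≤ l → ∃ b ∈ S \ P, b ∉ Z ∧ b ∉ A₀ ∧ E (p i₀) b) ∧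
        ∀ i < i₀, ∀ b ∈ S \ P, b ∉ Z → b ∉ A₀ → ¬ E (p i) b := by
      have hx : ∃ i, i ≤ l → ∃ b ∈ S \ P, b ∉ Z ∧ b ∉ A₀ ∧ E (p i) b :=
        ⟨l + 1, fun h => absurd h (by omega)⟩
      refine ⟨Nat.find hx, Nat.find_min' hx (fun h => absurd h (by omega)), Nat.find_spec hx, ?_⟩
      intro i hi b hb hbZ hbA hc
      exact Nat.find_min hx hi fun _ => ⟨b, hb, hbZ, hbA, hc⟩
    set Wd : Finset V := {j ∈ Ico i₀ (i₀ + 4) | j ≤ l}.image p with hWd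
    have hWc : #Wd ≤ 4 := card_image_le.trans ((card_filter_le _ _).trans (by simp))
    have hZ' : #(Z ∪ Wd) ≤ K := (card_union_le _ _).trans (by omega)
    have hWP : ∀ v ∈ Wd, v ∈ P := by
      intro v hv
      obtain ⟨j, hj, rfl⟩ := mem_image.1 hv
      exact memP.2 ⟨j, (mem_filter.1 hj).2, rfl⟩
    set Q : Finset V := {q ∈ (range i₀).image p | q ∉ Z} with hQ
    have hclosed := h.closed_eq hZ' (A := A ∪ Q) ⟨a₀, mem_union_left _ (memA.2 ha₀)⟩ ?_ ?_
    · have : b₀ ∈ A ∪ Q := by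
        rw [hclosed, mem_sdiff, mem_union, not_or]
        exact ⟨hb₀.1.1, hb₀.2, fun hc => hb₀.1.2 (hWP _ hc)⟩
      rw [mem_union, memA] at this
      rcases this with hc | hc
      · exact hb₀A hc
      · rw [hQ, mem_filter, mem_image] at hc
        obtain ⟨⟨i, hi, rfl⟩, _⟩ := hc
        rw [mem_range] at hi
        exact hb₀.1.2 (memP.2 ⟨i, by omega, rfl⟩)
    · intro v hv
      rw [mem_sdiff, mem_union, not_or]
      rcases mem_union.1 hv with hv | hv
      · have hv' := hAmem (memA.1 hv)
        exact ⟨hv'.1.1, hv'.2, fun hc => hv'.1.2 (hWP _ hc)⟩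
      · rw [hQ, mem_filter, mem_image] at hv
        obtain ⟨⟨i, hi, rfl⟩, hiZ⟩ := hv
        rw [mem_range] at hi
        refine ⟨hpS i (by omega), hiZ, fun hc => ?_⟩
        obtain ⟨j, hj, hji⟩ := mem_image.1 hc
        rw [mem_filter, mem_Ico] at hj
        have := hinj i (by omega) j hj.2 hji.symm
        omega
    · intro a ha b hb hab
      rw [mem_sdiff, mem_union, not_or] at hb
      obtain ⟨hbS, hbZ, hbW⟩ := hb
      by_cases hbP : b ∈ P
      · obtain ⟨j, hj, rfl⟩ := memP.1 hbP
        have hjw : j < i₀ ∨ i₀ + 4 ≤ j := by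
          by_contra hc
          push Not at hc
          exact hbW (mem_image.2 ⟨j, mem_filter.2 ⟨mem_Ico.2 hc, hj⟩, rfl⟩)
        rcases hjw with hjw | hjw
        · exact mem_union_right _ (mem_filter.2 ⟨mem_image_of_mem _ (mem_range.2 hjw), hbZ⟩)
        · exfalso
          rcases mem_union.1 ha with ha | ha
          · have ha' := hAmem (memA.1 ha)
            obtain ⟨b, hb, hbZ, hbA, hib⟩ := hi₀ (by omega)
            have hb' := mem_sdiff.1 hb
            have hba : E b a := by
              refine hE.of_not ?_ fun hc => hbA (hcl a (memA.1 ha) b ?_ hc)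
              · rintro rfl; exact hbA (memA.1 ha)
              · simp only [coe_sdiff, Set.mem_sdiff, mem_coe]; exact ⟨hb', hbZ⟩
            have := hcut i₀ (by omega) j hj _ (((WalkIn.single (hpS _ (by omega)) hb'.1 hib).trans
              (WalkIn.single hb'.1 ha'.1.1 hba)).trans (WalkIn.single ha'.1.1 hbS hab))
            omega
          · rw [hQ, mem_filter, mem_image] at ha
            obtain ⟨⟨i, hi, rfl⟩, hiZ⟩ := ha
            rw [mem_range] at hi
            have := hcut i (by omega) j hj 1 (WalkIn.single (hpS _ (by omega)) hbS hab)
            omega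
      · have hbc : b ∈ ((S \ P) \ Z : Finset V) := mem_sdiff.2 ⟨mem_sdiff.2 ⟨hbS, hbP⟩, hbZ⟩
        refine mem_union_left _ (memA.2 ?_)
        rcases mem_union.1 ha with ha | ha
        · exact hcl a (memA.1 ha) b (by exact_mod_cast hbc) hab
        · rw [hQ, mem_filter, mem_image] at ha
          obtain ⟨⟨i, hi, rfl⟩, hiZ⟩ := ha
          rw [mem_range] at hi
          by_contra hbA
          exact hi₀m i hi b (mem_sdiff.1 hbc).1 hbZ hbA hab

end Paths

section LinkSystems

variable {V ι : Type*} [DecidableEq V] [DecidableEq ι]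

/-- A family of disjoint paths from `X` to `Y`, indexed by `T`, each of which behaves like a
shortest one with respect to the unused vertices. -/
structure LinkSystem (E : V → V → Prop) (S X Y : Finset V) (T : Finset ι) (P Sp : ι → Finset V)
    (x y : ι → V) : Prop where
  sub : ∀ α ∈ T, P α ⊆ S
  disj : ∀ α ∈ T, ∀ β ∈ T, α ≠ β → Disjoint (P α) (P β)
  sp_sub : ∀ α ∈ T, Sp α ⊆ P α
  sp_card : ∀ α ∈ T, #(Sp α) ≤ 4
  x_mem : ∀ α ∈ T, x α ∈ X
  y_mem : ∀ α ∈ T, y α ∈ Y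
  x_sp : ∀ α ∈ T, x α ∈ Sp α
  y_sp : ∀ α ∈ T, y α ∈ Sp α
  x_eq : ∀ α ∈ T, ∀ p ∈ P α, p ∈ X → p = x α
  y_eq : ∀ α ∈ T, ∀ p ∈ P α, p ∈ Y → p = y α
  reach : ∀ α ∈ T, ReachWithin E (P α : Set V) (x α) (y α)
  toX : ∀ α ∈ T, ∀ p ∈ P α, p ∉ Sp α → ∀ x' ∈ X, x' ∉ T.biUnion P → E p x'
  ofY : ∀ α ∈ T, ∀ p ∈ P α, p ∉ Sp α → ∀ y' ∈ Y, y' ∉ T.biUnion P → E y' p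
  fewOut : ∀ α ∈ T, ∀ u ∈ S, u ∉ T.biUnion P →
    (∃ x' ∈ X, x' ∉ T.biUnion P ∧ E x' u) → #(nb E (P α) u) ≤ 3
  fewIn : ∀ α ∈ T, ∀ u ∈ S, u ∉ T.biUnion P →
    (∃ y' ∈ Y, y' ∉ T.biUnion P ∧ E u y') → #(nb (flip E) (P α) u) ≤ 3

lemma exists_linkSystem {E : V → V → Prop} (hE : IsTournament E) {K : ℕ} {S X Y : Finset V}
    (h : StronglyKConnectedOn E K S) (hX : X ⊆ S) (hY : Y ⊆ S) (T : Finset ι)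
    (hK : 4 * #T ≤ K) (hXc : #T ≤ #X) (hYc : #T ≤ #Y) :
    ∃ (P Sp : ι → Finset V) (x y : ι → V), LinkSystem E S X Y T P Sp x y ∧
      StronglyKConnectedOn E (K - 4 * #T) (S \ T.biUnion P) := by
  induction T using Finset.induction_on with
  | empty =>
    obtain ⟨x₀, -⟩ : S.Nonempty := by rw [← card_pos]; have := h.1; omega
    exact ⟨fun _ => ∅, fun _ => ∅, fun _ => x₀, fun _ => x₀, by constructor <;> simp,
      by simpa using h⟩
  | insert a T ha ih =>
    rw [card_insert_of_notMem ha] at hK hXc hYc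
    obtain ⟨P, Sp, x, y, hL, hC⟩ := ih (by omega) (by omega) (by omega)
    have hrem : ∀ (X : Finset V) (x : ι → V), (∀ α ∈ T, ∀ p ∈ P α, p ∈ X → p = x α) →
        #T + 1 ≤ #X → (X \ T.biUnion P).Nonempty := by
      intro X x hx hc
      have h1 : X \ T.image x ⊆ X \ T.biUnion P := by
        intro v hv
        obtain ⟨hvX, hv⟩ := mem_sdiff.1 hv
        refine mem_sdiff.2 ⟨hvX, fun hc => hv ?_⟩
        obtain ⟨α, hα, hvα⟩ := mem_biUnion.1 hc
        exact mem_image.2 ⟨α, hα, (hx α hα v hvα hvX).symm⟩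
      refine Nonempty.mono h1 ?_
      rw [← card_pos]
      have h2 := le_card_sdiff (T.image x) X
      have h3 : #(T.image x) ≤ #T := card_image_le
      omega
    obtain ⟨Q, Sq, u, v, hQ, hQC⟩ := exists_linkPath hE hC (by omega)
      (sdiff_subset_sdiff hX (Subset.refl _)) (sdiff_subset_sdiff hY (Subset.refl _))
      (hrem X x hL.x_eq hXc) (hrem Y y hL.y_eq hYc)
    have hup : ∀ {W : Type _} (f : ι → W) (w : W), ∀ α ∈ T, Function.update f a w α = f α := by
      intro W f w α hα
      exact Function.update_of_ne (by rintro rfl; exact ha hα) _ _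
    have hbi : (insert a T).biUnion (Function.update P a Q) = T.biUnion P ∪ Q := by
      ext w
      simp only [mem_biUnion, mem_insert, exists_eq_or_imp, Function.update_self, mem_union]
      constructor
      · rintro (h | ⟨α, hα, h⟩)
        · exact Or.inr h
        · rw [hup P Q α hα] at h; exact Or.inl ⟨α, hα, h⟩
      · rintro (⟨α, hα, h⟩ | h)
        · exact Or.inr ⟨α, hα, by rwa [hup P Q α hα]⟩
        · exact Or.inl h
    have hQd : ∀ α ∈ T, Disjoint (P α) Q := by
      intro α hα
      rw [disjoint_left]
      intro w hw hwQ
      exact (mem_sdiff.1 (hQ.sub hwQ)).2 (mem_biUnion.2 ⟨α, hα, hw⟩)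
    have hsd : ∀ {Z : Finset V} {w}, w ∈ Q → w ∈ Z → w ∈ Z \ T.biUnion P := fun hw hwZ =>
      mem_sdiff.2 ⟨hwZ, (mem_sdiff.1 (hQ.sub hw)).2⟩
    refine ⟨Function.update P a Q, Function.update Sp a Sq, Function.update x a u,
      Function.update y a v, ?_, ?_⟩
    swap
    · have : S \ (T.biUnion P ∪ Q) = (S \ T.biUnion P) \ Q := by
        ext w; simp only [mem_sdiff, mem_union]; tauto
      rw [hbi, this, card_insert_of_notMem ha]
      exact hQC.mono (by omega)
    have base : ∀ {p : ι → Prop}, p a → (∀ α ∈ T, p α) → ∀ α ∈ insert a T, p α := by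
      intro p h1 h2 α hα
      rcases mem_insert.1 hα with rfl | hα
      · exact h1
      · exact h2 α hα
    constructor
    · refine base ?_ fun α hα => ?_
      · rw [Function.update_self]; exact hQ.sub.trans sdiff_subset
      · rw [hup P Q α hα]; exact hL.sub α hα
    · refine base (base (fun h => absurd rfl h) fun α hα _ => ?_)
        fun α hα => base (fun _ => ?_) fun β hβ hne => ?_
      · rw [hup P Q α hα, Function.update_self]; exact (hQd α hα).symm
      · rw [hup P Q α hα, Function.update_self]; exact hQd α hα
      · rw [hup P Q α hα, hup P Q β hβ]; exact hL.disj α hα β hβ hne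
    · refine base ?_ fun α hα => ?_
      · simp only [Function.update_self]; exact hQ.sp_sub
      · rw [hup P Q α hα, hup Sp Sq α hα]; exact hL.sp_sub α hα
    · refine base ?_ fun α hα => ?_
      · simp only [Function.update_self]; exact hQ.sp_card
      · rw [hup Sp Sq α hα]; exact hL.sp_card α hα
    · refine base ?_ fun α hα => ?_
      · simp only [Function.update_self]; exact (mem_sdiff.1 hQ.x_mem).1
      · rw [hup x u α hα]; exact hL.x_mem α hα
    · refine base ?_ fun α hα => ?_
      · simp only [Function.update_self]; exact (mem_sdiff.1 hQ.y_mem).1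
      · rw [hup y v α hα]; exact hL.y_mem α hα
    · refine base ?_ fun α hα => ?_
      · simp only [Function.update_self]; exact hQ.x_sp
      · rw [hup x u α hα, hup Sp Sq α hα]; exact hL.x_sp α hα
    · refine base ?_ fun α hα => ?_
      · simp only [Function.update_self]; exact hQ.y_sp
      · rw [hup y v α hα, hup Sp Sq α hα]; exact hL.y_sp α hα
    · refine base ?_ fun α hα => ?_
      · simp only [Function.update_self]; exact fun p hp hpX => hQ.x_eq p hp (hsd hp hpX)
      · rw [hup x u α hα, hup P Q α hα]; exact hL.x_eq α hα
    · refine base ?_ fun α hα => ?_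
      · simp only [Function.update_self]; exact fun p hp hpY => hQ.y_eq p hp (hsd hp hpY)
      · rw [hup y v α hα, hup P Q α hα]; exact hL.y_eq α hα
    · refine base ?_ fun α hα => ?_
      · simp only [Function.update_self]; exact hQ.reach
      · rw [hup x u α hα, hup P Q α hα, hup y v α hα]; exact hL.reach α hα
    all_goals rw [hbi]; simp only [mem_union, not_or]
    · refine base ?_ fun α hα => ?_
      · simp only [Function.update_self]
        exact fun p hp hps x' hx' hxn => hQ.toX p hp hps x' (mem_sdiff.2 ⟨hx', hxn.1⟩)
      · rw [hup P Q α hα, hup Sp Sq α hα]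
        exact fun p hp hps x' hx' hxn => hL.toX α hα p hp hps x' hx' hxn.1
    · refine base ?_ fun α hα => ?_
      · simp only [Function.update_self]
        exact fun p hp hps x' hx' hxn => hQ.ofY p hp hps x' (mem_sdiff.2 ⟨hx', hxn.1⟩)
      · rw [hup P Q α hα, hup Sp Sq α hα]
        exact fun p hp hps x' hx' hxn => hL.ofY α hα p hp hps x' hx' hxn.1
    · refine base ?_ fun α hα => ?_
      · simp only [Function.update_self]
        rintro w hw hwn ⟨x', hx', hxn, hxw⟩
        exact hQ.fewOut w (mem_sdiff.2 ⟨hw, hwn.1⟩) hwn.2 ⟨x', mem_sdiff.2 ⟨hx', hxn.1⟩, hxw⟩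
      · rw [hup P Q α hα]
        rintro w hw hwn ⟨x', hx', hxn, hxw⟩
        exact hL.fewOut α hα w hw hwn.1 ⟨x', hx', hxn.1, hxw⟩
    · refine base ?_ fun α hα => ?_
      · simp only [Function.update_self]
        rintro w hw hwn ⟨x', hx', hxn, hxw⟩
        exact hQ.fewIn w (mem_sdiff.2 ⟨hw, hwn.1⟩) hwn.2 ⟨x', mem_sdiff.2 ⟨hx', hxn.1⟩, hxw⟩
      · rw [hup P Q α hα]
        rintro w hw hwn ⟨x', hx', hxn, hxw⟩
        exact hL.fewIn α hα w hw hwn.1 ⟨x', hx', hxn.1, hxw⟩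

end LinkSystems

section DominatingSets

variable {V : Type*} [DecidableEq V]

lemma exists_small_nb {E : V → V → Prop} (hE : IsTournament E) {D : Finset V} (hD : D.Nonempty) :
    ∃ d ∈ D, 2 * #(nb E D d) ≤ #D := by
  classical
  have hsum : ∑ d ∈ D, #(nb E D d) = ∑ d ∈ D, #(nb (flip E) D d) := by
    convert sum_card_bipartiteAbove_eq_sum_card_bipartiteBelow (s := D) (t := D) E using 3
    · ext; simp [mem_nb, bipartiteAbove]
    · ext; simp [mem_nb, bipartiteBelow, flip]
  obtain ⟨d, hd, hle⟩ := exists_le_of_sum_le hD hsum.le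
  refine ⟨d, hd, ?_⟩
  have hdisj : Disjoint (nb E D d) (nb (flip E) D d) := by
    rw [disjoint_left]
    intro v hv hv'
    exact hE.asymm (mem_nb.1 hv).2 (mem_nb.1 hv').2
  have := card_le_card (union_subset (nb_subset E D d) (nb_subset (flip E) D d))
  rw [card_union_of_disjoint hdisj] at this
  omega

/-- A small set containing `a` and otherwise avoiding `F`, such that all but few vertices
outside `F'` have an out-neighbour in it. -/
structure DomSet (E : V → V → Prop) (F F' : Finset V) (s n : ℕ) (a : V) (A D : Finset V) (e : V) :
    Prop where
  base : a ∈ A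
  card : #A ≤ s + 1
  avoid : ∀ v ∈ A, v ≠ a → v ∉ F
  exit_mem : e ∈ A
  exit : ∀ v ∈ A, v = e ∨ E v e
  card_miss : #D * 2 ^ s ≤ n
  dom : ∀ v, v ∉ F' → v ∉ A → v ∉ D → ∃ w ∈ A, E v w

lemma exists_domSet [Fintype V] {E : V → V → Prop} (hE : IsTournament E) (F : Finset V) (s : ℕ)
    (a : V) :
    ∃ A D e, DomSet E F F s #(nb E univ a) a A D e ∧ (∀ d ∈ D, d ∉ F ∧ ∀ v ∈ A, E v d) := by
  induction s with
  | zero =>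
    refine ⟨{a}, nb E univ a \ F, a, ⟨by simp, by simp, ?_, by simp, by simp, ?_, ?_⟩, ?_⟩
    · intro v hv hva; exact absurd (mem_singleton.1 hv) hva
    · simpa using card_le_card sdiff_subset
    · intro v hvF hva hvD
      refine ⟨a, by simp,
        hE.of_not (by rw [mem_singleton] at hva; exact Ne.symm hva) fun hc => hvD ?_⟩
      simp [mem_nb, hc, hvF]
    · intro d hd
      simp only [mem_sdiff, mem_nb] at hd
      simpa using ⟨hd.2, hd.1.2⟩
  | succ s ih =>
    obtain ⟨A, D, e, h, hD⟩ := ih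
    rcases D.eq_empty_or_nonempty with rfl | hne
    · exact ⟨A, ∅, e, ⟨h.base, h.card.trans (by omega), h.avoid, h.exit_mem, h.exit, by simp,
        h.dom⟩, by simp⟩
    · obtain ⟨d, hd, hdc⟩ := exists_small_nb hE hne
      refine ⟨insert d A, nb E D d, d, ⟨mem_insert_of_mem h.base,
        (card_insert_le _ _).trans (by have := h.card; omega), ?_, mem_insert_self _ _, ?_, ?_, ?_⟩,
        ?_⟩
      · intro v hv hva
        rcases mem_insert.1 hv with rfl | hv
        · exact (hD v hd).1
        · exact h.avoid v hv hva
      · intro v hv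
        rcases mem_insert.1 hv with rfl | hv
        · exact Or.inl rfl
        · exact Or.inr ((hD d hd).2 v hv)
      · refine le_trans ?_ h.card_miss
        rw [pow_succ, mul_comm (2 ^ s) 2, ← mul_assoc]
        exact Nat.mul_le_mul_right _ (by omega)
      · intro v hvF hvA hvD
        rw [mem_insert, not_or] at hvA
        by_cases hv : v ∈ D
        · refine ⟨d, mem_insert_self _ _, hE.of_not (Ne.symm hvA.1) fun hc => hvD ?_⟩
          exact mem_nb.2 ⟨hv, hc⟩
        · obtain ⟨w, hw, hvw⟩ := h.dom v hvF hvA.2 hv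
          exact ⟨w, mem_insert_of_mem hw, hvw⟩
      · intro v hv
        obtain ⟨hv, hdv⟩ := mem_nb.1 hv
        refine ⟨(hD v hv).1, fun w hw => ?_⟩
        rcases mem_insert.1 hw with rfl | hw
        · exact hdv
        · exact (hD v hv).2 w hw

lemma exists_domSet_family [Fintype V] {G : V → V → V → Prop} (hG : ∀ v, IsTournament (G v))
    {F T : Finset V} (hT : T ⊆ F) (s : ℕ) : ∃ (A D : V → Finset V) (e : V → V),
      (∀ x ∈ T, DomSet (G x) F (F ∪ T.biUnion A) s #(nb (G x) univ x) x (A x) (D x) (e x)) ∧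
      ∀ x ∈ T, ∀ y ∈ T, x ≠ y → Disjoint (A x) (A y) := by
  induction T using Finset.induction_on with
  | empty => exact ⟨fun _ => ∅, fun _ => ∅, id, by simp, by simp⟩
  | insert a T ha ih =>
    obtain ⟨A, D, e, h, hdisj⟩ := ih ((subset_insert a T).trans hT)
    obtain ⟨A', D', e', h', -⟩ := exists_domSet (hG a) (F ∪ T.biUnion A) s a
    have hne : ∀ {x}, x ∈ T → x ≠ a := by rintro x hx rfl; exact ha hx
    have hup : ∀ {W : Type _} (f : V → W) (w : W), ∀ x ∈ T, Function.update f a w x = f x := by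
      intro W f w x hx
      exact Function.update_of_ne (hne hx) _ _
    have hbi : (insert a T).biUnion (Function.update A a A') = T.biUnion A ∪ A' := by
      ext w
      simp only [mem_biUnion, mem_insert, exists_eq_or_imp, Function.update_self, mem_union]
      constructor
      · rintro (h | ⟨α, hα, h⟩)
        · exact Or.inr h
        · rw [hup A A' α hα] at h; exact Or.inl ⟨α, hα, h⟩
      · rintro (⟨α, hα, h⟩ | h)
        · exact Or.inr ⟨α, hα, by rwa [hup A A' α hα]⟩
        · exact Or.inl h
    have hd : ∀ x ∈ T, Disjoint (A x) A' := by
      intro x hx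
      rw [disjoint_left]
      intro v hv hv'
      by_cases hva : v = a
      · subst hva
        exact (h x hx).avoid v hv (hne hx).symm (hT (mem_insert_self _ _))
      · exact h'.avoid v hv' hva (mem_union_right _ (mem_biUnion.2 ⟨x, hx, hv⟩))
    have base : ∀ {p : V → Prop}, p a → (∀ α ∈ T, p α) → ∀ α ∈ insert a T, p α := by
      intro p h1 h2 α hα
      rcases mem_insert.1 hα with rfl | hα
      · exact h1
      · exact h2 α hα
    refine ⟨Function.update A a A', Function.update D a D', Function.update e a e', ?_, ?_⟩
    · rw [hbi]
      refine base ?_ fun x hx => ?_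
      · simp only [Function.update_self]
        refine ⟨h'.base, h'.card, fun v hv hva hvF => h'.avoid v hv hva (mem_union_left _ hvF),
          h'.exit_mem, h'.exit, h'.card_miss, fun v hv => h'.dom v fun hc => hv ?_⟩
        rw [mem_union, mem_union] at *; tauto
      · rw [hup A A' x hx, hup D D' x hx, hup e e' x hx]
        have hx' := h x hx
        refine ⟨hx'.base, hx'.card, hx'.avoid, hx'.exit_mem, hx'.exit, hx'.card_miss,
          fun v hv => hx'.dom v fun hc => hv ?_⟩
        rw [mem_union, mem_union] at *; tauto
    · refine base (base (fun h => absurd rfl h) fun x hx _ => ?_)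
        fun x hx => base (fun _ => ?_) fun y hy hxy => ?_
      · rw [hup A A' x hx, Function.update_self]; exact (hd x hx).symm
      · rw [hup A A' x hx, Function.update_self]; exact hd x hx
      · rw [hup A A' x hx, hup A A' y hy]; exact hdisj x hx y hy hxy

lemma exists_lowest {α : Type*} [DecidableEq α] (f : α → ℕ) {S : Finset α} {m : ℕ} (hm : m ≤ #S) :
    ∃ X ⊆ S, #X = m ∧ ∀ x ∈ X, ∀ v ∈ S, v ∉ X → f x ≤ f v := by
  induction m with
  | zero => exact ⟨∅, by simp, by simp, by simp⟩
  | succ m ih =>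
    obtain ⟨X, hXS, hXc, hX⟩ := ih (by omega)
    have hne : (S \ X).Nonempty := by
      rw [← card_pos, card_sdiff_of_subset hXS]; omega
    obtain ⟨w, hw, hmin⟩ := exists_min_image (S \ X) f hne
    have hw' := mem_sdiff.1 hw
    refine ⟨insert w X, insert_subset hw'.1 hXS, by rw [card_insert_of_notMem hw'.2, hXc], ?_⟩
    intro x hx v hv hvX
    rw [mem_insert, not_or] at hvX
    rcases mem_insert.1 hx with rfl | hx
    · exact hmin v (mem_sdiff.2 ⟨hv, hvX.2⟩)
    · exact hX x hx v hv hvX.2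

lemma StronglyKConnectedOn.sdiff {E : V → V → Prop} {K k : ℕ} {S F : Finset V}
    (h : StronglyKConnectedOn E K S) (hF : #F + k ≤ K) : StronglyKConnectedOn E k (S \ F) := by
  refine ⟨?_, fun Z hZ => ?_⟩
  · have := le_card_sdiff F S
    have := h.1
    omega
  · have : (S \ F) \ Z = S \ (F ∪ Z) := by ext w; simp only [mem_sdiff, mem_union]; tauto
    rw [this]
    exact h.2 _ ((card_union_le _ _).trans (by omega))

end DominatingSets

section Gadgets

variable {V ι : Type*} [Fintype V] [DecidableEq V]

/-- Disjoint gadgets, each consisting of an in-dominating set `A α`, an out-dominating set `B α`,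
a path between them with internal vertices `I α`, and hubs `eh α` and `bh α` which receive from,
respectively send to, all internal vertices. -/
structure GadgetFamily (E : V → V → Prop) (s : ℕ) (Exc : Finset V) (A B R I : ι → Finset V)
    (eh bh : ι → V) (dP dM : ℕ) : Prop where
  A_sub : ∀ α, A α ⊆ R α
  B_sub : ∀ α, B α ⊆ R α
  eh_mem : ∀ α, eh α ∈ R α
  bh_mem : ∀ α, bh α ∈ R α
  card_R : ∀ α, #(R α) ≤ 2 * s + 8
  disjR : ∀ α β, α ≠ β → Disjoint (R α) (R β)
  disjI : ∀ α β, α ≠ β → Disjoint (I α) (I β)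
  disjRI : ∀ α β, Disjoint (R α) (I β)
  R_exc : ∀ α, R α ⊆ Exc
  I_exc : ∀ α, Disjoint (I α) Exc
  link : ∀ α, ∀ a ∈ A α, ∀ b ∈ B α, ReachWithin E ((R α ∪ I α : Finset V) : Set V) a b
  exit : ∀ α β, ∀ p ∈ I α, E p (eh β)
  entry : ∀ α β, ∀ p ∈ I α, E (bh β) p
  degP : ∀ v, v ∉ Exc → dP ≤ #(nb E univ v)
  degM : ∀ v, v ∉ Exc → dM ≤ #(nb (flip E) univ v)
  missP : ∀ α, ∀ D : Finset V, (∀ v ∈ D, v ∉ Exc ∧ ∀ a ∈ A α, ¬ E v a) → #D * 2 ^ s ≤ dP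
  missM : ∀ α, ∀ D : Finset V, (∀ v ∈ D, v ∉ Exc ∧ ∀ b ∈ B α, ¬ E b v) → #D * 2 ^ s ≤ dM
  fewP : ∀ v, v ∉ Exc → (∀ α, v ∉ I α) → (∀ β, E v (eh β)) ∨ ∀ β, #(nb E (I β) v) ≤ 3
  fewM : ∀ v, v ∉ Exc → (∀ α, v ∉ I α) →
    (∀ β, E (bh β) v) ∨ ∀ β, #(nb (flip E) (I β) v) ≤ 3

lemma GadgetFamily.rev {E : V → V → Prop} {s : ℕ} {Exc : Finset V} {A B R I : ι → Finset V}
    {eh bh : ι → V} {dP dM : ℕ} (h : GadgetFamily E s Exc A B R I eh bh dP dM) :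
    GadgetFamily (flip E) s Exc B A R I bh eh dM dP :=
  ⟨h.B_sub, h.A_sub, h.bh_mem, h.eh_mem, h.card_R, h.disjR, h.disjI, h.disjRI, h.R_exc, h.I_exc,
    fun α a ha b hb => (h.link α b hb a ha).rev, h.entry, h.exit, h.degM, h.degP, h.missM,
    h.missP, h.fewM, h.fewP⟩

lemma exists_injection_into {W : Type*} (N : ℕ) {S : Finset W} (h : N ≤ #S) :
    ∃ f : Fin N → W, Function.Injective f ∧ ∀ i, f i ∈ S := by
  obtain ⟨t, ht, hc⟩ := exists_subset_card_eq h
  refine ⟨fun i => ((t.equivFinOfCardEq hc).symm i : t), ?_, fun i => ht (Subtype.coe_prop _)⟩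
  exact Subtype.val_injective.comp (t.equivFinOfCardEq hc).symm.injective

lemma exists_gadgetFamily {E : V → V → Prop} (hE : IsTournament E) {K N s : ℕ} (hN : 1 ≤ N)
    (h : StronglyKConnectedOn E K univ) (hK : 4 * N * (s + 2) ≤ K) :
    ∃ Exc A B R I eh bh dP dM, GadgetFamily (ι := Fin N) E s Exc A B R I eh bh dP dM ∧
      #Exc ≤ 4 * N * (s + 2) ∧ K ≤ dP ∧ K ≤ dM := by
  classical
  have hV := h.1
  have hNK : 8 * N ≤ K := le_trans (by nlinarith) hK
  obtain ⟨X, -, hXc, hX⟩ := exists_lowest (fun v => #(nb E univ v)) (S := univ) (m := 2 * N)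
    (by omega)
  obtain ⟨Y, hYX, hYc, hY⟩ := exists_lowest (fun v => #(nb (flip E) univ v)) (S := univ \ X)
    (m := 2 * N) (by rw [card_sdiff_of_subset (subset_univ _)]; omega)
  have hXY : ∀ v ∈ X, v ∉ Y := fun v hv hv' => (mem_sdiff.1 (hYX hv')).2 hv
  obtain ⟨A, D, e, hdom, hAdisj⟩ := exists_domSet_family (G := fun v => if v ∈ X then E else flip E)
    (by intro v; split_ifs; exacts [hE, hE.rev]) (F := X ∪ Y) (Subset.refl _) s
  set AA : Finset V := (X ∪ Y).biUnion A with hAA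
  have hF : X ∪ Y ∪ AA = AA :=
    union_eq_right.2 fun v hv => mem_biUnion.2 ⟨v, hv, (hdom v hv).base⟩
  have hdomX : ∀ x ∈ X, DomSet E (X ∪ Y) AA s #(nb E univ x) x (A x) (D x) (e x) := by
    intro x hx
    have := hdom x (mem_union_left _ hx)
    rwa [if_pos hx, hF] at this
  have hdomY : ∀ x ∈ Y, DomSet (flip E) (X ∪ Y) AA s #(nb (flip E) univ x) x (A x) (D x) (e x) := by
    intro x hx
    have := hdom x (mem_union_right _ hx)
    rwa [if_neg (fun hc => hXY x hc hx), hF] at this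
  have hemem : ∀ z ∈ X ∪ Y, e z ∈ A z := fun z hz => (hdom z hz).exit_mem
  have huniq : ∀ z ∈ X ∪ Y, ∀ z' ∈ X ∪ Y, ∀ v, v ∈ A z → v ∈ A z' → z = z' := by
    intro z hz z' hz' v hv hv'
    by_contra hne
    exact disjoint_left.1 (hAdisj z hz z' hz' hne) hv hv'
  have heinj : ∀ z ∈ X ∪ Y, ∀ z' ∈ X ∪ Y, e z = e z' → z = z' := by
    intro z hz z' hz' he
    exact huniq z hz z' hz' _ (hemem z hz) (he ▸ hemem z' hz')
  have hAAc : #AA ≤ 4 * N * (s + 1) := by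
    refine (card_biUnion_le_card_mul _ _ (s + 1) fun x hx => (hdom x hx).card).trans ?_
    exact Nat.mul_le_mul_right _ ((card_union_le _ _).trans (by omega))
  set Xs := X.image e with hXs
  set Ys := Y.image e with hYs
  set S : Finset V := univ \ (AA \ (Xs ∪ Ys)) with hS
  have memS : ∀ v, v ∈ S ↔ (v ∈ AA → v ∈ Xs ∪ Ys) := by
    intro v; simp only [hS, mem_sdiff, mem_univ, true_and]; tauto
  have hXsc : #Xs = 2 * N := by
    rw [hXs, card_image_of_injOn, hXc]
    intro x hx y hy hxy
    exact heinj x (mem_union_left _ hx) y (mem_union_left _ hy) hxy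
  have hYsc : #Ys = 2 * N := by
    rw [hYs, card_image_of_injOn, hYc]
    intro x hx y hy hxy
    exact heinj x (mem_union_right _ hx) y (mem_union_right _ hy) hxy
  have hSconn : StronglyKConnectedOn E (4 * N) S := by
    refine h.sdiff ?_
    have := card_le_card (sdiff_subset (s := AA) (t := Xs ∪ Ys))
    nlinarith
  obtain ⟨P, Sp, x, y, hL, -⟩ := exists_linkSystem (ι := Fin N) hE hSconn (X := Xs) (Y := Ys)
    (fun v hv => (memS v).2 fun _ => mem_union_left _ hv)
    (fun v hv => (memS v).2 fun _ => mem_union_right _ hv) univ (by simp)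
    (by rw [hXsc, card_fin]; omega) (by rw [hYsc, card_fin]; omega)
  set U := univ.biUnion P with hU
  have memU : ∀ α v, v ∈ P α → v ∈ U := fun α v hv => mem_biUnion.2 ⟨α, mem_univ _, hv⟩
  have hSpP : ∀ α, Sp α ⊆ P α := fun α => hL.sp_sub α (mem_univ _)
  choose σ hσ hσe using fun α => mem_image.1 (hL.x_mem α (mem_univ _))
  choose τ hτ hτe using fun α => mem_image.1 (hL.y_mem α (mem_univ _))
  have hunused : ∀ (Z : Finset V) (z : Fin N → V), #Z = 2 * N →
      (∀ α, ∀ p ∈ P α, p ∈ Z → p = z α) → N ≤ #(Z \ U) := by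
    intro Z z hZ hz
    have h1 : Z \ univ.image z ⊆ Z \ U := by
      intro v hv
      obtain ⟨hvZ, hv⟩ := mem_sdiff.1 hv
      refine mem_sdiff.2 ⟨hvZ, fun hc => hv ?_⟩
      obtain ⟨α, -, hα⟩ := mem_biUnion.1 hc
      exact mem_image.2 ⟨α, mem_univ _, (hz α v hα hvZ).symm⟩
    have h2 := card_le_card h1
    have h3 := le_card_sdiff (univ.image z) Z
    have h4 : #(univ.image z) ≤ N := by simpa using card_image_le (s := univ) (f := z)
    omega
  obtain ⟨eh, heh, hehU⟩ := exists_injection_into N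
    (hunused Xs x hXsc fun α => hL.x_eq α (mem_univ _))
  obtain ⟨bh, hbh, hbhU⟩ := exists_injection_into N
    (hunused Ys y hYsc fun α => hL.y_eq α (mem_univ _))
  choose ζ hζ hζe using fun α => mem_image.1 (mem_sdiff.1 (hehU α)).1
  choose ξ hξ hξe using fun α => mem_image.1 (mem_sdiff.1 (hbhU α)).1
  have hxP : ∀ α, x α ∈ P α := fun α => hSpP α (hL.x_sp α (mem_univ _))
  have hyP : ∀ α, y α ∈ P α := fun α => hSpP α (hL.y_sp α (mem_univ _))
  have hPdisj : ∀ α β v, v ∈ P α → v ∈ P β → α = β := by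
    intro α β v hα hβ
    by_contra hne
    exact disjoint_left.1 (hL.disj α (mem_univ _) β (mem_univ _) hne) hα hβ
  have hPAA : ∀ α v, v ∈ P α → v ∈ AA → v = x α ∨ v = y α := by
    intro α v hv hvA
    rcases mem_union.1 ((memS v).1 (hL.sub α (mem_univ _) hv) hvA) with h | h
    · exact Or.inl (hL.x_eq α (mem_univ _) v hv h)
    · exact Or.inr (hL.y_eq α (mem_univ _) v hv h)
  have hσi : ∀ α β, σ α = σ β → α = β := fun α β hc => hPdisj α β (x α) (hxP α)
    (by rw [← hσe α, hc, hσe β]; exact hxP β)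
  have hτi : ∀ α β, τ α = τ β → α = β := fun α β hc => hPdisj α β (y α) (hyP α)
    (by rw [← hτe α, hc, hτe β]; exact hyP β)
  have hζi : ∀ α β, ζ α = ζ β → α = β := fun α β hc => heh (by rw [← hζe α, hc, hζe β])
  have hξi : ∀ α β, ξ α = ξ β → α = β := fun α β hc => hbh (by rw [← hξe α, hc, hξe β])
  have hσζ : ∀ α β, σ α ≠ ζ β := fun α β hc => (mem_sdiff.1 (hehU β)).2
    (by rw [← hζe β, ← hc, hσe α]; exact memU α _ (hxP α))
  have hτξ : ∀ α β, τ α ≠ ξ β := fun α β hc => (mem_sdiff.1 (hbhU β)).2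
    (by rw [← hξe β, ← hc, hτe α]; exact memU α _ (hyP α))
  set R : Fin N → Finset V := fun α => A (σ α) ∪ A (τ α) ∪ {eh α, bh α} ∪ Sp α with hR
  set I : Fin N → Finset V := fun α => P α \ Sp α with hI
  have hIAA : ∀ α v, v ∈ I α → v ∉ AA := by
    intro α v hv hc
    obtain ⟨hvP, hvS⟩ := mem_sdiff.1 hv
    rcases hPAA α v hvP hc with rfl | rfl
    · exact hvS (hL.x_sp α (mem_univ _))
    · exact hvS (hL.y_sp α (mem_univ _))
  have hXm : ∀ {z}, z ∈ X → z ∈ X ∪ Y := fun h => mem_union_left _ h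
  have hYm : ∀ {z}, z ∈ Y → z ∈ X ∪ Y := fun h => mem_union_right _ h
  have hAm : ∀ {z v}, z ∈ X ∪ Y → v ∈ A z → v ∈ AA := fun h h' => mem_biUnion.2 ⟨_, h, h'⟩
  have hRc : ∀ α v, v ∈ R α →
      (v ∈ AA ∧ ((v ∈ A (σ α) ∨ v ∈ A (τ α)) ∨ v ∈ A (ζ α) ∨ v ∈ A (ξ α))) ∨
        (v ∈ Sp α ∧ v ∉ AA) := by
    intro α v hv
    simp only [hR, mem_union, mem_insert, mem_singleton] at hv
    rcases hv with ((hv | hv) | (hv | hv)) | hv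
    · exact Or.inl ⟨hAm (hXm (hσ α)) hv, Or.inl (Or.inl hv)⟩
    · exact Or.inl ⟨hAm (hYm (hτ α)) hv, Or.inl (Or.inr hv)⟩
    · have : v ∈ A (ζ α) := by rw [hv, ← hζe α]; exact hemem _ (hXm (hζ α))
      exact Or.inl ⟨hAm (hXm (hζ α)) this, Or.inr (Or.inl this)⟩
    · have : v ∈ A (ξ α) := by rw [hv, ← hξe α]; exact hemem _ (hYm (hξ α))
      exact Or.inl ⟨hAm (hYm (hξ α)) this, Or.inr (Or.inr this)⟩
    · by_cases hvA : v ∈ AA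
      · left
        rcases hPAA α v (hSpP α hv) hvA with rfl | rfl
        · have : x α ∈ A (σ α) := by rw [← hσe α]; exact hemem _ (hXm (hσ α))
          exact ⟨hvA, Or.inl (Or.inl this)⟩
        · have : y α ∈ A (τ α) := by rw [← hτe α]; exact hemem _ (hYm (hτ α))
          exact ⟨hvA, Or.inl (Or.inr this)⟩
      · exact Or.inr ⟨hv, hvA⟩
  have hPRI : ∀ α, P α ⊆ R α ∪ I α := by
    intro α v hv
    by_cases hvs : v ∈ Sp α
    · exact mem_union_left _ (mem_union_right _ hvs)
    · exact mem_union_right _ (mem_sdiff.2 ⟨hv, hvs⟩)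
  set Exc : Finset V := AA ∪ univ.biUnion Sp with hExc
  have hmemS : ∀ v, v ∉ Exc → v ∈ S := fun v hv =>
    (memS v).2 fun hc => absurd (mem_union_left _ hc) hv
  have hnU : ∀ v, v ∉ Exc → (∀ α, v ∉ I α) → v ∉ U := by
    intro v hv hvI hvU
    obtain ⟨α, -, hα⟩ := mem_biUnion.1 hvU
    refine hvI α (mem_sdiff.2 ⟨hα, fun hc => hv (mem_union_right _ ?_)⟩)
    exact mem_biUnion.2 ⟨α, mem_univ _, hc⟩
  have hXne : X.Nonempty := by rw [← card_pos]; omega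
  have hYne : Y.Nonempty := by rw [← card_pos]; omega
  have hXsup : ∀ v, v ∉ Exc → v ∉ X := fun v hv hc =>
    hv (mem_union_left _ (hAm (hXm hc) (hdomX v hc).base))
  have hYsup : ∀ v, v ∉ Exc → v ∉ Y := fun v hv hc =>
    hv (mem_union_left _ (hAm (hYm hc) (hdomY v hc).base))
  refine ⟨Exc, fun α => A (σ α), fun α => A (τ α), R, I, eh, bh,
    X.sup fun v => #(nb E univ v), Y.sup fun v => #(nb (flip E) univ v), ?_, ?_, ?_, ?_⟩
  · constructor
    · exact fun α v hv => mem_union_left _ (mem_union_left _ (mem_union_left _ hv))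
    · exact fun α v hv => mem_union_left _ (mem_union_left _ (mem_union_right _ hv))
    · intro α; simp [hR]
    · intro α; simp [hR]
    · intro α
      have h1 := (hdomX _ (hσ α)).card
      have h2 := (hdomY _ (hτ α)).card
      have h3 := hL.sp_card α (mem_univ _)
      have h4 := card_union_le (A (σ α) ∪ A (τ α) ∪ {eh α, bh α}) (Sp α)
      have h5 := card_union_le (A (σ α) ∪ A (τ α)) {eh α, bh α}
      have h6 := card_union_le (A (σ α)) (A (τ α))
      show #(A (σ α) ∪ A (τ α) ∪ {eh α, bh α} ∪ Sp α) ≤ _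
      have h7 : #({eh α, bh α} : Finset V) ≤ 2 := card_le_two
      omega
    · intro α β hne
      rw [disjoint_left]
      intro v hv hv'
      have hXYne : ∀ {z z'}, z ∈ X → z' ∈ Y → z ≠ z' := by
        rintro z z' hz hz' rfl; exact hXY z hz hz'
      rcases hRc α v hv with ⟨hvA, hv⟩ | ⟨hv, hvA⟩ <;>
        rcases hRc β v hv' with ⟨hvA', hv'⟩ | ⟨hv', hvA'⟩
      · rcases hv with (hv | hv) | (hv | hv) <;> rcases hv' with (hv' | hv') | (hv' | hv')
        · exact hne (hσi _ _ (huniq _ (hXm (hσ _)) _ (hXm (hσ _)) v hv hv'))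
        · exact hXYne (hσ _) (hτ _) (huniq _ (hXm (hσ _)) _ (hYm (hτ _)) v hv hv')
        · exact hσζ _ _ (huniq _ (hXm (hσ _)) _ (hXm (hζ _)) v hv hv')
        · exact hXYne (hσ _) (hξ _) (huniq _ (hXm (hσ _)) _ (hYm (hξ _)) v hv hv')
        · exact hXYne (hσ _) (hτ _) (huniq _ (hXm (hσ _)) _ (hYm (hτ _)) v hv' hv)
        · exact hne (hτi _ _ (huniq _ (hYm (hτ _)) _ (hYm (hτ _)) v hv hv'))
        · exact hXYne (hζ _) (hτ _) (huniq _ (hXm (hζ _)) _ (hYm (hτ _)) v hv' hv)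
        · exact hτξ _ _ (huniq _ (hYm (hτ _)) _ (hYm (hξ _)) v hv hv')
        · exact hσζ _ _ (huniq _ (hXm (hσ _)) _ (hXm (hζ _)) v hv' hv)
        · exact hXYne (hζ _) (hτ _) (huniq _ (hXm (hζ _)) _ (hYm (hτ _)) v hv hv')
        · exact hne (hζi _ _ (huniq _ (hXm (hζ _)) _ (hXm (hζ _)) v hv hv'))
        · exact hXYne (hζ _) (hξ _) (huniq _ (hXm (hζ _)) _ (hYm (hξ _)) v hv hv')
        · exact hXYne (hσ _) (hξ _) (huniq _ (hXm (hσ _)) _ (hYm (hξ _)) v hv' hv)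
        · exact hτξ _ _ (huniq _ (hYm (hτ _)) _ (hYm (hξ _)) v hv' hv)
        · exact hXYne (hζ _) (hξ _) (huniq _ (hXm (hζ _)) _ (hYm (hξ _)) v hv' hv)
        · exact hne (hξi _ _ (huniq _ (hYm (hξ _)) _ (hYm (hξ _)) v hv hv'))
      · exact hvA' hvA
      · exact hvA hvA'
      · exact hne (hPdisj α β v (hSpP α hv) (hSpP β hv'))
    · intro α β hne
      rw [disjoint_left]
      intro v hv hv'
      exact hne (hPdisj α β v (mem_sdiff.1 hv).1 (mem_sdiff.1 hv').1)
    · intro α β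
      rw [disjoint_left]
      intro v hv hv'
      rcases hRc α v hv with ⟨hvA, -⟩ | ⟨hv, -⟩
      · exact hIAA β v hv' hvA
      · have := hPdisj α β v (hSpP α hv) (mem_sdiff.1 hv').1
        subst this
        exact (mem_sdiff.1 hv').2 hv
    · intro α v hv
      rcases hRc α v hv with ⟨hvA, -⟩ | ⟨hv, -⟩
      · exact mem_union_left _ hvA
      · exact mem_union_right _ (mem_biUnion.2 ⟨α, mem_univ _, hv⟩)
    · intro α
      rw [disjoint_left]
      intro v hv hvE
      rcases mem_union.1 hvE with hvA | hvS
      · exact hIAA α v hv hvA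
      · obtain ⟨β, -, hβ⟩ := mem_biUnion.1 hvS
        have := hPdisj α β v (mem_sdiff.1 hv).1 (hSpP β hβ)
        subst this
        exact (mem_sdiff.1 hv).2 hβ
    · intro α a ha b hb
      have hsub : ((P α : Finset V) : Set V) ⊆ ((R α ∪ I α : Finset V) : Set V) := by
        exact_mod_cast hPRI α
      have hAR : ∀ {v}, v ∈ A (σ α) → v ∈ ((R α ∪ I α : Finset V) : Set V) := fun hv => by
        have : _ ∈ R α ∪ I α := mem_union_left _ (mem_union_left _ (mem_union_left _
          (mem_union_left _ hv)))
        exact_mod_cast this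
      have hBR : ∀ {v}, v ∈ A (τ α) → v ∈ ((R α ∪ I α : Finset V) : Set V) := fun hv => by
        have : _ ∈ R α ∪ I α := mem_union_left _ (mem_union_left _ (mem_union_left _
          (mem_union_right _ hv)))
        exact_mod_cast this
      have h1 : ReachWithin E ((R α ∪ I α : Finset V) : Set V) a (x α) := by
        rw [← hσe α]
        rcases (hdomX _ (hσ α)).exit a ha with rfl | hae
        · exact ReachWithin.refl _ _ _
        · exact ReachWithin.single (hAR ha) (hAR (hemem _ (hXm (hσ α)))) hae
      have h2 : ReachWithin E ((R α ∪ I α : Finset V) : Set V) (y α) b := by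
        rw [← hτe α]
        rcases (hdomY _ (hτ α)).exit b hb with rfl | hbe
        · exact ReachWithin.refl _ _ _
        · exact ReachWithin.single (hBR (hemem _ (hYm (hτ α)))) (hBR hb) hbe
      exact (h1.trans ((hL.reach α (mem_univ _)).mono hsub)).trans h2
    · intro α β p hp
      obtain ⟨hpP, hpS⟩ := mem_sdiff.1 hp
      obtain ⟨h1, h2⟩ := mem_sdiff.1 (hehU β)
      exact hL.toX α (mem_univ _) p hpP hpS _ h1 h2
    · intro α β p hp
      obtain ⟨hpP, hpS⟩ := mem_sdiff.1 hp
      obtain ⟨h1, h2⟩ := mem_sdiff.1 (hbhU β)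
      exact hL.ofY α (mem_univ _) p hpP hpS _ h1 h2
    · intro v hv
      exact Finset.sup_le fun x hx => hX x hx v (mem_univ _) (hXsup v hv)
    · intro v hv
      exact Finset.sup_le fun x hx =>
        hY x hx v (mem_sdiff.2 ⟨mem_univ _, hXsup v hv⟩) (hYsup v hv)
    · intro α D' hD'
      have hsub : D' ⊆ D (σ α) := by
        intro v hv
        by_contra hvD
        obtain ⟨hvE, hvA⟩ := hD' v hv
        obtain ⟨w, hw, hvw⟩ := (hdomX _ (hσ α)).dom v (fun hc => hvE (mem_union_left _ hc))
          (fun hc => hvE (mem_union_left _ (hAm (hXm (hσ α)) hc))) hvD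
        exact hvA w hw hvw
      exact (Nat.mul_le_mul_right _ (card_le_card hsub)).trans
        ((hdomX _ (hσ α)).card_miss.trans (le_sup (f := fun v => #(nb E univ v)) (hσ α)))
    · intro α D' hD'
      have hsub : D' ⊆ D (τ α) := by
        intro v hv
        by_contra hvD
        obtain ⟨hvE, hvA⟩ := hD' v hv
        obtain ⟨w, hw, hvw⟩ := (hdomY _ (hτ α)).dom v (fun hc => hvE (mem_union_left _ hc))
          (fun hc => hvE (mem_union_left _ (hAm (hYm (hτ α)) hc))) hvD
        exact hvA w hw hvw
      exact (Nat.mul_le_mul_right _ (card_le_card hsub)).trans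
        ((hdomY _ (hτ α)).card_miss.trans (le_sup (f := fun v => #(nb (flip E) univ v)) (hτ α)))
    · intro v hv hvI
      by_contra hcon
      push Not at hcon
      obtain ⟨⟨β, hβ⟩, γ, hγ⟩ := hcon
      obtain ⟨h1, h2⟩ := mem_sdiff.1 (hehU β)
      have hne : v ≠ eh β := by
        rintro rfl
        refine hv (mem_union_left _ ?_)
        rw [← hζe β]; exact hAm (hXm (hζ β)) (hemem _ (hXm (hζ β)))
      have := hL.fewOut γ (mem_univ _) v (hmemS v hv) (hnU v hv hvI)
        ⟨eh β, h1, h2, hE.of_not hne hβ⟩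
      have h3 : #(nb E (I γ) v) ≤ _ :=
        card_le_card (nb_mono (E := E) (sdiff_subset (s := P γ) (t := Sp γ)) v)
      omega
    · intro v hv hvI
      by_contra hcon
      push Not at hcon
      obtain ⟨⟨β, hβ⟩, γ, hγ⟩ := hcon
      obtain ⟨h1, h2⟩ := mem_sdiff.1 (hbhU β)
      have hne : bh β ≠ v := by
        rintro rfl
        refine hv (mem_union_left _ ?_)
        rw [← hξe β]; exact hAm (hYm (hξ β)) (hemem _ (hYm (hξ β)))
      have := hL.fewIn γ (mem_univ _) v (hmemS v hv) (hnU v hv hvI)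
        ⟨bh β, h1, h2, hE.of_not hne hβ⟩
      have h3 : #(nb (flip E) (I γ) v) ≤ _ :=
        card_le_card (nb_mono (E := flip E) (sdiff_subset (s := P γ) (t := Sp γ)) v)
      omega
  · have h1 := card_union_le AA (univ.biUnion Sp)
    have h2 := card_biUnion_le_card_mul univ Sp 4 fun α _ => hL.sp_card α (mem_univ _)
    rw [card_fin] at h2
    nlinarith
  · obtain ⟨x₀, hx₀⟩ := hXne
    refine le_trans ?_ (le_sup (f := fun v => #(nb E univ v)) hx₀)
    have := h.card_nb hE (by nlinarith) (mem_univ x₀)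
    omega
  · obtain ⟨x₀, hx₀⟩ := hYne
    refine le_trans ?_ (le_sup (f := fun v => #(nb (flip E) univ v)) hx₀)
    have := h.rev.card_nb hE.rev (by nlinarith) (mem_univ x₀)
    omega

end Gadgets

section Selection

variable {ι : Type*} [DecidableEq ι]

lemma exists_erase_light {f : ι → ι → ℝ} (h0 : ∀ α, f α α = 0) {S : Finset ι} (hS : S.Nonempty) :
    ∃ x ∈ S, (∑ α ∈ S.erase x, ∑ β ∈ S.erase x, f α β) * #S ≤
      (∑ α ∈ S, ∑ β ∈ S, f α β) * (#S - 2) := by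
  have hdec : ∀ x ∈ S, ∑ α ∈ S.erase x, ∑ β ∈ S.erase x, f α β =
      ∑ α ∈ S, ∑ β ∈ S, f α β - ∑ β ∈ S, f x β - ∑ α ∈ S, f α x := by
    intro x hx
    have h1 : ∀ g : ι → ℝ, ∑ β ∈ S.erase x, g β = ∑ β ∈ S, g β - g x := fun g =>
      eq_sub_of_add_eq (sum_erase_add S g hx)
    rw [h1]
    simp only [h1, sum_sub_distrib, h0]
    ring
  have hsum : ∑ x ∈ S, (∑ α ∈ S.erase x, ∑ β ∈ S.erase x, f α β) * #S ≤
      ∑ x ∈ S, (∑ α ∈ S, ∑ β ∈ S, f α β) * (#S - 2) := by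
    rw [← sum_mul, sum_congr rfl hdec, sum_sub_distrib, sum_sub_distrib,
      sum_comm (f := fun x α => f α x)]
    simp only [sum_const, nsmul_eq_mul]
    apply le_of_eq; ring
  exact exists_le_of_sum_le hS hsum

lemma exists_light_subset {f : ι → ι → ℝ} (h0 : ∀ α, f α α = 0)
    (U : Finset ι) {m : ℕ} (hm : 2 ≤ m) (hmU : m ≤ #U) :
    ∃ S ⊆ U, #S = m ∧ (∑ α ∈ S, ∑ β ∈ S, f α β) * (#U * (#U - 1)) ≤
      (∑ α ∈ U, ∑ β ∈ U, f α β) * (m * (m - 1)) := by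
  obtain ⟨d, hd⟩ := Nat.exists_eq_add_of_le hmU
  induction d generalizing m with
  | zero => exact ⟨U, Subset.refl _, by omega, by rw [hd]; simp⟩
  | succ d ih =>
    obtain ⟨S, hSU, hSc, hS⟩ := ih (m := m + 1) (by omega) (by omega) (by omega)
    obtain ⟨x, hx, hxS⟩ := exists_erase_light h0 (S := S) (by rw [← card_pos]; omega)
    refine ⟨S.erase x, (erase_subset _ _).trans hSU, by rw [card_erase_of_mem hx]; omega, ?_⟩
    rw [hSc] at hxS
    push_cast at hS hxS
    have hm' : (2 : ℝ) ≤ m := by exact_mod_cast hm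
    have hU : (m : ℝ) ≤ #U := by exact_mod_cast hmU
    have hU0 : (0 : ℝ) ≤ #U * (#U - 1) := by nlinarith
    have h1 := mul_le_mul_of_nonneg_right hxS hU0
    have h2 := mul_le_mul_of_nonneg_right hS (show (0 : ℝ) ≤ m + 1 - 2 by linarith)
    have h3 : (0 : ℝ) < m + 1 := by linarith
    refine le_of_mul_le_mul_right ?_ h3
    nlinarith

/-- From a large index set with bounded row sums one can choose `r` indices among which all
row sums are small. -/
lemma exists_sparse_subset {f : ι → ι → ℝ} (h0 : ∀ α, f α α = 0) (hf : ∀ α β, 0 ≤ f α β)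
    {U : Finset ι} {ρ θ : ℝ} (hθ : 0 < θ) (hρ : ∀ α ∈ U, ∑ β ∈ U, f α β ≤ ρ) {r : ℕ} (hr : 1 ≤ r)
    (hrU : 2 * r ≤ #U) (hU : 4 * r * ρ ≤ θ * (#U - 1)) :
    ∃ S ⊆ U, #S = r ∧ ∀ α ∈ S, ∑ β ∈ S, f α β ≤ θ := by
  obtain ⟨S, hSU, hSc, hS⟩ := exists_light_subset h0 U (m := 2 * r) (by omega) hrU
  have hr' : (1 : ℝ) ≤ r := by exact_mod_cast hr
  have hrU' : (2 : ℝ) * r ≤ #U := by exact_mod_cast hrU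
  have htot : ∑ α ∈ U, ∑ β ∈ U, f α β ≤ #U * ρ := by
    simpa using sum_le_card_nsmul U _ ρ hρ
  have hρ0 : 0 ≤ ρ := by
    obtain ⟨α, hα⟩ : U.Nonempty := by rw [← card_pos]; omega
    exact (sum_nonneg fun β _ => hf α β).trans (hρ α hα)
  have hW : ∑ α ∈ S, ∑ β ∈ S, f α β ≤ r * θ := by
    push_cast at hS
    have hpos : (0 : ℝ) < #U * (#U - 1) := by nlinarith
    refine le_of_mul_le_mul_right (hS.trans ?_) hpos
    have h1 : (0 : ℝ) ≤ 2 * r * (2 * r - 1) := by nlinarith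
    refine (mul_le_mul_of_nonneg_right htot h1).trans ?_
    have h2 : ρ * (2 * r * (2 * r - 1)) ≤ r * (4 * r * ρ) := by
      nlinarith [mul_nonneg hρ0 (by linarith : (0 : ℝ) ≤ r)]
    have h3 : (r : ℝ) * (4 * r * ρ) ≤ r * (θ * (#U - 1)) := by gcongr
    have h4 : (#U : ℝ) * (ρ * (2 * r * (2 * r - 1))) ≤ #U * (r * (θ * (#U - 1))) := by
      have := h2.trans h3
      gcongr
    nlinarith
  classical
  set B : Finset ι := {α ∈ S | θ < ∑ β ∈ S, f α β} with hB
  have hBr : #B ≤ r := by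
    have h1 : #B * θ ≤ ∑ α ∈ B, ∑ β ∈ S, f α β := by
      simpa using card_nsmul_le_sum B _ θ fun α hα => (mem_filter.1 hα).2.le
    have h2 : ∑ α ∈ B, ∑ β ∈ S, f α β ≤ ∑ α ∈ S, ∑ β ∈ S, f α β :=
      sum_le_sum_of_subset_of_nonneg (filter_subset _ _) fun α _ _ => sum_nonneg fun β _ => hf α β
    have h3 : (#B : ℝ) ≤ r := le_of_mul_le_mul_right (h1.trans (h2.trans hW)) hθ
    exact_mod_cast h3
  obtain ⟨S', hS', hS'c⟩ := exists_subset_card_eq (s := S \ B) (n := r) (by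
    have h1 := card_sdiff_add_card_eq_card (show B ⊆ S from filter_subset _ _); omega)
  refine ⟨S', hS'.trans (sdiff_subset.trans hSU), hS'c, fun α hα => ?_⟩
  obtain ⟨hαS, hαB⟩ := mem_sdiff.1 (hS' hα)
  refine (sum_le_sum_of_subset_of_nonneg (hS'.trans sdiff_subset) fun β _ _ => hf α β).trans ?_
  by_contra hc
  exact hαB (mem_filter.2 ⟨hαS, not_le.1 hc⟩)

end Selection

section RandomChoice

variable {V κ : Type*} [Fintype V] [DecidableEq V] [DecidableEq κ]

/-- Lower tail bound for the number of elements of `N` receiving a colour in `J`, when each `v`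
gets an independent uniform colour from `Ω v`. -/
lemma card_few_colour_le {Ω : V → Finset κ} (hΩ : ∀ v, (Ω v).Nonempty) (N : Finset V)
    (J : Finset κ) (m : ℕ) {x : ℝ} (hx : x ≤ ∑ v ∈ N, (#(Ω v ∩ J) : ℝ) / #(Ω v)) :
    (#{f ∈ Fintype.piFinset Ω | #{v ∈ N | f v ∈ J} ≤ m} : ℝ) ≤
      #(Fintype.piFinset Ω) * 2 ^ m * Real.exp (-(x / 2)) := by
  set g : V → κ → ℝ := fun v j => if v ∈ N ∧ j ∈ J then 1 / 2 else 1 with hg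
  have hprod : ∀ f : V → κ, ∏ v, g v (f v) = (1 / 2) ^ #{v ∈ N | f v ∈ J} := by
    intro f
    rw [hg]
    simp only
    rw [prod_ite, prod_const_one, mul_one, prod_const]
    congr 2
    ext v; simp
  have h1 : ∑ f ∈ Fintype.piFinset Ω, ∏ v, g v (f v) = ∏ v, ∑ j ∈ Ω v, g v j :=
    (prod_univ_sum Ω g).symm
  have h2 : (#{f ∈ Fintype.piFinset Ω | #{v ∈ N | f v ∈ J} ≤ m} : ℝ) * (1 / 2) ^ m ≤
      ∏ v, ∑ j ∈ Ω v, g v j := by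
    rw [← h1]
    have : (#{f ∈ Fintype.piFinset Ω | #{v ∈ N | f v ∈ J} ≤ m} : ℝ) * (1 / 2) ^ m ≤
        ∑ f ∈ {f ∈ Fintype.piFinset Ω | #{v ∈ N | f v ∈ J} ≤ m}, ∏ v, g v (f v) := by
      rw [← nsmul_eq_mul]
      refine card_nsmul_le_sum _ _ _ fun f hf => ?_
      rw [hprod]
      exact pow_le_pow_of_le_one (by norm_num) (by norm_num) (mem_filter.1 hf).2
    refine this.trans (sum_le_sum_of_subset_of_nonneg (filter_subset _ _) fun f _ _ => ?_)
    rw [hprod]; positivity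
  have h3 : ∏ v, ∑ j ∈ Ω v, g v j ≤
      ∏ v, ((#(Ω v) : ℝ) * Real.exp (-((if v ∈ N then (#(Ω v ∩ J) : ℝ) / #(Ω v) else 0) / 2))) := by
    refine prod_le_prod (fun v _ => sum_nonneg fun j _ => ?_) fun v _ => ?_
    · simp only [hg]; split_ifs <;> norm_num
    · have hpos : (0 : ℝ) < #(Ω v) := by exact_mod_cast card_pos.2 (hΩ v)
      have hval : ∑ j ∈ Ω v, g v j =
          #(Ω v) * (1 - (if v ∈ N then (#(Ω v ∩ J) : ℝ) / #(Ω v) else 0) / 2) := by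
        by_cases hv : v ∈ N
        · have h5 : ∀ j, g v j = 1 - (if j ∈ J then 1 / 2 else 0) := by
            intro j; simp only [hg, hv, true_and]; split_ifs <;> norm_num
          simp only [h5, sum_sub_distrib, if_pos hv, ← sum_filter, filter_mem_eq_inter, sum_const,
            nsmul_eq_mul]
          field_simp
        · simp [hg, hv]
      rw [hval]
      refine mul_le_mul_of_nonneg_left ?_ hpos.le
      have := Real.add_one_le_exp (-((if v ∈ N then (#(Ω v ∩ J) : ℝ) / #(Ω v) else 0) / 2))
      linarith
  have h4 : ∏ v, ((#(Ω v) : ℝ) *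
      Real.exp (-((if v ∈ N then (#(Ω v ∩ J) : ℝ) / #(Ω v) else 0) / 2))) ≤
      #(Fintype.piFinset Ω) * Real.exp (-(x / 2)) := by
    rw [prod_mul_distrib, ← Real.exp_sum, Fintype.card_piFinset]
    push_cast
    refine mul_le_mul_of_nonneg_left (Real.exp_le_exp.2 ?_) (by positivity)
    rw [sum_neg_distrib, ← sum_div, ← sum_filter, filter_mem_eq_inter, univ_inter]
    linarith
  have h5 := h2.trans (h3.trans h4)
  have h6 : ((1 : ℝ) / 2) ^ m * 2 ^ m = 1 := by rw [← mul_pow]; norm_num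
  calc (#{f ∈ Fintype.piFinset Ω | #{v ∈ N | f v ∈ J} ≤ m} : ℝ)
      = #{f ∈ Fintype.piFinset Ω | #{v ∈ N | f v ∈ J} ≤ m} * (1 / 2) ^ m * 2 ^ m := by
        rw [mul_assoc, h6, mul_one]
    _ ≤ #(Fintype.piFinset Ω) * Real.exp (-(x / 2)) * 2 ^ m := by gcongr
    _ = _ := by ring

/-- Simultaneous choice: if the expected weights are large compared to the number of
requirements, then some choice function meets all requirements. -/
lemma exists_choice {ε : Type*} {L : Finset V} {Λ : V → Finset κ} (hΛ : ∀ v ∈ L, (Λ v).Nonempty)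
    (k t : ℕ) (Ev : Finset ε) {N : ε → Finset V} (hN : ∀ e ∈ Ev, N e ⊆ L) {J : ε → Finset κ}
    (hJ : ∀ e ∈ Ev, #(J e) ≤ t) {x : ε → ℝ}
    (hx : ∀ e ∈ Ev, x e ≤ ∑ v ∈ N e, (#(Λ v ∩ J e) : ℝ) / #(Λ v)) [Nonempty κ]
    (hsum : ∑ e ∈ Ev, (2 : ℝ) ^ (k * t) * Real.exp (-(x e / 2)) < 1) :
    ∃ g : V → κ, (∀ v ∈ L, g v ∈ Λ v) ∧
      ∀ e ∈ Ev, ∃ i ∈ J e, k < #{v ∈ N e | g v = i} := by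
  classical
  obtain ⟨i₀⟩ := ‹Nonempty κ›
  set Ω : V → Finset κ := fun v => if v ∈ L then Λ v else {i₀} with hΩ
  have hΩne : ∀ v, (Ω v).Nonempty := by
    intro v
    by_cases hv : v ∈ L
    · simpa [hΩ, hv] using hΛ v hv
    · simp [hΩ, hv]
  have hΩL : ∀ v ∈ L, Ω v = Λ v := fun v hv => by simp [hΩ, hv]
  set bad : ε → Finset (V → κ) := fun e =>
    {f ∈ Fintype.piFinset Ω | #{v ∈ N e | f v ∈ J e} ≤ k * t} with hbad
  have hcard : (0 : ℝ) < #(Fintype.piFinset Ω) := by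
    have : (Fintype.piFinset Ω).Nonempty := Fintype.piFinset_nonempty.2 hΩne
    exact_mod_cast card_pos.2 this
  have hb : ((#(Ev.biUnion bad) : ℕ) : ℝ) < #(Fintype.piFinset Ω) := by
    calc ((#(Ev.biUnion bad) : ℕ) : ℝ) ≤ ∑ e ∈ Ev, (#(bad e) : ℝ) := by
          exact_mod_cast card_biUnion_le
      _ ≤ ∑ e ∈ Ev, #(Fintype.piFinset Ω) * ((2 : ℝ) ^ (k * t) * Real.exp (-(x e / 2))) := by
          refine sum_le_sum fun e he => ?_
          rw [← mul_assoc]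
          refine card_few_colour_le hΩne (N e) (J e) (k * t) ((hx e he).trans (le_of_eq ?_))
          exact sum_congr rfl fun v hv => by rw [hΩL v (hN e he hv)]
      _ = #(Fintype.piFinset Ω) * ∑ e ∈ Ev, ((2 : ℝ) ^ (k * t) * Real.exp (-(x e / 2))) := by
          rw [mul_sum]
      _ < #(Fintype.piFinset Ω) * 1 := by gcongr
      _ = _ := mul_one _
  have hb' : #(Ev.biUnion bad) < #(Fintype.piFinset Ω) := by exact_mod_cast hb
  obtain ⟨g, hg, hgb⟩ := exists_mem_notMem_of_card_lt_card hb'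
  rw [Fintype.mem_piFinset] at hg
  refine ⟨g, fun v hv => hΩL v hv ▸ hg v, fun e he => ?_⟩
  by_contra hcon
  push Not at hcon
  refine hgb (mem_biUnion.2 ⟨e, he, mem_filter.2 ⟨Fintype.mem_piFinset.2 hg, ?_⟩⟩)
  calc #{v ∈ N e | g v ∈ J e} = ∑ i ∈ J e, #{v ∈ {v ∈ N e | g v ∈ J e} | g v = i} :=
        card_eq_sum_card_fiberwise fun v hv => by simpa using (mem_filter.1 hv).2
    _ ≤ ∑ i ∈ J e, k := by
        refine sum_le_sum fun i hi => le_trans (card_le_card ?_) (hcon i hi)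
        exact filter_subset_filter _ (filter_subset _ _)
    _ ≤ k * t := by
        rw [sum_const, smul_eq_mul, mul_comm]
        exact Nat.mul_le_mul_left _ (hJ e he)

lemma card_colour_independent {L : ℕ} (v : V) (i : Fin L) {Q : (V → Fin L) → Prop} [DecidablePred Q]
    (hQ : ∀ f j, Q (Function.update f v j) ↔ Q f) :
    L * #{f : V → Fin L | f v = i ∧ Q f} = #{f : V → Fin L | Q f} := by
  have h1 : #{f : V → Fin L | Q f} = ∑ j : Fin L, #{f ∈ {f : V → Fin L | Q f} | f v = j} :=
    card_eq_sum_card_fiberwise fun f _ => by simp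
  rw [h1]
  have h2 : ∀ j : Fin L, #{f ∈ {f : V → Fin L | Q f} | f v = j} =
      #{f : V → Fin L | f v = i ∧ Q f} := by
    intro j
    refine card_nbij' (fun f => Function.update f v i) (fun f => Function.update f v j) ?_ ?_ ?_ ?_
    · intro f hf
      simp only [coe_filter, mem_filter, mem_univ, true_and, Set.mem_ofPred_eq] at hf ⊢
      exact ⟨Function.update_self _ _ _, (hQ f i).2 hf.1⟩
    · intro f hf
      simp only [coe_filter, mem_filter, mem_univ, true_and, Set.mem_ofPred_eq] at hf ⊢
      exact ⟨(hQ f j).2 hf.2, Function.update_self _ _ _⟩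
    · intro f hf
      simp only [coe_filter, mem_filter, mem_univ, true_and, Set.mem_ofPred_eq] at hf
      simp [← hf.2]
    · intro f hf
      simp only [coe_filter, mem_univ, true_and, Set.mem_ofPred_eq] at hf
      simp [← hf.1]
  simp [h2]

lemma exp_neg_four_mul_le (a : ℕ) : (2 : ℝ) ^ (2 * a) * Real.exp (-(4 * a)) ≤ (1 / 8) ^ a := by
  have h1 : Real.exp (-(4 * (a : ℝ))) = (Real.exp (-4)) ^ a := by
    rw [← Real.exp_nat_mul]; ring_nf
  rw [h1, pow_mul, ← mul_pow]
  refine pow_le_pow_left₀ (by positivity) ?_ a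
  have h2 : (32 : ℝ) ≤ Real.exp 4 := by
    have := Real.exp_one_gt_d9
    have h3 : Real.exp 4 = Real.exp 1 ^ 4 := by rw [← Real.exp_nat_mul]; norm_num
    rw [h3]
    calc (32 : ℝ) ≤ 2.7 ^ 4 := by norm_num
      _ ≤ _ := by gcongr; linarith
  rw [Real.exp_neg]
  have : (Real.exp 4)⁻¹ ≤ 32⁻¹ := by gcongr
  linarith

/-- With high probability more than `k` elements of a large set `N` receive colour `i` and are
not bad, provided badness is unlikely and independent of the own colour. -/
lemma card_few_good_le {L a k : ℕ} (hL : 0 < L) (ha : 0 < a) (hka : k ≤ a) (i : Fin L)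
    {N : Finset V}
    (hN : 8 * a * L ≤ #N) (bad : V → (V → Fin L) → Prop) [∀ v f, Decidable (bad v f)]
    (hinv : ∀ v ∈ N, ∀ f j, bad v (Function.update f v j) ↔ bad v f) {p : ℝ}
    (hp : ∀ v ∈ N, (#{f : V → Fin L | bad v f} : ℝ) ≤ p * #(univ : Finset (V → Fin L))) :
    (#{f : V → Fin L | #{v ∈ N | f v = i ∧ ¬ bad v f} ≤ k} : ℝ) ≤
      ((1 / 8) ^ a + 8 * p) * #(univ : Finset (V → Fin L)) := by
  obtain ⟨N', hN', hN'c⟩ := exists_subset_card_eq hN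
  have hL' : (0 : ℝ) < L := by exact_mod_cast hL
  have ha' : (0 : ℝ) < a := by exact_mod_cast ha
  set F₁ : Finset (V → Fin L) := {f : V → Fin L | #{v ∈ N' | f v ∈ ({i} : Finset (Fin L))} ≤ 2 * a}
    with hF₁
  set F₂ : Finset (V → Fin L) := {f : V → Fin L | a ≤ #{v ∈ N' | f v = i ∧ bad v f}} with hF₂
  have hsub : ({f : V → Fin L | #{v ∈ N | f v = i ∧ ¬ bad v f} ≤ k} : Finset (V → Fin L)) ⊆
      F₁ ∪ F₂ := by
    intro f hf
    rw [mem_union]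
    by_contra hc
    simp only [hF₁, hF₂, mem_filter, mem_univ, true_and, not_or, not_le, mem_singleton] at hc hf
    have h1 : #{v ∈ N' | f v = i} ≤ #{v ∈ N | f v = i ∧ ¬ bad v f} +
        #{v ∈ N' | f v = i ∧ bad v f} := by
      refine (card_le_card ?_).trans (card_union_le _ _)
      intro v hv
      rw [mem_filter] at hv
      rw [mem_union, mem_filter, mem_filter]
      by_cases hb : bad v f
      · exact Or.inr ⟨hv.1, hv.2, hb⟩
      · exact Or.inl ⟨hN' hv.1, hv.2, hb⟩
    omega
  have hpi : Fintype.piFinset (fun _ : V => (univ : Finset (Fin L))) = univ := by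
    ext f; simp
  have : Nonempty (Fin L) := ⟨⟨0, hL⟩⟩
  have h1 : (#F₁ : ℝ) ≤ (1 / 8) ^ a * #(univ : Finset (V → Fin L)) := by
    have := card_few_colour_le (Ω := fun _ : V => (univ : Finset (Fin L)))
      (fun _ => univ_nonempty) N' {i} (2 * a) (x := 8 * a) (by
        simp only [univ_inter, card_singleton, card_univ, Fintype.card_fin, sum_const, hN'c,
          nsmul_eq_mul]
        push_cast
        apply le_of_eq
        field_simp)
    rw [hpi] at this
    refine this.trans ?_
    rw [mul_assoc, mul_comm]
    refine mul_le_mul_of_nonneg_right ?_ (by positivity)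
    have h := exp_neg_four_mul_le a
    rwa [show (8 : ℝ) * a / 2 = 4 * a by ring]
  have h2 : (#F₂ : ℝ) * a ≤ 8 * a * p * #(univ : Finset (V → Fin L)) := by
    have e1 : (#F₂ : ℝ) * a ≤ ∑ f : V → Fin L, (#{v ∈ N' | f v = i ∧ bad v f} : ℝ) := by
      rw [← nsmul_eq_mul]
      refine le_trans (card_nsmul_le_sum F₂ (fun f => (#{v ∈ N' | f v = i ∧ bad v f} : ℝ)) _
        fun f hf => ?_) ?_
      · exact_mod_cast (mem_filter.1 hf).2
      · exact sum_le_sum_of_subset_of_nonneg (subset_univ _) fun _ _ _ => by positivity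
    have e2 : ∑ f : V → Fin L, #{v ∈ N' | f v = i ∧ bad v f} =
        ∑ v ∈ N', #{f : V → Fin L | f v = i ∧ bad v f} :=
      sum_card_bipartiteAbove_eq_sum_card_bipartiteBelow (fun f v => f v = i ∧ bad v f)
    have e3 : ∀ v ∈ N', (#{f : V → Fin L | f v = i ∧ bad v f} : ℝ) ≤
        p * #(univ : Finset (V → Fin L)) / L := by
      intro v hv
      rw [le_div_iff₀ hL']
      have := card_colour_independent v i (Q := bad v) (hinv v (hN' hv))
      refine le_trans (le_of_eq ?_) (hp v (hN' hv))
      rw [← this]; push_cast; ring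
    refine e1.trans ?_
    have e4 : (∑ f : V → Fin L, (#{v ∈ N' | f v = i ∧ bad v f} : ℝ)) =
        ∑ v ∈ N', (#{f : V → Fin L | f v = i ∧ bad v f} : ℝ) := by exact_mod_cast e2
    rw [e4]
    refine (sum_le_card_nsmul _ _ _ e3).trans (le_of_eq ?_)
    rw [hN'c, nsmul_eq_mul]
    push_cast
    field_simp
  have h3 : (#F₂ : ℝ) ≤ 8 * p * #(univ : Finset (V → Fin L)) :=
    le_of_mul_le_mul_right (h2.trans (le_of_eq (by ring))) ha'
  have h4 : (#{f : V → Fin L | #{v ∈ N | f v = i ∧ ¬ bad v f} ≤ k} : ℝ) ≤ #F₁ + #F₂ := by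
    exact_mod_cast (card_le_card hsub).trans (card_union_le _ _)
  linarith

end RandomChoice

section Core

variable {V κ : Type*} [Fintype V] [DecidableEq V] [Fintype κ]

open Classical in
/-- The vertex `v` has an out-neighbour in all but at most `k` of the sets `A α`. -/
def MissFew (E : V → V → Prop) (A : κ → Finset V) (k : ℕ) (v : V) : Prop :=
  #{α | ∀ a ∈ A α, ¬ E v a} ≤ k

/-- A group of gadgets together with a set `W` of further vertices, each of which leads to and is
reached from the gadgets in a robust way. -/
structure IsCore (E : V → V → Prop) (k : ℕ) (A B R I : κ → Finset V) (eh bh : κ → V)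
    (W : Finset V) : Prop where
  A_sub : ∀ α, A α ⊆ R α
  B_sub : ∀ α, B α ⊆ R α
  eh_mem : ∀ α, eh α ∈ R α
  bh_mem : ∀ α, bh α ∈ R α
  disjR : ∀ α β, α ≠ β → Disjoint (R α) (R β)
  disjI : ∀ α β, α ≠ β → Disjoint (I α) (I β)
  disjRI : ∀ α β, Disjoint (R α) (I β)
  link : ∀ α, ∀ a ∈ A α, ∀ b ∈ B α, ReachWithin E ((R α ∪ I α : Finset V) : Set V) a b
  exit : ∀ α β, ∀ p ∈ I α, E p (eh β)
  entry : ∀ α β, ∀ p ∈ I α, E (bh β) p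
  outW : ∀ w ∈ W, MissFew E A k w ∨ (∀ β, E w (eh β)) ∨
    ∃ T ⊆ W, k + 1 ≤ #T ∧ ∀ x ∈ T, E w x ∧ MissFew E A k x
  inW : ∀ w ∈ W, MissFew (flip E) B k w ∨ (∀ β, E (bh β) w) ∨
    ∃ T ⊆ W, k + 1 ≤ #T ∧ ∀ x ∈ T, E x w ∧ MissFew (flip E) B k x
  outR : ∀ α, ∀ z ∈ R α, k + 1 ≤ #(nb E W z) ∨ k + 1 ≤ #(nb E (univ.biUnion I) z)
  inR : ∀ α, ∀ z ∈ R α, k + 1 ≤ #(nb (flip E) W z) ∨ k + 1 ≤ #(nb (flip E) (univ.biUnion I) z)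

variable {E : V → V → Prop} {k : ℕ} {A B R I : κ → Finset V} {eh bh : κ → V} {W : Finset V}

lemma IsCore.rev (h : IsCore E k A B R I eh bh W) : IsCore (flip E) k B A R I bh eh W :=
  ⟨h.B_sub, h.A_sub, h.bh_mem, h.eh_mem, h.disjR, h.disjI, h.disjRI,
    fun α a ha b hb => (h.link α b hb a ha).rev, h.entry, h.exit, h.inW, h.outW, h.inR, h.outR⟩

lemma IsCore.exists_reach (hE : IsTournament E) (h : IsCore E k A B R I eh bh W)
    (hκ : k < Fintype.card κ) {Z : Finset V} (hZ : #Z ≤ k) {v : V}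
    (hv : v ∈ (univ.biUnion R ∪ univ.biUnion I ∪ W) \ Z) :
    ∃ w ∈ W, w ∉ Z ∧ MissFew E A k w ∧
      ReachWithin E (((univ.biUnion R ∪ univ.biUnion I ∪ W) \ Z : Finset V) : Set V) v w := by
  set S := univ.biUnion R ∪ univ.biUnion I ∪ W with hS
  have memW : ∀ {x}, x ∈ W → x ∉ Z → x ∈ ((S \ Z : Finset V) : Set V) := fun hx hxZ => by
    rw [mem_coe, mem_sdiff]; exact ⟨mem_union_right _ hx, hxZ⟩
  have memI : ∀ {x}, x ∈ univ.biUnion I → x ∉ Z → x ∈ ((S \ Z : Finset V) : Set V) :=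
    fun hx hxZ => by
      rw [mem_coe, mem_sdiff]; exact ⟨mem_union_left _ (mem_union_right _ hx), hxZ⟩
  have memR : ∀ {α x}, x ∈ R α → x ∉ Z → x ∈ ((S \ Z : Finset V) : Set V) :=
    fun hx hxZ => by
      rw [mem_coe, mem_sdiff]
      exact ⟨mem_union_left _ (mem_union_left _ (mem_biUnion.2 ⟨_, mem_univ _, hx⟩)), hxZ⟩
  have step : ∀ {x y}, x ∈ ((S \ Z : Finset V) : Set V) → y ∈ ((S \ Z : Finset V) : Set V) →
      E x y → (∃ w ∈ W, w ∉ Z ∧ MissFew E A k w ∧ ReachWithin E ((S \ Z : Finset V) : Set V) y w) →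
      ∃ w ∈ W, w ∉ Z ∧ MissFew E A k w ∧ ReachWithin E ((S \ Z : Finset V) : Set V) x w := by
    rintro x y hx hy hxy ⟨w, hw, hwZ, hwP, hyw⟩
    exact ⟨w, hw, hwZ, hwP, (ReachWithin.single hx hy hxy).trans hyw⟩
  have ofW : ∀ w ∈ W, w ∉ Z → ¬ (∀ β, E w (eh β)) →
      ∃ x ∈ W, x ∉ Z ∧ MissFew E A k x ∧ ReachWithin E ((S \ Z : Finset V) : Set V) w x := by
    intro w hw hwZ hn
    rcases h.outW w hw with h1 | h1 | ⟨T, hTW, hTc, hT⟩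
    · exact ⟨w, hw, hwZ, h1, ReachWithin.refl _ _ _⟩
    · exact absurd h1 hn
    · obtain ⟨x, hxT, hxZ⟩ := exists_mem_notMem_of_card_lt_card (show #Z < #T by omega)
      exact ⟨x, hTW hxT, hxZ, (hT x hxT).2,
        ReachWithin.single (memW hw hwZ) (memW (hTW hxT) hxZ) (hT x hxT).1⟩
  have ofHub : ∀ β, eh β ∉ Z →
      ∃ x ∈ W, x ∉ Z ∧ MissFew E A k x ∧ ReachWithin E ((S \ Z : Finset V) : Set V) (eh β) x := by
    intro β hβ
    rcases h.outR β _ (h.eh_mem β) with h1 | h1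
    · obtain ⟨w, hw, hwZ⟩ := exists_mem_notMem_of_card_lt_card (show #Z < #(nb E W (eh β)) by omega)
      obtain ⟨hwW, hEw⟩ := mem_nb.1 hw
      exact step (memR (h.eh_mem β) hβ) (memW hwW hwZ) hEw
        (ofW w hwW hwZ fun hp => hE.asymm hEw (hp β))
    · obtain ⟨p, hp⟩ := card_pos.1 (show 0 < #(nb E (univ.biUnion I) (eh β)) by omega)
      obtain ⟨hpI, hEp⟩ := mem_nb.1 hp
      obtain ⟨α, -, hpα⟩ := mem_biUnion.1 hpI
      exact absurd (h.exit α β p hpα) (hE.asymm hEp)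
  obtain ⟨β, hβ⟩ : ∃ β, eh β ∉ Z := by
    classical
    have hinj : Function.Injective eh := fun α β hαβ => by
      by_contra hne
      exact disjoint_left.1 (h.disjR α β hne) (h.eh_mem α) (hαβ ▸ h.eh_mem β)
    obtain ⟨x, hx, hxZ⟩ := exists_mem_notMem_of_card_lt_card (show #Z < #(univ.image eh) by
      rw [card_image_of_injective _ hinj, card_univ]; omega)
    obtain ⟨β, -, rfl⟩ := mem_image.1 hx
    exact ⟨β, hxZ⟩
  have ofW' : ∀ w ∈ W, w ∉ Z →
      ∃ x ∈ W, x ∉ Z ∧ MissFew E A k x ∧ ReachWithin E ((S \ Z : Finset V) : Set V) w x := by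
    intro w hw hwZ
    by_cases hp : ∀ β, E w (eh β)
    · exact step (memW hw hwZ) (memR (h.eh_mem β) hβ) (hp β) (ofHub β hβ)
    · exact ofW w hw hwZ hp
  have ofI : ∀ p ∈ univ.biUnion I, p ∉ Z →
      ∃ x ∈ W, x ∉ Z ∧ MissFew E A k x ∧ ReachWithin E ((S \ Z : Finset V) : Set V) p x := by
    intro p hp hpZ
    obtain ⟨α, -, hpα⟩ := mem_biUnion.1 hp
    exact step (memI hp hpZ) (memR (h.eh_mem β) hβ) (h.exit α β p hpα) (ofHub β hβ)
  obtain ⟨hvS, hvZ⟩ := mem_sdiff.1 hv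
  rcases mem_union.1 hvS with hv' | hvW
  · rcases mem_union.1 hv' with hvR | hvI
    · obtain ⟨α, -, hvα⟩ := mem_biUnion.1 hvR
      rcases h.outR α v hvα with h1 | h1
      · obtain ⟨w, hw, hwZ⟩ := exists_mem_notMem_of_card_lt_card (show #Z < #(nb E W v) by omega)
        obtain ⟨hwW, hEw⟩ := mem_nb.1 hw
        exact step (memR hvα hvZ) (memW hwW hwZ) hEw (ofW' w hwW hwZ)
      · obtain ⟨w, hw, hwZ⟩ := exists_mem_notMem_of_card_lt_card
          (show #Z < #(nb E (univ.biUnion I) v) by omega)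
        obtain ⟨hwW, hEw⟩ := mem_nb.1 hw
        exact step (memR hvα hvZ) (memI hwW hwZ) hEw (ofI w hwW hwZ)
    · exact ofI v hvI hvZ
  · exact ofW' v hvW hvZ

lemma IsCore.two_mul_le_card (hE : IsTournament E) (h : IsCore E k A B R I eh bh W)
    (hκ : k < Fintype.card κ) : 2 * k + 2 ≤ #(univ.biUnion R ∪ univ.biUnion I ∪ W) := by
  obtain ⟨α⟩ : Nonempty κ := Fintype.card_pos_iff.1 (by omega)
  set S := univ.biUnion R ∪ univ.biUnion I ∪ W with hS
  have hW : W ⊆ S := subset_union_right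
  have hI : univ.biUnion I ⊆ S := subset_union_right.trans subset_union_left
  have h1 : k + 1 ≤ #(nb E S (eh α)) := by
    rcases h.outR α _ (h.eh_mem α) with h | h
    · exact h.trans (card_le_card (nb_mono hW _))
    · exact h.trans (card_le_card (nb_mono hI _))
  have h2 : k + 1 ≤ #(nb (flip E) S (eh α)) := by
    rcases h.inR α _ (h.eh_mem α) with h | h
    · exact h.trans (card_le_card (nb_mono hW _))
    · exact h.trans (card_le_card (nb_mono hI _))
  have hd : Disjoint (nb E S (eh α)) (nb (flip E) S (eh α)) := disjoint_left.2 fun x hx hx' =>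
    hE.asymm (mem_nb.1 hx).2 (mem_nb.1 hx').2
  have h3 := card_le_card (union_subset (nb_subset E S (eh α)) (nb_subset (flip E) S (eh α)))
  rw [card_union_of_disjoint hd] at h3
  omega

lemma IsCore.stronglyKConnectedOn (hE : IsTournament E) (h : IsCore E k A B R I eh bh W)
    (hk : 1 ≤ k) (hκ : 4 * k ≤ Fintype.card κ) :
    StronglyKConnectedOn E k (univ.biUnion R ∪ univ.biUnion I ∪ W) := by
  classical
  refine ⟨by have := h.two_mul_le_card hE (by omega); omega, fun Z hZ u hu v hv => ?_⟩
  obtain ⟨w, hw, hwZ, hwP, huw⟩ := h.exists_reach hE (by omega) hZ (mem_coe.1 hu)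
  obtain ⟨x, hx, hxZ, hxM, hvx⟩ := h.rev.exists_reach hE.rev (by omega) hZ (mem_coe.1 hv)
  set S := univ.biUnion R ∪ univ.biUnion I ∪ W with hS
  let Hit : Finset κ := {α | ¬ Disjoint (R α ∪ I α) Z}
  have hHit : #Hit ≤ k := by
    have hch : ∀ α ∈ Hit, ∃ y, y ∈ (R α ∪ I α) ∧ y ∈ Z := fun α hα =>
      not_disjoint_iff.1 (mem_filter.1 hα).2
    have : Nonempty V := ⟨u⟩
    choose! y hyU hyZ using hch
    refine (card_le_card_of_injOn y (t := Z) (fun α hα => hyZ α hα)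
      fun α hα β hβ hαβ => ?_).trans hZ
    by_contra hne
    have h1 := hyU α hα
    have h2 := hyU β hβ
    rw [← hαβ] at h2
    rcases mem_union.1 h1 with h1 | h1 <;> rcases mem_union.1 h2 with h2 | h2
    · exact disjoint_left.1 (h.disjR α β hne) h1 h2
    · exact disjoint_left.1 (h.disjRI α β) h1 h2
    · exact disjoint_left.1 (h.disjRI β α) h2 h1
    · exact disjoint_left.1 (h.disjI α β hne) h1 h2
  obtain ⟨α, -, hα⟩ := exists_mem_notMem_of_card_lt_card
    (s := ({α | ∀ a ∈ A α, ¬ E w a} : Finset κ) ∪ ({α | ∀ b ∈ B α, ¬ flip E x b} : Finset κ) ∪ Hit)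
    (t := univ) (by
      rw [MissFew] at hwP hxM
      refine (card_union_le _ _).trans_lt ?_
      have h0 := card_union_le ({α | ∀ a ∈ A α, ¬ E w a} : Finset κ)
        ({α | ∀ b ∈ B α, ¬ flip E x b} : Finset κ)
      have h1 : #({α | ∀ a ∈ A α, ¬ E w a} : Finset κ) ≤ k := by convert hwP
      have h2 : #({α | ∀ b ∈ B α, ¬ flip E x b} : Finset κ) ≤ k := by convert hxM
      rw [card_univ]
      omega)
  simp only [mem_union, mem_filter, mem_univ, true_and, not_or, Hit, not_forall, not_not] at hα
  obtain ⟨⟨⟨a, ha, hwa⟩, b, hb, hbx⟩, hdis⟩ := hα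
  have hsub : ((R α ∪ I α : Finset V) : Set V) ⊆ ((S \ Z : Finset V) : Set V) := by
    intro y hy
    rw [mem_coe] at hy ⊢
    refine mem_sdiff.2 ⟨mem_union_left _ ?_, disjoint_left.1 hdis hy⟩
    rcases mem_union.1 hy with hy | hy
    · exact mem_union_left _ (mem_biUnion.2 ⟨α, mem_univ _, hy⟩)
    · exact mem_union_right _ (mem_biUnion.2 ⟨α, mem_univ _, hy⟩)
  have hmW : ∀ {y}, y ∈ W → y ∉ Z → y ∈ ((S \ Z : Finset V) : Set V) := fun hy hyZ => by
    rw [mem_coe, mem_sdiff]; exact ⟨mem_union_right _ hy, hyZ⟩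
  have haS := hsub (mem_coe.2 (mem_union_left _ (h.A_sub α ha)))
  have hbS := hsub (mem_coe.2 (mem_union_left _ (h.B_sub α hb)))
  exact huw.trans <| (ReachWithin.single (hmW hw hwZ) haS hwa).trans <|
    ((h.link α a ha b hb).mono hsub).trans <|
      (ReachWithin.single hbS (hmW hx hxZ) hbx).trans hvx.rev

/-- A vertex missing few of the sets `A α` has many out-neighbours in any set containing them. -/
lemma MissFew.card_nb (hd : ∀ α β, α ≠ β → Disjoint (A α) (A β)) {v : V} (h : MissFew E A k v)
    {S : Finset V} (hS : ∀ α, A α ⊆ S) : Fintype.card κ ≤ #(nb E S v) + k := by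
  classical
  have hch : ∀ α ∈ ({α | ¬ ∀ a ∈ A α, ¬ E v a} : Finset κ), ∃ a, a ∈ A α ∧ E v a := by
    intro α hα
    simpa using hα
  have : Nonempty V := ⟨v⟩
  choose! y hyA hyE using hch
  have h1 : #({α | ¬ ∀ a ∈ A α, ¬ E v a} : Finset κ) ≤ #(nb E S v) := by
    refine card_le_card_of_injOn y (fun α hα => mem_nb.2 ⟨hS α (hyA α hα), hyE α hα⟩)
      fun α hα β hβ hαβ => ?_
    by_contra hne
    exact disjoint_left.1 (hd α β hne) (hyA α hα) (hαβ ▸ hyA β hβ)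
  have h2 := card_filter_add_card_filter_not (s := (univ : Finset κ)) fun α => ∀ a ∈ A α, ¬ E v a
  rw [card_univ] at h2
  have h3 : #({α | ∀ a ∈ A α, ¬ E v a} : Finset κ) ≤ k := by
    rw [MissFew] at h; convert h
  omega

/-- Few vertices fail to miss few of the sets `A α`. -/
lemma card_not_missFew_le {D : Finset V} {d s : ℕ} (hκ : Fintype.card κ ≤ 4 * k)
    (hmiss : ∀ α, ∀ D' ⊆ D, (∀ v ∈ D', ∀ a ∈ A α, ¬ E v a) → #D' * 2 ^ s ≤ d)
    (hD : ∀ v ∈ D, ¬ MissFew E A k v) : #D * 2 ^ s ≤ 4 * d := by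
  classical
  have h1 : #D * (k + 1) ≤ ∑ α : κ, #{v ∈ D | ∀ a ∈ A α, ¬ E v a} := by
    have : ∑ α : κ, #{v ∈ D | ∀ a ∈ A α, ¬ E v a} =
        ∑ v ∈ D, #({α | ∀ a ∈ A α, ¬ E v a} : Finset κ) := by
      simp only [card_filter]
      rw [sum_comm]
    rw [this, ← smul_eq_mul]
    refine card_nsmul_le_sum D _ _ fun v hv => ?_
    have := hD v hv
    rw [MissFew, not_le] at this
    convert Nat.succ_le_of_lt this
  have h2 : (∑ α : κ, #{v ∈ D | ∀ a ∈ A α, ¬ E v a}) * 2 ^ s ≤ 4 * k * d := by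
    rw [sum_mul]
    refine (sum_le_card_nsmul univ _ d fun α _ =>
      hmiss α _ (filter_subset _ _) fun v hv => (mem_filter.1 hv).2).trans ?_
    rw [card_univ, smul_eq_mul]
    exact Nat.mul_le_mul_right _ hκ
  have h3 : (#D * 2 ^ s) * (k + 1) ≤ (4 * d) * (k + 1) := by
    have := (Nat.mul_le_mul_right (2 ^ s) h1).trans h2
    nlinarith
  exact Nat.le_of_mul_le_mul_right h3 (by omega)

end Core

section RandomCore

variable {V : Type*} [Fintype V] [DecidableEq V]

/-- The vertices of colour `i` under `f` contain a set `W` of vertices attached robustly to the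
set `Q`; the predicates play the roles of being well attached to a group of gadgets. -/
def GoodColour (E : V → V → Prop) (k : ℕ) (P₀ M₀ Pp Mp : V → Prop) (Vo Q J : Finset V)
    (p : V → Prop) :
    Prop :=
  ∃ W ⊆ Vo, (∀ w ∈ W, p w) ∧
    (∀ w ∈ W, P₀ w ∨ Pp w ∨ ∃ T ⊆ W, k + 1 ≤ #T ∧ ∀ x ∈ T, E w x ∧ P₀ x) ∧
    (∀ w ∈ W, M₀ w ∨ Mp w ∨ ∃ T ⊆ W, k + 1 ≤ #T ∧ ∀ x ∈ T, E x w ∧ M₀ x) ∧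
    (∀ z ∈ Q, k + 1 ≤ #(nb E W z) ∨ k + 1 ≤ #(nb E J z)) ∧
    ∀ z ∈ Q, k + 1 ≤ #(nb (flip E) W z) ∨ k + 1 ≤ #(nb (flip E) J z)

open Classical in
lemma card_not_goodColour_le {E : V → V → Prop} (hE : IsTournament E) {k L a : ℕ} (hL : 0 < L)
    (ha : 0 < a) (hka : k ≤ a) {P₀ M₀ Pp Mp : V → Prop} {Vo Q J : Finset V} (i : Fin L)
    (hM : ∀ v ∈ Vo, ¬ M₀ v → Mp v ∨ 8 * a * L ≤ #{u ∈ Vo | E u v ∧ P₀ u ∧ M₀ u})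
    (hP : ∀ v ∈ Vo, ¬ P₀ v → Pp v ∨ 8 * a * L ≤ #{u ∈ Vo | E v u ∧ P₀ u})
    (hQP : ∀ z ∈ Q, k + 1 ≤ #(nb E J z) ∨ 8 * a * L ≤ #(nb E Vo z))
    (hQM : ∀ z ∈ Q, k + 1 ≤ #(nb (flip E) J z) ∨ 8 * a * L ≤ #(nb (flip E) Vo z)) :
    (#{f : V → Fin L | ¬ GoodColour E k P₀ M₀ Pp Mp Vo Q J fun v => f v = i} : ℝ) ≤
      162 * #Q * (1 / 8) ^ a * #(univ : Finset (V → Fin L)) := by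
  set c : ℝ := ((#(univ : Finset (V → Fin L)) : ℕ) : ℝ) with hc
  set q : ℝ := (1 / 8) ^ a with hq
  have hq0 : 0 ≤ q := by positivity
  have hc0 : 0 ≤ c := by positivity
  let N₁ : V → Finset V := fun v => {u ∈ Vo | E u v ∧ P₀ u ∧ M₀ u}
  let ok₁ : V → (V → Fin L) → Prop := fun v f =>
    M₀ v ∨ Mp v ∨ k + 1 ≤ #{u ∈ N₁ v | f u = i}
  let N₂ : V → Finset V := fun v => {u ∈ Vo | E v u ∧ P₀ u}
  let ok₂ : V → (V → Fin L) → Prop := fun v f =>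
    ok₁ v f ∧ (P₀ v ∨ Pp v ∨ k + 1 ≤ #{u ∈ N₂ v | f u = i ∧ ¬ ¬ ok₁ u f})
  have inv₁ : ∀ x v, ¬ (E x v ∧ P₀ x) → ∀ f j, ok₁ v (Function.update f x j) ↔ ok₁ v f := by
    intro x v hx f j
    have : ({u ∈ N₁ v | Function.update f x j u = i} : Finset V) = {u ∈ N₁ v | f u = i} := by
      refine filter_congr fun u hu => ?_
      obtain ⟨-, hEu, hPu, -⟩ := mem_filter.1 hu
      rw [Function.update_of_ne]
      rintro rfl
      exact hx ⟨hEu, hPu⟩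
    simp only [ok₁, this]
  have inv₂ : ∀ v f j, ok₂ v (Function.update f v j) ↔ ok₂ v f := by
    intro v f j
    simp only [ok₂, inv₁ v v (fun h => hE.1 v h.1)]
    by_cases hPv : P₀ v
    · simp [hPv]
    have : ({u ∈ N₂ v | Function.update f v j u = i ∧ ¬ ¬ ok₁ u (Function.update f v j)} :
        Finset V) = {u ∈ N₂ v | f u = i ∧ ¬ ¬ ok₁ u f} := by
      refine filter_congr fun u hu => ?_
      obtain ⟨-, hEu, -⟩ := mem_filter.1 hu
      rw [Function.update_of_ne (hE.ne hEu).symm, inv₁ v u (fun h => hPv h.2)]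
    simp only [this]
  have pr₁ : ∀ v ∈ Vo, (#{f | ¬ ok₁ v f} : ℝ) ≤ q * c := by
    intro v hv
    by_cases h0 : M₀ v ∨ Mp v
    · have : ({f | ¬ ok₁ v f} : Finset (V → Fin L)) = ∅ := by
        refine filter_eq_empty_iff.2 fun f _ => not_not.2 ?_
        rcases h0 with h0 | h0
        · exact Or.inl h0
        · exact Or.inr (Or.inl h0)
      rw [this]
      simpa using mul_nonneg hq0 hc0
    · push Not at h0
      have hN := (hM v hv h0.1).resolve_left h0.2
      have := card_few_good_le hL ha hka i hN (p := 0) (fun _ _ => False) (fun _ _ _ _ => Iff.rfl)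
        (by simp)
      simp only [not_false_eq_true, and_true, mul_zero, add_zero] at this
      refine le_trans (Nat.cast_le.2 (card_le_card fun f hf => ?_)) this
      simp only [mem_filter, mem_univ, true_and, ok₁, not_or, not_le, N₁] at hf ⊢
      omega
  have pr₂ : ∀ v ∈ Vo, (#{f | ¬ ok₂ v f} : ℝ) ≤ 10 * q * c := by
    intro v hv
    by_cases h0 : P₀ v ∨ Pp v
    · refine le_trans (Nat.cast_le.2 (card_le_card fun f hf => ?_)) ((pr₁ v hv).trans ?_)
      · simp only [mem_filter, mem_univ, true_and, ok₂] at hf ⊢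
        tauto
      · nlinarith [mul_nonneg hq0 hc0]
    · push Not at h0
      have hN := (hP v hv h0.1).resolve_left h0.2
      have := card_few_good_le hL ha hka i hN (p := q) (fun u f => ¬ ok₁ u f)
        (fun u hu f j => not_congr (inv₁ u u (fun h => hE.1 u h.1) f j))
        (fun u hu => pr₁ u (mem_filter.1 hu).1)
      have hU : (#{f | ¬ ok₂ v f} : ℝ) ≤ #{f | ¬ ok₁ v f} +
          #{f : V → Fin L | #{u ∈ N₂ v | f u = i ∧ ¬ ¬ ok₁ u f} ≤ k} := by
        rw [← Nat.cast_add]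
        refine Nat.cast_le.2 ((card_le_card fun f hf => ?_).trans (card_union_le _ _))
        simp only [mem_filter, mem_univ, true_and, mem_union, ok₂, not_and_or, not_or,
          not_le] at hf ⊢
        rcases hf with hf | hf
        · exact Or.inl hf
        · right; have := hf.2.2; omega
      have := hU.trans (add_le_add (pr₁ v hv) this)
      linarith
  let W : (V → Fin L) → Finset V := fun f => {v ∈ Vo | f v = i ∧ ok₂ v f}
  have pr₃ : ∀ F : V → V → Prop, ∀ z, 8 * a * L ≤ #(nb F Vo z) →
      (#{f | #(nb F (W f) z) ≤ k} : ℝ) ≤ 81 * q * c := by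
    intro F z hN
    have := card_few_good_le hL ha hka i hN (p := 10 * q) (fun u f => ¬ ok₂ u f)
        (fun u hu f j => not_congr (inv₂ u f j)) (fun u hu => pr₂ u (mem_nb.1 hu).1)
    refine le_trans (Nat.cast_le.2 (card_le_card fun f hf => ?_)) (this.trans (le_of_eq (by ring)))
    simp only [mem_filter, mem_univ, true_and] at hf ⊢
    refine le_trans (card_le_card fun u hu => ?_) hf
    simp only [mem_filter, mem_nb, not_not, W] at hu ⊢
    tauto
  have good : ∀ f, (∀ z ∈ Q, k + 1 ≤ #(nb E (W f) z) ∨ k + 1 ≤ #(nb E J z)) →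
      (∀ z ∈ Q, k + 1 ≤ #(nb (flip E) (W f) z) ∨ k + 1 ≤ #(nb (flip E) J z)) →
      GoodColour E k P₀ M₀ Pp Mp Vo Q J fun v => f v = i := by
    intro f h1 h2
    refine ⟨W f, filter_subset _ _, fun w hw => (mem_filter.1 hw).2.1, fun w hw => ?_,
      fun w hw => ?_, h1, h2⟩
    · rcases (mem_filter.1 hw).2.2.2 with h | h | h
      · exact Or.inl h
      · exact Or.inr (Or.inl h)
      · refine Or.inr (Or.inr ⟨_, fun u hu => ?_, h, fun u hu => ?_⟩)
        · simp only [mem_filter, W, N₂, not_not, ok₂] at hu ⊢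
          tauto
        · simp only [mem_filter, N₂] at hu
          exact hu.1.2
    · rcases (mem_filter.1 hw).2.2.1 with h | h | h
      · exact Or.inl h
      · exact Or.inr (Or.inl h)
      · refine Or.inr (Or.inr ⟨_, fun u hu => ?_, h, fun u hu => ?_⟩)
        · simp only [mem_filter, W, N₁, ok₂, ok₁] at hu ⊢
          tauto
        · simp only [mem_filter, N₁] at hu
          tauto
  have pr₄ : ∀ F : V → V → Prop, (∀ z ∈ Q, k + 1 ≤ #(nb F J z) ∨ 8 * a * L ≤ #(nb F Vo z)) →
      ∀ z ∈ Q, (#{f | ¬ (k + 1 ≤ #(nb F (W f) z) ∨ k + 1 ≤ #(nb F J z))} : ℝ) ≤ 81 * q * c := by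
    intro F hF z hz
    rcases hF z hz with h | h
    · simp only [h, or_true, not_true_eq_false, filter_false, card_empty, Nat.cast_zero]
      positivity
    · refine le_trans (Nat.cast_le.2 (card_le_card fun f hf => ?_)) (pr₃ F z h)
      simp only [mem_filter, mem_univ, true_and, not_or, not_le] at hf ⊢
      omega
  have hsub : ({f | ¬ GoodColour E k P₀ M₀ Pp Mp Vo Q J fun v => f v = i} : Finset (V → Fin L)) ⊆
      (Q.biUnion fun z => {f | ¬ (k + 1 ≤ #(nb E (W f) z) ∨ k + 1 ≤ #(nb E J z))}) ∪
      Q.biUnion fun z => {f | ¬ (k + 1 ≤ #(nb (flip E) (W f) z) ∨ k + 1 ≤ #(nb (flip E) J z))} := by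
    intro f hf
    by_contra hcon
    simp only [mem_union, mem_biUnion, mem_filter, mem_univ, true_and, not_or, not_exists,
      not_and, not_not] at hcon hf
    refine hf (good f (fun z hz => ?_) fun z hz => ?_)
    · have := hcon.1 z hz
      tauto
    · have := hcon.2 z hz
      tauto
  have hb : ∀ F : V → V → Prop, (∀ z ∈ Q, k + 1 ≤ #(nb F J z) ∨ 8 * a * L ≤ #(nb F Vo z)) →
      (#(Q.biUnion fun z => {f | ¬ (k + 1 ≤ #(nb F (W f) z) ∨ k + 1 ≤ #(nb F J z))}) : ℝ) ≤
        #Q * (81 * q * c) := by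
    intro F hF
    refine (Nat.cast_le.2 card_biUnion_le).trans ?_
    rw [Nat.cast_sum]
    simpa using sum_le_card_nsmul Q _ _ (pr₄ F hF)
  refine (Nat.cast_le.2 ((card_le_card hsub).trans (card_union_le _ _))).trans ?_
  rw [Nat.cast_add]
  refine (add_le_add (hb E hQP) (hb (flip E) hQM)).trans (le_of_eq (by ring))

end RandomCore

section SparseFamily

variable {V ι κ : Type*} [Fintype V] [DecidableEq V]

lemma GadgetFamily.comp {E : V → V → Prop} {s : ℕ} {Exc : Finset V} {A B R I : ι → Finset V}
    {eh bh : ι → V} {dP dM : ℕ} (h : GadgetFamily E s Exc A B R I eh bh dP dM) {g : κ → ι}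
    (hg : Function.Injective g) :
    GadgetFamily E s Exc (A ∘ g) (B ∘ g) (R ∘ g) (I ∘ g) (eh ∘ g) (bh ∘ g) dP dM where
  A_sub α := h.A_sub _
  B_sub α := h.B_sub _
  eh_mem α := h.eh_mem _
  bh_mem α := h.bh_mem _
  card_R α := h.card_R _
  disjR α β hne := h.disjR _ _ (hg.ne hne)
  disjI α β hne := h.disjI _ _ (hg.ne hne)
  disjRI α β := h.disjRI _ _
  R_exc α := h.R_exc _
  I_exc α := h.I_exc _
  link α := h.link _
  exit α β := h.exit _ _
  entry α β := h.entry _ _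
  degP := h.degP
  degM := h.degM
  missP α := h.missP _
  missM α := h.missM _
  fewP v hv _ := by
    by_cases hI : ∀ α, v ∉ I α
    · exact (h.fewP v hv hI).imp (fun h β => h _) fun h β => h _
    · push Not at hI
      obtain ⟨α, hα⟩ := hI
      exact Or.inl fun β => h.exit _ _ _ hα
  fewM v hv _ := by
    by_cases hI : ∀ α, v ∉ I α
    · exact (h.fewM v hv hI).imp (fun h β => h _) fun h β => h _
    · push Not at hI
      obtain ⟨α, hα⟩ := hI
      exact Or.inl fun β => h.entry _ _ _ hα

lemma sum_card_nb_le {I : ι → Finset V} (hI : ∀ α β, α ≠ β → Disjoint (I α) (I β))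
    (E : V → V → Prop) (v : V) (S : Finset ι) : ∑ β ∈ S, #(nb E (I β) v) ≤ #(nb E univ v) := by
  classical
  rw [← card_biUnion fun α _ β _ hne => (hI α β hne).mono (nb_subset _ _ _) (nb_subset _ _ _)]
  exact card_le_card (biUnion_subset.2 fun β _ => nb_mono (subset_univ _) v)

/-- A large family of disjoint sets `I α` has a subfamily such that each vertex of `R α` has only
a small proportion of its neighbours in the other sets. -/
lemma exists_sparse_family [Fintype ι] [Fintype κ] [Nonempty κ] {R I : ι → Finset V}
    (hI : ∀ α β, α ≠ β → Disjoint (I α) (I β)) {w : ℕ} (hR : ∀ α, #(R α) ≤ w)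
    (hw : 1 ≤ w) (hι : 33 * w * Fintype.card κ ≤ Fintype.card ι) (E : V → V → Prop) :
    ∃ g : κ → ι, Function.Injective g ∧ ∀ α, ∀ z ∈ R (g α), ∀ T : Finset κ, α ∉ T →
      4 * ∑ β ∈ T, #(nb E (I (g β)) z) ≤ #(nb E univ z) ∧
      4 * ∑ β ∈ T, #(nb (flip E) (I (g β)) z) ≤ #(nb (flip E) univ z) := by
  classical
  let r : (V → V → Prop) → V → ι → ℝ := fun F z β => (#(nb F (I β) z) : ℝ) / #(nb F univ z)
  have hr0 : ∀ F z β, 0 ≤ r F z β := fun F z β => by positivity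
  have hr1 : ∀ F z (S : Finset ι), ∑ β ∈ S, r F z β ≤ 1 := fun F z S => by
    rw [← sum_div]
    refine div_le_one_of_le₀ ?_ (by positivity)
    exact_mod_cast sum_card_nb_le hI F z S
  let f : ι → ι → ℝ := fun α β => if α = β then 0 else ∑ z ∈ R α, (r E z β + r (flip E) z β)
  have hf : ∀ α β, 0 ≤ f α β := fun α β => by
    simp only [f]
    split_ifs
    · exact le_rfl
    · exact sum_nonneg fun z _ => add_nonneg (hr0 _ _ _) (hr0 _ _ _)
  have hκ : 1 ≤ Fintype.card κ := Fintype.card_pos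
  have hρ : ∀ α ∈ (univ : Finset ι), ∑ β, f α β ≤ 2 * w := by
    intro α _
    calc ∑ β, f α β ≤ ∑ β, ∑ z ∈ R α, (r E z β + r (flip E) z β) := by
          refine sum_le_sum fun β _ => ?_
          simp only [f]
          split_ifs
          · exact sum_nonneg fun z _ => add_nonneg (hr0 _ _ _) (hr0 _ _ _)
          · exact le_rfl
      _ = ∑ z ∈ R α, (∑ β, r E z β + ∑ β, r (flip E) z β) := by
          rw [sum_comm]
          simp only [sum_add_distrib]
      _ ≤ ∑ z ∈ R α, (2 : ℝ) :=
        sum_le_sum fun z _ => by linarith [hr1 E z univ, hr1 (flip E) z univ]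
      _ = #(R α) * 2 := by simp
      _ ≤ 2 * w := by
          have : (#(R α) : ℝ) ≤ w := by exact_mod_cast hR α
          linarith
  have hιR : (33 : ℝ) * w * Fintype.card κ ≤ Fintype.card ι := by exact_mod_cast hι
  have hwR : (1 : ℝ) ≤ w := by exact_mod_cast hw
  have hκR : (1 : ℝ) ≤ Fintype.card κ := by exact_mod_cast hκ
  obtain ⟨S, -, hSc, hS⟩ := exists_sparse_subset (f := f) (U := univ) (by simp [f]) hf
    (θ := 1 / 4) (by norm_num) hρ hκ (by rw [card_univ]; nlinarith) (by
      rw [card_univ]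
      nlinarith)
  let e : κ ≃ S := (Fintype.equivFin κ).trans (S.equivFinOfCardEq hSc).symm
  refine ⟨fun α => e α, Subtype.val_injective.comp e.injective, fun α z hz T hT => ?_⟩
  have key : ∀ F, (F = E ∨ F = flip E) →
      4 * ∑ β ∈ T, #(nb F (I (e β)) z) ≤ #(nb F univ z) := by
    intro F hF
    have h1 : ∑ β ∈ T, r F z (e β) ≤ 1 / 4 := by
      refine le_trans ?_ (hS (e α) (e α).2)
      have h2 : ∑ β ∈ T, r F z (e β) ≤ ∑ β ∈ T, f (e α) (e β) := by
        refine sum_le_sum fun β hβ => ?_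
        have hne : ((e α : S) : ι) ≠ e β := by
          intro hcon
          exact hT ((e.injective (Subtype.ext hcon)) ▸ hβ)
        simp only [f, hne, if_false]
        refine le_trans ?_ (single_le_sum (f := fun z => r E z (e β) + r (flip E) z (e β))
          (fun z _ => add_nonneg (hr0 _ _ _) (hr0 _ _ _)) hz)
        rcases hF with rfl | rfl
        · exact le_add_of_nonneg_right (hr0 _ _ _)
        · exact le_add_of_nonneg_left (hr0 _ _ _)
      refine h2.trans ?_
      rw [← sum_image (f := fun b => f (e α) b) (g := fun β => ((e β : S) : ι))
        (fun x _ y _ hxy => e.injective (Subtype.ext hxy))]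
      refine sum_le_sum_of_subset_of_nonneg (fun b hb => ?_) fun b _ _ => hf _ _
      obtain ⟨β, -, rfl⟩ := mem_image.1 hb
      exact (e β).2
    simp only [r, ← sum_div] at h1
    by_cases h0 : #(nb F univ z) = 0
    · have : ∑ β ∈ T, #(nb F (I (e β)) z) = 0 := sum_eq_zero fun β _ =>
        Nat.eq_zero_of_le_zero (h0 ▸ card_le_card (nb_mono (subset_univ _) z))
      omega
    · have hpos : (0 : ℝ) < #(nb F univ z) := by exact_mod_cast Nat.pos_of_ne_zero h0
      rw [div_le_iff₀ hpos] at h1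
      have : (4 : ℝ) * ∑ β ∈ T, (#(nb F (I (e β)) z) : ℝ) ≤ #(nb F univ z) := by linarith
      exact_mod_cast this
  exact ⟨key E (Or.inl rfl), key (flip E) (Or.inr rfl)⟩

end SparseFamily

section ExistsCores

variable {V : Type*} [Fintype V] [DecidableEq V]

lemma exists_mem_few_bad {α ι : Type*} [Fintype α] [Nonempty α] [Fintype ι] (bad : ι → α → Prop)
    [∀ i a, Decidable (bad i a)] {p : ℝ}
    (h : ∀ i, (#{a | bad i a} : ℝ) ≤ p * Fintype.card α) :
    ∃ a, (#{i | bad i a} : ℝ) ≤ p * Fintype.card ι := by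
  by_contra! hcon
  have h1 : ∑ a : α, #{i | bad i a} = ∑ i : ι, #{a | bad i a} := by
    simp only [card_filter]
    rw [sum_comm]
  have h2 : ∑ _a : α, p * Fintype.card ι < ∑ a : α, (#{i | bad i a} : ℝ) :=
    sum_lt_sum_of_nonempty univ_nonempty fun a _ => hcon a
  have h3 : ∑ i : ι, (#{a | bad i a} : ℝ) ≤ ∑ _i : ι, p * Fintype.card α :=
    sum_le_sum fun i _ => h i
  have h4 : ∑ a : α, (#{i | bad i a} : ℝ) = ∑ i : ι, (#{a | bad i a} : ℝ) := by exact_mod_cast h1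
  simp only [sum_const, card_univ, nsmul_eq_mul] at h2 h3
  rw [h4] at h2
  nlinarith

lemma failure_le_half {k : ℕ} (hk : 1 ≤ k) :
    (162 : ℝ) * (352 * k) * (1 / 8) ^ (100 * k) ≤ 1 / 2 := by
  have h1 : (k : ℝ) ≤ 2 ^ k := by exact_mod_cast k.lt_two_pow_self.le
  have h2 : ((1 : ℝ) / 8) ^ (100 * k) ≤ (1 / 8) ^ 50 * (1 / 2) ^ k := by
    calc ((1 : ℝ) / 8) ^ (100 * k) = ((1 / 8) ^ 50) ^ k * ((1 / 8) ^ 50) ^ k := by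
          rw [← pow_mul, ← pow_add]; congr 1; ring
      _ ≤ (1 / 8) ^ 50 * (1 / 2) ^ k := by
          refine mul_le_mul (pow_le_of_le_one (by positivity) (by norm_num) (by omega))
            (pow_le_pow_left₀ (by positivity) (by norm_num) k) (by positivity) (by positivity)
  have h3 : (2 : ℝ) ^ k * (1 / 2) ^ k = 1 := by rw [← mul_pow]; norm_num
  calc (162 : ℝ) * (352 * k) * (1 / 8) ^ (100 * k)
      ≤ 162 * (352 * 2 ^ k) * ((1 / 8) ^ 50 * (1 / 2) ^ k) := by gcongr
    _ = 162 * 352 * (1 / 8) ^ 50 * (2 ^ k * (1 / 2) ^ k) := by ring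
    _ ≤ 1 / 2 := by rw [h3]; norm_num

lemma card_le_small_large {ι : Type*} [DecidableEq ι] {S : Finset ι} {C : ι → Finset V}
    (hd : ∀ i ∈ S, ∀ j ∈ S, i ≠ j → Disjoint (C i) (C j)) (m : ℕ) :
    #{i ∈ S | Fintype.card V < #(C i) * m} ≤ m := by
  have h1 : #{i ∈ S | Fintype.card V < #(C i) * m} * (Fintype.card V + 1) ≤
      ∑ i ∈ S with Fintype.card V < #(C i) * m, #(C i) * m := by
    rw [← smul_eq_mul]
    exact card_nsmul_le_sum _ _ _ fun i hi => (mem_filter.1 hi).2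
  have h2 : ∑ i ∈ S with Fintype.card V < #(C i) * m, #(C i) ≤ Fintype.card V := by
    rw [← card_biUnion fun i hi j hj hne => hd i (mem_filter.1 hi).1 j (mem_filter.1 hj).1 hne]
    exact card_le_univ _
  rw [← sum_mul] at h1
  have h3 := h1.trans (Nat.mul_le_mul_right m h2)
  by_contra! hcon
  nlinarith

/-- Many vertices remain in the neighbourhood of a vertex outside all internal sets of gadgets. -/
lemma card_nb_univ_le_of_partition {F : V → V → Prop} {Exc J Vo : Finset V}
    (hVo : univ \ (Exc ∪ J) ⊆ Vo) (v : V) :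
    #(nb F univ v) ≤ #Exc + #(nb F J v) + #(nb F Vo v) := by
  have h1 : nb F univ v ⊆ (Exc ∪ nb F J v) ∪ nb F Vo v := by
    intro u hu
    have hF := (mem_nb.1 hu).2
    by_cases h : u ∈ Exc ∪ J
    · rcases mem_union.1 h with h | h
      · exact mem_union_left _ (mem_union_left _ h)
      · exact mem_union_left _ (mem_union_right _ (mem_nb.2 ⟨h, hF⟩))
    · exact mem_union_right _ (mem_nb.2 ⟨hVo (by simpa using h), hF⟩)
  refine (card_le_card h1).trans ((card_union_le _ _).trans ?_)
  have := card_union_le Exc (nb F J v)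
  omega

lemma exists_cores_of_sparse {E : V → V → Prop} (hE : IsTournament E) {k t M K L : ℕ} (hk : 1 ≤ k)
    (ht : 1 ≤ t) (hM : 1 ≤ M) (hL : L = 4 * M * t) {Exc : Finset V}
    {A B R I : Fin L × Fin (4 * k) → Finset V} {eh bh : Fin L × Fin (4 * k) → V} {dP dM : ℕ}
    (G : GadgetFamily E 40 Exc A B R I eh bh dP dM)
    (hsp : ∀ α, ∀ z ∈ R α, ∀ T : Finset (Fin L × Fin (4 * k)), α ∉ T →
      4 * ∑ β ∈ T, #(nb E (I β) z) ≤ #(nb E univ z) ∧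
      4 * ∑ β ∈ T, #(nb (flip E) (I β) z) ≤ #(nb (flip E) univ z))
    (hK : 2 * #Exc + 16000 * (k * M * t) ≤ K) (hKP : K ≤ dP) (hPM : dP ≤ dM)
    (hV : ∀ v, K + 1 ≤ #(nb E univ v) ∧ K + 1 ≤ #(nb (flip E) univ v)) :
    ∃ C : Fin t → Finset V, (∀ i j, i ≠ j → Disjoint (C i) (C j)) ∧
      (∀ i, StronglyKConnectedOn E k (C i)) ∧ (∀ i, 2 * k + 2 ≤ #(C i)) ∧
      (∀ i, #(C i) * (M * t) ≤ Fintype.card V) ∧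
      (∀ i, ∀ D : Finset V, (∀ v ∈ D, v ∉ Exc ∧ #(nb E (C i) v) ≤ k) → #D * 2 ^ 38 ≤ dP) ∧
      ∀ i, ∀ D : Finset V, (∀ v ∈ D, v ∉ Exc ∧ #(nb (flip E) (C i) v) ≤ k) →
        #D * 2 ^ 38 ≤ dM := by
  classical
  have hkMt : 1 ≤ k * M * t := Nat.mul_pos (Nat.mul_pos hk hM) ht
  have hL0 : 0 < L := by subst hL; positivity
  have h8aL : 8 * (100 * k) * L = 3200 * (k * M * t) := by subst hL; ring
  have hk' : k ≤ k * M * t := by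
    rw [mul_assoc]; exact Nat.le_mul_of_pos_right _ (Nat.mul_pos hM ht)
  have hcard : Fintype.card (Fin L × Fin (4 * k)) = 16 * (k * M * t) := by
    simp only [Fintype.card_prod, Fintype.card_fin]; subst hL; ring
  let J : Fin L → Finset V := fun i => univ.biUnion fun j => I (i, j)
  let Q : Fin L → Finset V := fun i => univ.biUnion fun j => R (i, j)
  let Vo : Finset V := univ \ (Exc ∪ univ.biUnion I)
  let P₀ : Fin L → V → Prop := fun i => MissFew E (fun j => A (i, j)) k
  let M₀ : Fin L → V → Prop := fun i => MissFew (flip E) (fun j => B (i, j)) k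
  have hVoE : ∀ v ∈ Vo, v ∉ Exc := fun v hv h => (mem_sdiff.1 hv).2 (mem_union_left _ h)
  have hVoI : ∀ v ∈ Vo, ∀ α, v ∉ I α := fun v hv α h =>
    (mem_sdiff.1 hv).2 (mem_union_right _ (mem_biUnion.2 ⟨α, mem_univ _, h⟩))
  have notP : ∀ i, ∀ D : Finset V, (∀ v ∈ D, v ∉ Exc ∧ ¬ P₀ i v) → #D * 2 ^ 40 ≤ 4 * dP := by
    intro i D hD
    refine card_not_missFew_le (by simp) (fun j D' hD' h => G.missP (i, j) D' fun v hv =>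
      ⟨(hD v (hD' hv)).1, h v hv⟩) fun v hv => (hD v hv).2
  have notM : ∀ i, ∀ D : Finset V, (∀ v ∈ D, v ∉ Exc ∧ ¬ M₀ i v) → #D * 2 ^ 40 ≤ 4 * dM := by
    intro i D hD
    refine card_not_missFew_le (by simp) (fun j D' hD' h => G.missM (i, j) D' fun v hv =>
      ⟨(hD v (hD' hv)).1, h v hv⟩) fun v hv => (hD v hv).2
  have few : ∀ (F : V → V → Prop) v, (∀ β, #(nb F (I β) v) ≤ 3) →
      #(nb F (univ.biUnion I) v) ≤ 48 * (k * M * t) := by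
    intro F v h
    have h1 : nb F (univ.biUnion I) v ⊆ univ.biUnion fun β => nb F (I β) v := by
      intro u hu
      obtain ⟨hu, hF⟩ := mem_nb.1 hu
      obtain ⟨β, -, hβ⟩ := mem_biUnion.1 hu
      exact mem_biUnion.2 ⟨β, mem_univ _, mem_nb.2 ⟨hβ, hF⟩⟩
    refine ((card_le_card h1).trans (card_biUnion_le.trans
      (sum_le_card_nsmul _ _ 3 fun β _ => h β))).trans ?_
    rw [card_univ, hcard, smul_eq_mul]
    omega
  have special : ∀ F : V → V → Prop, (∀ v, K + 1 ≤ #(nb F univ v)) →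
      (∀ α, ∀ z ∈ R α, ∀ T : Finset (Fin L × Fin (4 * k)), α ∉ T →
        4 * ∑ β ∈ T, #(nb F (I β) z) ≤ #(nb F univ z)) → ∀ i, ∀ z ∈ Q i,
      k + 1 ≤ #(nb F (J i) z) ∨ 8 * (100 * k) * L ≤ #(nb F Vo z) := by
    intro F hF hs i z hz
    refine or_iff_not_imp_left.2 fun hlt => ?_
    obtain ⟨j, -, hj⟩ := mem_biUnion.1 hz
    have h1 := hs _ z hj (univ.erase (i, j)) (notMem_erase _ _)
    have h2 := card_nb_univ_le_of_partition (F := F) (Exc := Exc) (J := univ.biUnion I)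
      (Vo := Vo) subset_rfl z
    have h3 : nb F (univ.biUnion I) z ⊆
        nb F (J i) z ∪ (univ.erase (i, j)).biUnion fun β => nb F (I β) z := by
      intro u hu
      obtain ⟨hu, hF⟩ := mem_nb.1 hu
      obtain ⟨β, -, hβ⟩ := mem_biUnion.1 hu
      by_cases hb : β = (i, j)
      · subst hb
        exact mem_union_left _ (mem_nb.2 ⟨mem_biUnion.2 ⟨j, mem_univ _, hβ⟩, hF⟩)
      · exact mem_union_right _ (mem_biUnion.2 ⟨β, mem_erase.2 ⟨hb, mem_univ _⟩,
          mem_nb.2 ⟨hβ, hF⟩⟩)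
    have h4 := (card_le_card h3).trans ((card_union_le _ _).trans
      (Nat.add_le_add_left card_biUnion_le _))
    have h5 := hF z
    omega
  have good : ∀ i, (#{f : V → Fin L | ¬ GoodColour E k (P₀ i) (M₀ i) (fun v => ∀ j, E v (eh (i, j)))
      (fun v => ∀ j, E (bh (i, j)) v) Vo (Q i) (J i) fun v => f v = i} : ℝ) ≤
        1 / 2 * Fintype.card (V → Fin L) := by
    intro i
    have h1 := card_not_goodColour_le hE hL0 (show 0 < 100 * k by omega) (show k ≤ 100 * k by omega)
      (P₀ := P₀ i) (M₀ := M₀ i) (Pp := fun v => ∀ j, E v (eh (i, j)))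
      (Mp := fun v => ∀ j, E (bh (i, j)) v) (Vo := Vo) (Q := Q i) (J := J i) i
      (by
        intro v hv _
        rcases G.fewM v (hVoE v hv) (hVoI v hv) with h | h
        · exact Or.inl fun j => h _
        · right
          have h2 := G.degM v (hVoE v hv)
          have h3 := card_nb_univ_le_of_partition (F := flip E) (Exc := Exc) (J := univ.biUnion I)
            (Vo := Vo) subset_rfl v
          have h4 := few _ v h
          have h5 := notP i {u ∈ Vo | ¬ P₀ i u} fun u hu =>
            ⟨hVoE u (mem_filter.1 hu).1, (mem_filter.1 hu).2⟩
          have h6 := notM i {u ∈ Vo | ¬ M₀ i u} fun u hu =>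
            ⟨hVoE u (mem_filter.1 hu).1, (mem_filter.1 hu).2⟩
          have h7 : nb (flip E) Vo v ⊆ {u ∈ Vo | E u v ∧ P₀ i u ∧ M₀ i u} ∪
              ({u ∈ Vo | ¬ P₀ i u} ∪ {u ∈ Vo | ¬ M₀ i u}) := by
            intro u hu
            obtain ⟨hu, hF⟩ := mem_nb.1 hu
            simp only [mem_union, mem_filter, hu, true_and, show E u v from hF]
            tauto
          have h8 := (card_le_card h7).trans ((card_union_le _ _).trans
            (Nat.add_le_add_left (card_union_le _ _) _))
          rw [h8aL]
          omega)
      (by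
        intro v hv _
        rcases G.fewP v (hVoE v hv) (hVoI v hv) with h | h
        · exact Or.inl fun j => h _
        · right
          have h2 := G.degP v (hVoE v hv)
          have h3 := card_nb_univ_le_of_partition (F := E) (Exc := Exc) (J := univ.biUnion I)
            (Vo := Vo) subset_rfl v
          have h4 := few _ v h
          have h5 := notP i {u ∈ Vo | ¬ P₀ i u} fun u hu =>
            ⟨hVoE u (mem_filter.1 hu).1, (mem_filter.1 hu).2⟩
          have h7 : nb E Vo v ⊆ {u ∈ Vo | E v u ∧ P₀ i u} ∪ {u ∈ Vo | ¬ P₀ i u} := by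
            intro u hu
            obtain ⟨hu, hF⟩ := mem_nb.1 hu
            simp only [mem_union, mem_filter, hu, true_and, hF]
            tauto
          have h8 := (card_le_card h7).trans (card_union_le _ _)
          rw [h8aL]
          omega)
      (special E (fun v => (hV v).1) (fun α z hz T hT => (hsp α z hz T hT).1) i)
      (special (flip E) (fun v => (hV v).2) (fun α z hz T hT => (hsp α z hz T hT).2) i)
    have h2 : (#(Q i) : ℝ) ≤ 352 * k := by
      have : #(Q i) ≤ 352 * k := by
        refine card_biUnion_le.trans ((sum_le_card_nsmul _ _ 88 fun j _ => G.card_R _).trans ?_)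
        simp only [card_univ, Fintype.card_fin, smul_eq_mul]
        omega
      exact_mod_cast this
    rw [card_univ] at h1
    convert h1.trans _ using 1
    refine mul_le_mul_of_nonneg_right (le_trans ?_ (failure_le_half hk)) (by positivity)
    gcongr
  have : Nonempty (Fin L) := ⟨⟨0, hL0⟩⟩
  obtain ⟨f, hf⟩ := exists_mem_few_bad _ good
  set S : Finset (Fin L) := {i | GoodColour E k (P₀ i) (M₀ i) (fun v => ∀ j, E v (eh (i, j)))
      (fun v => ∀ j, E (bh (i, j)) v) Vo (Q i) (J i) fun v => f v = i} with hS
  have hSc : 2 * (M * t) ≤ #S := by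
    have h1 := card_filter_add_card_filter_not (s := (univ : Finset (Fin L))) fun i =>
      GoodColour E k (P₀ i) (M₀ i) (fun v => ∀ j, E v (eh (i, j)))
      (fun v => ∀ j, E (bh (i, j)) v) Vo (Q i) (J i) fun v => f v = i
    rw [card_univ, Fintype.card_fin] at h1
    have h2 : (#S : ℝ) + #{i | ¬ GoodColour E k (P₀ i) (M₀ i) (fun v => ∀ j, E v (eh (i, j)))
      (fun v => ∀ j, E (bh (i, j)) v) Vo (Q i) (J i) fun v => f v = i} = L := by exact_mod_cast h1
    rw [Fintype.card_fin] at hf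
    have h3 : (L : ℝ) ≤ 2 * #S := by linarith
    have h4 : L ≤ 2 * #S := by exact_mod_cast h3
    have h5 : L = 4 * (M * t) := by rw [hL]; ring
    omega
  have hW : ∀ i ∈ S, _ := fun i hi => (mem_filter.1 hi).2
  choose! W hWVo hWf hWout hWin hQout hQin using hW
  let C₀ : Fin L → Finset V := fun i => Q i ∪ J i ∪ W i
  have hQJ : ∀ i j, Disjoint (Q i) (J j) := fun i j => by
    simp only [Q, J, disjoint_biUnion_left, disjoint_biUnion_right]
    exact fun _ _ _ _ => G.disjRI _ _
  have hQE : ∀ i, Q i ⊆ Exc := fun i => biUnion_subset.2 fun j _ => G.R_exc _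
  have hQW : ∀ i, ∀ j ∈ S, Disjoint (Q i) (W j) := fun i j hj => disjoint_left.2 fun x hx hx' =>
    hVoE x (hWVo j hj hx') (hQE i hx)
  have hJW : ∀ i, ∀ j ∈ S, Disjoint (J i) (W j) := fun i j hj => disjoint_left.2 fun x hx hx' => by
    obtain ⟨l, -, hl⟩ := mem_biUnion.1 hx
    exact hVoI x (hWVo j hj hx') _ hl
  have hCd : ∀ i ∈ S, ∀ j ∈ S, i ≠ j → Disjoint (C₀ i) (C₀ j) := by
    intro i hi j hj hne
    have hQQ : Disjoint (Q i) (Q j) := by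
      simp only [Q, disjoint_biUnion_left, disjoint_biUnion_right]
      exact fun _ _ _ _ => G.disjR _ _ (by simp [hne])
    have hJJ : Disjoint (J i) (J j) := by
      simp only [J, disjoint_biUnion_left, disjoint_biUnion_right]
      exact fun _ _ _ _ => G.disjI _ _ (by simp [hne])
    have hWW : Disjoint (W i) (W j) := disjoint_left.2 fun x hx hx' =>
      hne ((hWf i hi x hx).symm.trans (hWf j hj x hx'))
    simp only [C₀, disjoint_union_left, disjoint_union_right]
    exact ⟨⟨⟨⟨hQQ, (hQJ j i).symm⟩, (hQW j i hi).symm⟩, ⟨hQJ i j, hJJ⟩, (hJW j i hi).symm⟩,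
      ⟨hQW i j hj, hJW i j hj⟩, hWW⟩
  have hcore : ∀ i ∈ S, IsCore E k (fun j => A (i, j)) (fun j => B (i, j)) (fun j => R (i, j))
      (fun j => I (i, j)) (fun j => eh (i, j)) (fun j => bh (i, j)) (W i) := by
    intro i hi
    exact
      { A_sub := fun _ => G.A_sub _
        B_sub := fun _ => G.B_sub _
        eh_mem := fun _ => G.eh_mem _
        bh_mem := fun _ => G.bh_mem _
        disjR := fun _ _ hne => G.disjR _ _ (by simp [hne])
        disjI := fun _ _ hne => G.disjI _ _ (by simp [hne])
        disjRI := fun _ _ => G.disjRI _ _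
        link := fun _ => G.link _
        exit := fun _ _ => G.exit _ _
        entry := fun _ _ => G.entry _ _
        outW := hWout i hi
        inW := hWin i hi
        outR := fun j z hz => hQout i hi z (mem_biUnion.2 ⟨j, mem_univ _, hz⟩)
        inR := fun j z hz => hQin i hi z (mem_biUnion.2 ⟨j, mem_univ _, hz⟩) }
  have hsmall := card_le_small_large hCd (M * t)
  have hcount := card_filter_add_card_filter_not (s := S) fun i =>
    Fintype.card V < #(C₀ i) * (M * t)
  have htM : t ≤ M * t := Nat.le_mul_of_pos_left _ hM
  obtain ⟨e, he, heS⟩ := exists_injection_into t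
    (S := {i ∈ S | ¬ Fintype.card V < #(C₀ i) * (M * t)}) (by omega)
  have heS' : ∀ i, e i ∈ S := fun i => (mem_filter.1 (heS i)).1
  refine ⟨fun i => C₀ (e i), fun i j hne => hCd _ (heS' i) _ (heS' j) (he.ne hne), fun i => ?_,
    fun i => ?_, fun i => not_lt.1 (mem_filter.1 (heS i)).2, fun i D hD => ?_, fun i D hD => ?_⟩
  · exact (hcore _ (heS' i)).stronglyKConnectedOn hE hk (by simp)
  · exact (hcore _ (heS' i)).two_mul_le_card hE (by simp; omega)
  · have h1 := notP (e i) D fun v hv => ⟨(hD v hv).1, fun hp => ?_⟩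
    · exact Nat.le_of_mul_le_mul_right (c := 4) (by rw [mul_assoc]; linarith) (by norm_num)
    · have h2 := hp.card_nb (fun a b hne => (G.disjR _ _ (by simp [hne])).mono (G.A_sub _)
        (G.A_sub _)) (S := C₀ (e i)) fun j x hx => mem_union_left _ (mem_union_left _
          (mem_biUnion.2 ⟨j, mem_univ _, G.A_sub _ hx⟩))
      have h3 : #(nb E (C₀ (e i)) v) ≤ k := (hD v hv).2
      rw [Fintype.card_fin] at h2
      omega
  · have h1 := notM (e i) D fun v hv => ⟨(hD v hv).1, fun hp => ?_⟩
    · exact Nat.le_of_mul_le_mul_right (c := 4) (by rw [mul_assoc]; linarith) (by norm_num)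
    · have h2 := hp.card_nb (fun a b hne => (G.disjR _ _ (by simp [hne])).mono (G.B_sub _)
        (G.B_sub _)) (S := C₀ (e i)) fun j x hx => mem_union_left _ (mem_union_left _
          (mem_biUnion.2 ⟨j, mem_univ _, G.B_sub _ hx⟩))
      have h3 : #(nb (flip E) (C₀ (e i)) v) ≤ k := (hD v hv).2
      rw [Fintype.card_fin] at h2
      omega

end ExistsCores

section LevelCount

variable {V : Type*} [Fintype V] [DecidableEq V]

omit [Fintype V] [DecidableEq V] in
lemma card_mul_le_sum_ratio {t : ℕ} (ht : 1 ≤ t) (N L : Finset V) (hNL : N ⊆ L)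
    (Λ : V → Finset (Fin t)) (J : Finset (Fin t)) :
    ((#N : ℝ) - #{v ∈ L | 2 * #(Λ v ∩ J) < #J}) * (#J / (2 * t)) ≤
      ∑ v ∈ N, (#(Λ v ∩ J) : ℝ) / #(Λ v) := by
  have ht' : (1 : ℝ) ≤ t := by exact_mod_cast ht
  have h1 := card_filter_add_card_filter_not (s := N) fun v => 2 * #(Λ v ∩ J) < #J
  have h2 : #{v ∈ N | 2 * #(Λ v ∩ J) < #J} ≤ #{v ∈ L | 2 * #(Λ v ∩ J) < #J} :=
    card_le_card (filter_subset_filter _ hNL)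
  have h3 : (#N : ℝ) - #{v ∈ L | 2 * #(Λ v ∩ J) < #J} ≤
      #{v ∈ N | ¬ 2 * #(Λ v ∩ J) < #J} := by
    have : #N ≤ #{v ∈ N | ¬ 2 * #(Λ v ∩ J) < #J} + #{v ∈ L | 2 * #(Λ v ∩ J) < #J} := by omega
    have : (#N : ℝ) ≤ #{v ∈ N | ¬ 2 * #(Λ v ∩ J) < #J} + #{v ∈ L | 2 * #(Λ v ∩ J) < #J} := by
      exact_mod_cast this
    linarith
  refine (mul_le_mul_of_nonneg_right h3 (by positivity)).trans ?_
  refine le_trans ?_ (sum_le_sum_of_subset_of_nonneg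
    (filter_subset (fun v => ¬ 2 * #(Λ v ∩ J) < #J) N) fun v _ _ => by positivity)
  rw [← nsmul_eq_mul]
  refine card_nsmul_le_sum _ _ _ fun v hv => ?_
  have h4 := not_lt.1 (mem_filter.1 hv).2
  have h5 : (#J : ℝ) ≤ 2 * #(Λ v ∩ J) := by exact_mod_cast h4
  rcases Nat.eq_zero_or_pos #(Λ v) with h0 | h0
  · have : #(Λ v ∩ J) = 0 := Nat.eq_zero_of_le_zero (h0 ▸ card_le_card inter_subset_left)
    have : #J = 0 := by omega
    simp [this]
    positivity
  · have h6 : (#(Λ v) : ℝ) ≤ t := by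
      exact_mod_cast (card_le_univ _).trans (by simp)
    have h7 : (0 : ℝ) < #(Λ v) := by exact_mod_cast h0
    rw [div_le_div_iff₀ (by positivity) h7]
    nlinarith [mul_le_mul h5 h6 h7.le (by positivity)]

omit [Fintype V] in
lemma IsTournament.card_nb_add {E : V → V → Prop} (hE : IsTournament E) {L : Finset V} {u : V}
    (hu : u ∉ L) : #L ≤ #(nb E L u) + #(nb (flip E) L u) := by
  refine (card_le_card fun v hv => ?_).trans (card_union_le _ _)
  rcases hE.total (u := u) (v := v) (by rintro rfl; exact hu hv) with h | h
  · exact mem_union_left _ (mem_nb.2 ⟨hv, h⟩)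
  · exact mem_union_right _ (mem_nb.2 ⟨hv, h⟩)

set_option maxHeartbeats 800000 in
lemma card_admissible_ge {E : V → V → Prop} (hE : IsTournament E) {k t m : ℕ} {u : V} {x Δ : ℝ}
    (ht : 1 ≤ t) {C : Fin t → Finset V} {L : ℕ → Finset V} {Λ : V → Finset (Fin t)}
    {Jo Ji ΛU : Finset (Fin t)} {Rest : Finset V}
    (hcov : ∀ i, i ∈ Jo ∨ i ∈ Ji ∨ i ∈ ΛU) (hJ : #Ji ≤ #Jo + #ΛU)
    (hC : ∀ i ∈ Jo, #(nb E (C i) u) ≤ k) (hCn : ∀ i, #(C i) * (2 ^ 30 * t) ≤ Fintype.card V)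
    (hpoor : ∀ J : Finset (Fin t), #{v ∈ L 0 | 2 * #(Λ v ∩ J) < #J} * 2 ^ 30 ≤ 4 * Fintype.card V)
    (hΛ : ∀ l < m, ∀ v ∈ L l, 26 * x * t ≤ Fintype.card V * #(Λ v))
    (hSo : ∀ l < m, ∑ v ∈ nb E (L l) u, (#(Λ v ∩ Jo) : ℝ) / #(Λ v) < x)
    (hSi : ∑ v ∈ nb (flip E) (L 0) u, (#(Λ v ∩ Ji) : ℝ) / #(Λ v) < x)
    (hm : 1 ≤ m) (hm3 : m ≤ 3)
    (hcovV : ∀ v, (∃ i, v ∈ C i) ∨ (∃ l < m, v ∈ L l) ∨ v ∈ Rest)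
    (hRest : (#Rest : ℝ) * 2 ^ 30 ≤ 9 * Δ) (hL0 : #(univ \ L 0) * 2 ^ 30 ≤ 10 * Fintype.card V)
    (hu : u ∉ L 0) (hΔ : Δ ≤ #(nb E univ u)) (hx : 1000 * x ≤ Δ) (hx0 : 0 < x)
    (hkt : (k : ℝ) * t * 2 ^ 30 ≤ Δ) :
    8 * x * t ≤ #ΛU * Fintype.card V := by
  by_contra! hcon
  set n : ℝ := (Fintype.card V : ℝ) with hn
  have hΔn : Δ ≤ n := hΔ.trans (by rw [hn]; exact_mod_cast card_le_univ _)
  have hn0 : 0 < n := by linarith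
  have ht' : (1 : ℝ) ≤ t := by exact_mod_cast ht
  have h1 : t ≤ #Jo + #Ji + #ΛU := by
    have : (univ : Finset (Fin t)) ⊆ Jo ∪ Ji ∪ ΛU := fun i _ => by
      have := hcov i
      simp only [mem_union]
      tauto
    have h2 := (card_le_card this).trans (card_union_le _ _)
    have h3 := card_union_le Jo Ji
    rw [card_univ, Fintype.card_fin] at h2
    omega
  have h1' : (t : ℝ) ≤ #Jo + #Ji + #ΛU := by exact_mod_cast h1
  have hJ' : (#Ji : ℝ) ≤ #Jo + #ΛU := by exact_mod_cast hJ
  have hlam : (#ΛU : ℝ) ≤ 8 / 1000 * t := by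
    have : (#ΛU : ℝ) * n ≤ 8 / 1000 * t * n := by
      have h2 := mul_le_mul_of_nonneg_right (show x ≤ n / 1000 by linarith)
        (show (0 : ℝ) ≤ t by linarith)
      linarith
    exact le_of_mul_le_mul_right this hn0
  have hJo : 49 / 100 * (t : ℝ) ≤ #Jo := by linarith
  have hpo : ((#{v ∈ L 0 | 2 * #(Λ v ∩ Jo) < #Jo} : ℕ) : ℝ) * 2 ^ 30 ≤ 4 * n := by
    rw [hn]; exact_mod_cast hpoor Jo
  have hpi : ((#{v ∈ L 0 | 2 * #(Λ v ∩ Ji) < #Ji} : ℕ) : ℝ) * 2 ^ 30 ≤ 4 * n := by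
    rw [hn]; exact_mod_cast hpoor Ji
  have hso := (card_mul_le_sum_ratio ht _ _ (nb_subset E (L 0) u) Λ Jo).trans_lt (hSo 0 hm)
  have hsi := (card_mul_le_sum_ratio ht _ _ (nb_subset (flip E) (L 0) u) Λ Ji).trans_lt hSi
  have hN0 : (#(nb E (L 0) u) : ℝ) ≤ n / 100 := by
    by_contra! hbig
    have h2 : (49 / 200 : ℝ) ≤ #Jo / (2 * t) := by
      rw [le_div_iff₀ (by positivity)]
      linarith
    have h3 : 9 / 1000 * n ≤ (#(nb E (L 0) u) : ℝ) - #{v ∈ L 0 | 2 * #(Λ v ∩ Jo) < #Jo} := by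
      linarith
    have := mul_le_mul h3 h2 (by norm_num) (by linarith)
    linarith
  have hL0' : (#(L 0) : ℝ) ≥ 99 / 100 * n := by
    have h2 := card_sdiff_add_card_eq_card (subset_univ (L 0))
    have h3 : (#(univ \ L 0) : ℝ) + #(L 0) = n := by
      rw [hn, ← card_univ]; exact_mod_cast h2
    have h4 : (#(univ \ L 0) : ℝ) * 2 ^ 30 ≤ 10 * n := by rw [hn]; exact_mod_cast hL0
    linarith
  have hN0' : 9 / 10 * n ≤ (#(nb (flip E) (L 0) u) : ℝ) := by
    have : (#(L 0) : ℝ) ≤ #(nb E (L 0) u) + #(nb (flip E) (L 0) u) := by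
      exact_mod_cast hE.card_nb_add hu
    linarith
  have hJi : 2 / 5 * n * #Ji ≤ x * t := by
    have h3 : 8 / 10 * n ≤ (#(nb (flip E) (L 0) u) : ℝ) -
        #{v ∈ L 0 | 2 * #(Λ v ∩ Ji) < #Ji} := by linarith
    have h4 := (mul_le_mul_of_nonneg_right h3
      (show (0 : ℝ) ≤ #Ji / (2 * t) by positivity)).trans hsi.le
    have h5 := mul_le_mul_of_nonneg_right h4 (show (0 : ℝ) ≤ t by linarith)
    have h6 : 8 / 10 * n * (#Ji / (2 * t)) * t = 2 / 5 * n * #Ji := by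
      field_simp
      ring
    linarith
  have hta : n * (t - #Jo) ≤ 13 * x * t := by
    have h2 := mul_le_mul_of_nonneg_left (show (t : ℝ) - #Jo ≤ #Ji + #ΛU by linarith) hn0.le
    have h3 : (0 : ℝ) ≤ x * t := by positivity
    linarith
  have hhalf : ∀ l < m, (#(nb E (L l) u) : ℝ) ≤ 2 * x := by
    intro l hl
    have h2 : (#(nb E (L l) u) : ℝ) * (1 / 2) ≤
        ∑ v ∈ nb E (L l) u, (#(Λ v ∩ Jo) : ℝ) / #(Λ v) := by
      rw [← nsmul_eq_mul]
      refine card_nsmul_le_sum _ _ _ fun v hv => ?_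
      have h3 := hΛ l hl v (mem_nb.1 hv).1
      have h4 : #(Λ v) + #Jo ≤ #(Λ v ∩ Jo) + t := by
        have h5 := card_union_add_card_inter (Λ v) Jo
        have h6 := (card_le_univ (Λ v ∪ Jo)).trans (by simp : _ ≤ t)
        omega
      have h4' : (#(Λ v) : ℝ) + #Jo ≤ #(Λ v ∩ Jo) + t := by exact_mod_cast h4
      have h7 : (0 : ℝ) < n * #(Λ v) := lt_of_lt_of_le (by positivity) h3
      have h8 : (0 : ℝ) < #(Λ v) := by
        exact pos_of_mul_pos_right h7 hn0.le
      rw [le_div_iff₀ h8]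
      have h10 : n * (1 / 2 * #(Λ v)) ≤ n * #(Λ v ∩ Jo) := by
        have h11 := mul_le_mul_of_nonneg_left h4' hn0.le
        linarith
      exact le_of_mul_le_mul_left h10 hn0
    linarith [hSo l hl]
  have hnb : #(nb E univ u) ≤
      ∑ i ∈ Jo, #(nb E (C i) u) + ∑ i ∈ Joᶜ, #(C i) + ∑ l ∈ range m, #(nb E (L l) u) + #Rest := by
    have hsub : nb E univ u ⊆ ((Jo.biUnion fun i => nb E (C i) u) ∪ Joᶜ.biUnion C ∪
        (range m).biUnion fun l => nb E (L l) u) ∪ Rest := by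
      intro v hv
      have hEv := (mem_nb.1 hv).2
      simp only [mem_union, mem_biUnion, mem_compl, mem_range, mem_nb]
      rcases hcovV v with ⟨i, hi⟩ | ⟨l, hl, hvl⟩ | h
      · by_cases hiJ : i ∈ Jo
        · exact Or.inl (Or.inl (Or.inl ⟨i, hiJ, hi, hEv⟩))
        · exact Or.inl (Or.inl (Or.inr ⟨i, hiJ, hi⟩))
      · exact Or.inl (Or.inr ⟨l, hl, hvl, hEv⟩)
      · exact Or.inr h
    refine (card_le_card hsub).trans ((card_union_le _ _).trans ?_)
    gcongr
    refine (card_union_le _ _).trans ?_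
    gcongr
    · refine (card_union_le _ _).trans ?_
      gcongr
      · exact card_biUnion_le
      · exact card_biUnion_le
    · exact card_biUnion_le
  have e1 : (∑ i ∈ Jo, #(nb E (C i) u) : ℝ) ≤ t * k := by
    have h2 : ∑ i ∈ Jo, #(nb E (C i) u) ≤ #Jo * k := by
      simpa using sum_le_card_nsmul Jo _ k hC
    have h3 : #Jo ≤ t := (card_le_univ _).trans (by simp)
    exact_mod_cast h2.trans (Nat.mul_le_mul_right k h3)
  have e2 : (∑ i ∈ Joᶜ, #(C i) : ℝ) * 2 ^ 30 ≤ 13 * x := by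
    have h2 : ∑ i ∈ Joᶜ, (#(C i) : ℝ) * (2 ^ 30 * t) ≤ ∑ i ∈ Joᶜ, n :=
      sum_le_sum fun i _ => by rw [hn]; exact_mod_cast hCn i
    have h3 : (#Joᶜ : ℝ) = t - #Jo := by
      rw [card_compl, Fintype.card_fin, Nat.cast_sub ((card_le_univ _).trans (by simp))]
    rw [sum_const, nsmul_eq_mul, h3, ← sum_mul] at h2
    have h4 : (∑ i ∈ Joᶜ, #(C i) : ℝ) * 2 ^ 30 * t ≤ 13 * x * t := by linarith
    exact le_of_mul_le_mul_right h4 (by linarith)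
  have e3 : (∑ l ∈ range m, #(nb E (L l) u) : ℝ) ≤ 6 * x := by
    have h2 := sum_le_card_nsmul (range m) (fun l => (#(nb E (L l) u) : ℝ)) (2 * x)
      fun l hl => hhalf l (mem_range.1 hl)
    rw [card_range, nsmul_eq_mul] at h2
    have : (m : ℝ) ≤ 3 := by exact_mod_cast hm3
    have h3 := mul_le_mul_of_nonneg_right this (show 0 ≤ 2 * x by linarith)
    linarith
  have hnb' : (#(nb E univ u) : ℝ) ≤ ∑ i ∈ Jo, (#(nb E (C i) u) : ℝ) + ∑ i ∈ Joᶜ, (#(C i) : ℝ) +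
      ∑ l ∈ range m, (#(nb E (L l) u) : ℝ) + #Rest := by exact_mod_cast hnb
  linarith

end LevelCount

section Stages

variable {V : Type*} [Fintype V] [DecidableEq V]

lemma exists_stage_choice (E : V → V → Prop) {k t : ℕ} (ht : 1 ≤ t) {L U : Finset V}
    {Λ : V → Finset (Fin t)} (hΛ : ∀ v ∈ L, (Λ v).Nonempty) (X : V → ℝ)
    (hsum : ∑ u ∈ U, (2 : ℝ) ^ (1 + t + k * t) * Real.exp (-(X u / 2)) < 1) :
    ∃ g : V → Fin t, (∀ v ∈ L, g v ∈ Λ v) ∧ ∀ F, F = E ∨ F = flip E → ∀ u ∈ U,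
      ∀ J : Finset (Fin t), X u ≤ ∑ v ∈ nb F L u, (#(Λ v ∩ J) : ℝ) / #(Λ v) →
        ∃ i ∈ J, k < #{v ∈ nb F L u | g v = i} := by
  classical
  have : Nonempty (Fin t) := ⟨⟨0, ht⟩⟩
  let F : Bool → V → V → Prop := fun b => if b then E else flip E
  let Ev : Finset (V × Finset (Fin t) × Bool) := {e ∈ U ×ˢ univ |
    X e.1 ≤ ∑ v ∈ nb (F e.2.2) L e.1, (#(Λ v ∩ e.2.1) : ℝ) / #(Λ v)}
  obtain ⟨g, hg, hgE⟩ := exists_choice hΛ k t Ev (N := fun e => nb (F e.2.2) L e.1)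
    (J := fun e => e.2.1) (x := fun e => X e.1) (fun e _ => nb_subset _ _ _)
    (fun e _ => (card_le_univ _).trans (by simp)) (fun e he => (mem_filter.1 he).2) (by
      refine lt_of_le_of_lt (sum_le_sum_of_subset_of_nonneg (filter_subset _ _)
        fun _ _ _ => by positivity) (lt_of_le_of_lt (le_of_eq ?_) hsum)
      rw [sum_product]
      refine sum_congr rfl fun u _ => ?_
      simp only [sum_const, card_univ, nsmul_eq_mul, Fintype.card_prod, Fintype.card_finset,
        Fintype.card_fin, Fintype.card_bool]
      push_cast
      ring)
  refine ⟨g, hg, fun F' hF' u hu J hX => ?_⟩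
  obtain ⟨b, rfl⟩ : ∃ b, F' = F b := by
    rcases hF' with rfl | rfl
    · exact ⟨true, rfl⟩
    · exact ⟨false, rfl⟩
  exact hgE (u, J, b) (mem_filter.2 ⟨mem_product.2 ⟨hu, mem_univ _⟩, hX⟩)

/-- The parts to which `v` is attached robustly, once the vertices of `R` of lower level have been
added to the sets `C i` according to `g`. -/
noncomputable def admissible (E : V → V → Prop) (k : ℕ) {t : ℕ} (C : Fin t → Finset V)
    (R : Finset V) (lv : V → ℕ) (g : V → Fin t) (v : V) : Finset (Fin t) :=
  {i | k + 1 ≤ #(nb E (C i ∪ {w ∈ R | lv w < lv v ∧ g w = i}) v) ∧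
    k + 1 ≤ #(nb (flip E) (C i ∪ {w ∈ R | lv w < lv v ∧ g w = i}) v)}

/-- The assignment `g` is admissible and well distributed on the vertices of level below `j`. -/
structure StageValid (E : V → V → Prop) (k : ℕ) {t : ℕ} (C : Fin t → Finset V) (R : Finset V)
    (lv : V → ℕ) (x : ℕ → ℝ) (j : ℕ) (g : V → Fin t) : Prop where
  mem : ∀ v ∈ R, lv v < j → g v ∈ admissible E k C R lv g v
  large : ∀ v ∈ R, lv v < j →
    8 * x (lv v) * t ≤ #(admissible E k C R lv g v) * Fintype.card V
  spread : ∀ F, F = E ∨ F = flip E → ∀ l < j, ∀ u ∈ R, l < lv u → ∀ J : Finset (Fin t),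
    x (lv u) ≤ ∑ v ∈ nb F {w ∈ R | lv w = l} u,
      (#(admissible E k C R lv g v ∩ J) : ℝ) / #(admissible E k C R lv g v) →
    ∃ i ∈ J, k < #{v ∈ nb F {w ∈ R | lv w = l} u | g v = i}

omit [Fintype V] in
lemma admissible_congr {E : V → V → Prop} {k t : ℕ} {C : Fin t → Finset V} {R : Finset V}
    {lv : V → ℕ} {g g' : V → Fin t} {v : V} (h : ∀ w, lv w < lv v → g w = g' w) :
    admissible E k C R lv g v = admissible E k C R lv g' v := by
  have : ∀ i, ({w ∈ R | lv w < lv v ∧ g w = i} : Finset V) = {w ∈ R | lv w < lv v ∧ g' w = i} :=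
    fun i => filter_congr fun w _ => and_congr_right fun hw => by rw [h w hw]
  simp only [admissible, this]

lemma exists_stageValid {E : V → V → Prop} {k t : ℕ} (ht : 1 ≤ t) {C : Fin t → Finset V}
    {R : Finset V} {lv : V → ℕ} {x : ℕ → ℝ} {m : ℕ} (hx : ∀ j < m, 0 < x j)
    (hsum : ∑ u ∈ R with 0 < lv u, (2 : ℝ) ^ (1 + t + k * t) * Real.exp (-(x (lv u) / 2)) < 1)
    (hadm : ∀ j < m, ∀ g, StageValid E k C R lv x j g → ∀ v ∈ R, lv v = j →
      8 * x j * t ≤ #(admissible E k C R lv g v) * Fintype.card V) :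
    ∀ j ≤ m, ∃ g, StageValid E k C R lv x j g := by
  intro j
  induction j with
  | zero =>
    exact fun _ => ⟨fun _ => ⟨0, ht⟩, by simp, by simp, by simp⟩
  | succ j ih =>
    intro hj
    obtain ⟨g, hg⟩ := ih (by omega)
    have hlarge := hadm j hj g hg
    have ht' : (0 : ℝ) < t := by exact_mod_cast ht
    obtain ⟨h, hhΛ, hh⟩ := exists_stage_choice E (k := k) ht (L := {w ∈ R | lv w = j})
      (U := {u ∈ R | j < lv u}) (Λ := admissible E k C R lv g) (fun v hv => by
        rw [← card_pos, Nat.pos_iff_ne_zero]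
        intro h0
        have h1 := hlarge v (mem_filter.1 hv).1 (mem_filter.1 hv).2
        have h2 := mul_pos (mul_pos (show (0 : ℝ) < 8 by norm_num) (hx j hj)) ht'
        rw [h0] at h1
        simp only [Nat.cast_zero, zero_mul] at h1
        linarith) (fun u => x (lv u)) (lt_of_le_of_lt
        (sum_le_sum_of_subset_of_nonneg (fun u hu => by
          rw [mem_filter] at hu ⊢
          exact ⟨hu.1, by omega⟩) fun _ _ _ => by positivity) hsum)
    let g' : V → Fin t := fun v => if lv v = j then h v else g v
    have hg' : ∀ w, lv w < j → g w = g' w := fun w hw => by simp [g', hw.ne]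
    have hg'j : ∀ w, lv w = j → h w = g' w := fun w hw => by simp [g', hw]
    have hA : ∀ v, lv v ≤ j → admissible E k C R lv g' v = admissible E k C R lv g v := fun v hv =>
      (admissible_congr fun w hw => hg' w (by omega)).symm
    refine ⟨g', fun v hv hvj => ?_, fun v hv hvj => ?_, fun F hF l hl u hu hlu J hJ => ?_⟩
    · rw [hA v (by omega)]
      rcases Nat.lt_succ_iff_lt_or_eq.1 hvj with hvj | hvj
      · rw [← hg' v hvj]
        exact hg.mem v hv hvj
      · rw [← hg'j v hvj]
        exact hhΛ v (mem_filter.2 ⟨hv, hvj⟩)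
    · rw [hA v (by omega)]
      rcases Nat.lt_succ_iff_lt_or_eq.1 hvj with hvj | hvj
      · exact hg.large v hv hvj
      · rw [hvj]
        exact hlarge v hv hvj
    · have hJ' : x (lv u) ≤ ∑ v ∈ nb F {w ∈ R | lv w = l} u,
          (#(admissible E k C R lv g v ∩ J) : ℝ) / #(admissible E k C R lv g v) := by
        refine hJ.trans (le_of_eq (sum_congr rfl fun v hv => ?_))
        have := (mem_filter.1 (mem_nb.1 hv).1).2
        rw [hA v (by omega)]
      rcases Nat.lt_succ_iff_lt_or_eq.1 hl with hl | rfl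
      · obtain ⟨i, hi, hik⟩ := hg.spread F hF l hl u hu hlu J hJ'
        refine ⟨i, hi, hik.trans_le (le_of_eq (congrArg card (filter_congr fun v hv => ?_)))⟩
        have := (mem_filter.1 (mem_nb.1 hv).1).2
        rw [hg' v (by omega)]
      · obtain ⟨i, hi, hik⟩ := hh F hF u (mem_filter.2 ⟨hu, hlu⟩) J hJ'
        refine ⟨i, hi, hik.trans_le (le_of_eq (congrArg card (filter_congr fun v hv => ?_)))⟩
        have := (mem_filter.1 (mem_nb.1 hv).1).2
        rw [hg'j v this]

lemma StageValid.stronglyKConnectedOn {E : V → V → Prop} {k t m : ℕ} {C : Fin t → Finset V}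
    {R : Finset V} {lv : V → ℕ} {x : ℕ → ℝ} {g : V → Fin t} (h : StageValid E k C R lv x m g)
    (hC : ∀ i, StronglyKConnectedOn E k (C i)) (i : Fin t) {j : ℕ} (hj : j ≤ m) :
    StronglyKConnectedOn E k (C i ∪ {w ∈ R | lv w < j ∧ g w = i}) := by
  induction j with
  | zero => simpa using hC i
  | succ j ih =>
    have key : ∀ v ∈ C i ∪ {w ∈ R | lv w < j + 1 ∧ g w = i},
        v ∉ C i ∪ {w ∈ R | lv w < j ∧ g w = i} → lv v = j ∧ i ∈ admissible E k C R lv g v := by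
      intro v hv hv'
      simp only [mem_union, mem_filter, not_or, not_and] at hv hv'
      obtain ⟨hR, hlt, hgi⟩ := hv.resolve_left hv'.1
      have hlj : lv v = j := by
        by_contra hne
        exact hv'.2 hR (by omega) hgi
      exact ⟨hlj, hgi ▸ h.mem v hR (by omega)⟩
    refine (ih (by omega)).extend ?_ (fun v hv hv' => ?_) fun v hv hv' => ?_
    · refine union_subset_union subset_rfl fun w hw => ?_
      rw [mem_filter] at hw ⊢
      exact ⟨hw.1, by omega, hw.2.2⟩
    · obtain ⟨hlj, hi⟩ := key v hv hv'
      have := (mem_filter.1 hi).2.1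
      rwa [hlj] at this
    · obtain ⟨hlj, hi⟩ := key v hv hv'
      have := (mem_filter.1 hi).2.2
      rwa [hlj] at this

end Stages

section Placement

variable {V : Type*} [Fintype V] [DecidableEq V]

lemma StageValid.rev {E : V → V → Prop} {k t m : ℕ} {C : Fin t → Finset V}
    {R : Finset V} {lv : V → ℕ} {x : ℕ → ℝ} {g : V → Fin t} (h : StageValid E k C R lv x m g) :
    StageValid (flip E) k C R lv x m g := by
  have hA : ∀ v, admissible (flip E) k C R lv g v = admissible E k C R lv g v := fun v =>
    filter_congr fun _ _ => and_comm
  refine ⟨fun v => ?_, fun v => ?_, fun F hF => ?_⟩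
  · rw [hA]
    exact h.mem v
  · rw [hA]
    exact h.large v
  · simp only [hA]
    exact h.spread F (hF.symm.imp id id)

omit [Fintype V] [DecidableEq V] in
lemma card_mul_le_of_bad {ι : Type*} [DecidableEq ι] {S : Finset V} {J : Finset ι}
    {Bad : V → Finset ι} {c d q : ℕ} (hJ : J.Nonempty) (hS : ∀ v ∈ S, #J ≤ c * #(Bad v ∩ J))
    (hb : ∀ i ∈ J, #{v ∈ S | i ∈ Bad v} * q ≤ d) : #S * q ≤ c * d := by
  have h1 : #S * #J ≤ c * ∑ i ∈ J, #{v ∈ S | i ∈ Bad v} := by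
    have h2 : ∑ i ∈ J, #{v ∈ S | i ∈ Bad v} = ∑ v ∈ S, #(Bad v ∩ J) := by
      simp only [card_filter]
      rw [sum_comm]
      refine sum_congr rfl fun v _ => ?_
      rw [← card_filter, inter_comm, filter_mem_eq_inter]
    rw [h2, mul_sum]
    calc #S * #J = ∑ v ∈ S, #J := by simp
      _ ≤ _ := sum_le_sum hS
  have h3 : (∑ i ∈ J, #{v ∈ S | i ∈ Bad v}) * q ≤ #J * d := by
    rw [sum_mul]
    exact (sum_le_sum hb).trans (by simp)
  have hJ0 := card_pos.2 hJ
  refine Nat.le_of_mul_le_mul_left ?_ hJ0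
  calc #J * (#S * q) = #S * #J * q := by ring
    _ ≤ c * (∑ i ∈ J, #{v ∈ S | i ∈ Bad v}) * q := Nat.mul_le_mul_right _ h1
    _ = c * ((∑ i ∈ J, #{v ∈ S | i ∈ Bad v}) * q) := by ring
    _ ≤ c * (#J * d) := Nat.mul_le_mul_left _ h3
    _ = #J * (c * d) := by ring

omit [Fintype V] in
lemma mem_admissible_of_core {E : V → V → Prop} {k t : ℕ} {C : Fin t → Finset V} {R : Finset V}
    {lv : V → ℕ} {g : V → Fin t} {v : V} {i : Fin t} (h : k < #(nb E (C i) v))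
    (h' : k < #(nb (flip E) (C i) v)) : i ∈ admissible E k C R lv g v :=
  mem_filter.2 ⟨mem_univ _, h.trans_le (card_le_card (nb_mono subset_union_left _)),
    h'.trans_le (card_le_card (nb_mono subset_union_left _))⟩

lemma StageValid.sum_lt {E : V → V → Prop} {k t j : ℕ} {C : Fin t → Finset V}
    {R : Finset V} {lv : V → ℕ} {x : ℕ → ℝ} {g : V → Fin t} (h : StageValid E k C R lv x j g)
    {l : ℕ} {u : V} (hl : l < j) (hu : u ∈ R) (huj : lv u = j) {J : Finset (Fin t)}
    (hJ : ∀ i ∈ J, k < #(nb (flip E) (C i) u)) :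
    ∑ v ∈ nb E {w ∈ R | lv w = l} u, (#(admissible E k C R lv g v ∩
      (J \ admissible E k C R lv g u)) : ℝ) / #(admissible E k C R lv g v) < x j := by
  by_contra! hcon
  rw [← huj] at hcon
  obtain ⟨i, hi, hik⟩ := h.spread E (Or.inl rfl) l hl u hu (by omega) _ hcon
  rw [mem_sdiff] at hi
  refine hi.2 (mem_filter.2 ⟨mem_univ _, hik.trans_le (card_le_card fun w hw => ?_),
    (hJ i hi.1).trans_le (card_le_card (nb_mono subset_union_left _))⟩)
  rw [mem_filter, mem_nb, mem_filter] at hw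
  rw [mem_nb, mem_union, mem_filter]
  exact ⟨Or.inr ⟨hw.1.1.1, by omega, hw.2⟩, hw.1.2⟩

lemma StageValid.card_admissible_ge {E : V → V → Prop} (hE : IsTournament E) {k t j : ℕ}
    {C : Fin t → Finset V} {R : Finset V} {lv : V → ℕ} {x : ℕ → ℝ} {g : V → Fin t}
    (h : StageValid E k C R lv x j g) (ht : 1 ≤ t) (hj1 : 1 ≤ j) (hj3 : j ≤ 3)
    (hCn : ∀ i, #(C i) * (2 ^ 30 * t) ≤ Fintype.card V) (hCk : ∀ i, 2 * k + 2 ≤ #(C i))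
    (hR : ∀ v, v ∈ R ↔ ∀ i, v ∉ C i)
    (hpoor : ∀ J : Finset (Fin t), #{v ∈ {w ∈ R | lv w = 0} |
      2 * #(admissible E k C R lv g v ∩ J) < #J} * 2 ^ 30 ≤ 4 * Fintype.card V)
    (hx : ∀ l < j, 26 * x j ≤ 8 * x l) {Δ : ℝ} (hRest : (#{w ∈ R | j ≤ lv w} : ℝ) * 2 ^ 30 ≤ 9 * Δ)
    (hL0 : #(univ \ {w ∈ R | lv w = 0}) * 2 ^ 30 ≤ 10 * Fintype.card V)
    (hxΔ : 1000 * x j ≤ Δ) (hx0 : 0 < x j) (hkt : (k : ℝ) * t * 2 ^ 30 ≤ Δ) {u : V} (hu : u ∈ R)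
    (huj : lv u = j) (hΔ : Δ ≤ #(nb E univ u))
    (hB : #{i : Fin t | #(nb (flip E) (C i) u) ≤ k} ≤ #{i : Fin t | #(nb E (C i) u) ≤ k}) :
    8 * x j * t ≤ #(admissible E k C R lv g u) * Fintype.card V := by
  have hadd : ∀ i, k < #(nb E (C i) u) ∨ k < #(nb (flip E) (C i) u) := fun i => by
    have h1 := hE.card_nb_add ((hR u).1 hu i)
    have := hCk i
    omega
  refine TournamentPartition.card_admissible_ge hE (Δ := Δ) (m := j) ht
    (L := fun l => {w ∈ R | lv w = l}) (Λ := admissible E k C R lv g)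
    (Jo := ({i : Fin t | #(nb E (C i) u) ≤ k} : Finset (Fin t)) \ admissible E k C R lv g u)
    (Ji := ({i : Fin t | #(nb (flip E) (C i) u) ≤ k} : Finset (Fin t)) \
      admissible E k C R lv g u) (Rest := {w ∈ R | j ≤ lv w})
    (fun i => ?_) ?_ (fun i hi => ?_) hCn hpoor (fun l hl v hv => ?_) (fun l hl => ?_) ?_ hj1 hj3
    (fun v => ?_) hRest hL0 (fun hu0 => ?_) hΔ hxΔ hx0 hkt
  · by_cases hi : i ∈ admissible E k C R lv g u
    · exact Or.inr (Or.inr hi)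
    · by_cases h1 : #(nb E (C i) u) ≤ k
      · exact Or.inl (mem_sdiff.2 ⟨mem_filter.2 ⟨mem_univ _, h1⟩, hi⟩)
      · by_cases h2 : #(nb (flip E) (C i) u) ≤ k
        · exact Or.inr (Or.inl (mem_sdiff.2 ⟨mem_filter.2 ⟨mem_univ _, h2⟩, hi⟩))
        · exact absurd (mem_admissible_of_core (not_le.1 h1) (not_le.1 h2)) hi
  · refine (card_le_card sdiff_subset).trans (hB.trans ?_)
    have := card_le_card_sdiff_add_card (t := admissible E k C R lv g u)
      (s := {i : Fin t | #(nb E (C i) u) ≤ k})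
    omega
  · exact (mem_filter.1 (mem_sdiff.1 hi).1).2
  · rw [mem_filter] at hv
    have h1 := h.large v hv.1 (by omega)
    rw [hv.2] at h1
    have h2 := mul_le_mul_of_nonneg_right (hx l hl) (Nat.cast_nonneg (α := ℝ) t)
    linarith
  · refine h.sum_lt hl hu huj fun i hi => ?_
    have := hadd i
    have h2 := (mem_filter.1 hi).2
    omega
  · have hA : ∀ v, admissible (flip E) k C R lv g v = admissible E k C R lv g v := fun v =>
      filter_congr fun _ _ => and_comm
    have h1 := h.rev.sum_lt (l := 0) (J := {i : Fin t | #(nb (flip E) (C i) u) ≤ k}) (by omega)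
      hu huj fun i hi => by
        have := hadd i
        have h2 := (mem_filter.1 hi).2
        change k < #(nb E (C i) u)
        omega
    simpa only [hA] using h1
  · by_cases hv : ∃ i, v ∈ C i
    · exact Or.inl hv
    · push Not at hv
      refine Or.inr ?_
      by_cases hl : lv v < j
      · exact Or.inl ⟨lv v, hl, mem_filter.2 ⟨(hR v).2 hv, rfl⟩⟩
      · exact Or.inr (mem_filter.2 ⟨(hR v).2 hv, not_lt.1 hl⟩)
  · have := (mem_filter.1 hu0).2
    omega

lemma card_mul_two_pow_mul_exp_le {k t c : ℕ} (hk : 1 ≤ k) (ht : 1 ≤ t) {y x : ℝ}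
    (hy : (2 : ℝ) ^ 30 * (k * t) ≤ y) (hc : (c : ℝ) ≤ y) (hx : y / 256000 ≤ x) :
    c * ((2 : ℝ) ^ (1 + t + k * t) * Real.exp (-(x / 2))) ≤ 1 / 4 := by
  have hkt : (1 : ℝ) ≤ k * t := by exact_mod_cast Nat.mul_pos hk ht
  have htk : (t : ℝ) ≤ k * t := by exact_mod_cast Nat.le_mul_of_pos_left t hk
  set z : ℝ := y / 2 ^ 30 with hz
  have hyz : y = 2 ^ 30 * z := by rw [hz]; field_simp
  have hkz : (k * t : ℝ) ≤ z := by rw [hz, le_div_iff₀ (by positivity)]; linarith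
  have hz1 : 1 ≤ z := hkt.trans hkz
  have h2 : (2 : ℝ) ≤ Real.exp 1 := by
    have := Real.add_one_le_exp (1 : ℝ)
    linarith
  have hpow : ∀ m : ℕ, ∀ w : ℝ, (m : ℝ) ≤ w → (2 : ℝ) ^ m ≤ Real.exp w := fun m w hw =>
    calc (2 : ℝ) ^ m ≤ Real.exp 1 ^ m := by gcongr
      _ = Real.exp m := by rw [← Real.exp_nat_mul, mul_one]
      _ ≤ _ := Real.exp_le_exp.2 hw
  have hA := hpow (1 + t + k * t) (3 * z) (by push_cast; linarith)
  have hB := hpow 30 (30 * z) (by push_cast; linarith)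
  have hC := hpow 2 (2 * z) (by push_cast; linarith)
  have hD : z ≤ Real.exp z := by
    have := Real.add_one_le_exp z
    linarith
  have hE : Real.exp (-(x / 2)) ≤ Real.exp (-(36 * z)) := by
    refine Real.exp_le_exp.2 ?_
    rw [hyz] at hx
    norm_num at hx
    linarith
  have hcE : (c : ℝ) ≤ Real.exp (30 * z) * Real.exp z := by
    refine hc.trans ?_
    rw [hyz]
    gcongr
  calc (c : ℝ) * ((2 : ℝ) ^ (1 + t + k * t) * Real.exp (-(x / 2)))
      ≤ Real.exp (30 * z) * Real.exp z * (Real.exp (3 * z) * Real.exp (-(36 * z))) := by gcongr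
    _ = Real.exp (-(2 * z)) := by
        rw [← Real.exp_add, ← Real.exp_add, ← Real.exp_add]
        congr 1
        ring
    _ = (Real.exp (2 * z))⁻¹ := Real.exp_neg _
    _ ≤ 1 / 4 := by
        rw [one_div]
        refine inv_anti₀ (by norm_num) ?_
        linarith

end Placement

section Assembly

variable {V : Type*} [Fintype V] [DecidableEq V]

set_option maxHeartbeats 1600000 in
lemma exists_partition_of_cores {E : V → V → Prop} (hE : IsTournament E) {k t K dP dM : ℕ}
    (hk : 1 ≤ k) (ht : 1 ≤ t) {C : Fin t → Finset V} {Exc : Finset V}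
    (hCd : ∀ i j, i ≠ j → Disjoint (C i) (C j)) (hCs : ∀ i, StronglyKConnectedOn E k (C i))
    (hCk : ∀ i, 2 * k + 2 ≤ #(C i)) (hCn : ∀ i, #(C i) * (2 ^ 30 * t) ≤ Fintype.card V)
    (hbP : ∀ i, ∀ D : Finset V, (∀ v ∈ D, v ∉ Exc ∧ #(nb E (C i) v) ≤ k) → #D * 2 ^ 38 ≤ dP)
    (hbM : ∀ i, ∀ D : Finset V, (∀ v ∈ D, v ∉ Exc ∧ #(nb (flip E) (C i) v) ≤ k) →
      #D * 2 ^ 38 ≤ dM)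
    (hExc : #Exc * 2 ^ 30 ≤ K) (hK : 2 ^ 30 * (k * t) ≤ K) (hKP : K ≤ dP) (hPM : dP ≤ dM)
    (hV : ∀ v, K + 1 ≤ #(nb E univ v) ∧ K + 1 ≤ #(nb (flip E) univ v))
    (hdP : ∀ v, v ∉ Exc → dP ≤ #(nb E univ v)) (hdM : ∀ v, v ∉ Exc → dM ≤ #(nb (flip E) univ v)) :
    ∃ P : Fin t → Finset V, (∀ i j, i ≠ j → Disjoint (P i) (P j)) ∧ univ.biUnion P = univ ∧
      ∀ i, StronglyKConnectedOn E k (P i) := by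
  classical
  set n := Fintype.card V with hn
  have hkt : 1 ≤ k * t := Nat.mul_pos hk ht
  obtain ⟨v₀, -⟩ : (C ⟨0, ht⟩).Nonempty := card_pos.1 (by have := hCk ⟨0, ht⟩; omega)
  have hKn : K + 1 ≤ n := (hV v₀).1.trans (card_le_univ _)
  obtain ⟨v₁, hv₁⟩ : ∃ v, v ∉ Exc := by
    by_contra! h
    have : #Exc = n := by rw [eq_univ_of_forall h, card_univ]
    omega
  have hPn : dP ≤ n := (hdP v₁ hv₁).trans (card_le_univ _)
  have hMn : dM ≤ n := (hdM v₁ hv₁).trans (card_le_univ _)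
  let R : Finset V := univ \ univ.biUnion C
  have hR : ∀ v, v ∈ R ↔ ∀ i, v ∉ C i := fun v => by simp [R]
  let Bo : V → Finset (Fin t) := fun v => {i | #(nb E (C i) v) ≤ k}
  let Bi : V → Finset (Fin t) := fun v => {i | #(nb (flip E) (C i) v) ≤ k}
  let lv : V → ℕ := fun v =>
    if v ∈ Exc then 3 else if t ≤ 4 * #(Bo v) then 2 else if t ≤ 4 * #(Bi v) then 1 else 0
  have hlv3 : ∀ v, lv v ≤ 3 := fun v => by simp only [lv]; split_ifs <;> omega
  have hlvE : ∀ v, lv v = 3 → v ∈ Exc := fun v => by simp only [lv]; split_ifs <;> simp_all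
  have hlv2 : ∀ v, lv v = 2 → v ∉ Exc ∧ t ≤ 4 * #(Bo v) := fun v => by
    simp only [lv]; split_ifs <;> simp_all
  have hlv1 : ∀ v, lv v = 1 → v ∉ Exc ∧ 4 * #(Bo v) < t ∧ t ≤ 4 * #(Bi v) := fun v => by
    simp only [lv]; split_ifs <;> simp_all
  have hlv0 : ∀ v, lv v = 0 → v ∉ Exc ∧ 4 * #(Bo v) < t ∧ 4 * #(Bi v) < t := fun v => by
    simp only [lv]; split_ifs <;> simp_all
  have hne : (univ : Finset (Fin t)).Nonempty := ⟨⟨0, ht⟩, mem_univ _⟩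
  let c : ℕ → ℕ := fun j => #{w ∈ R | lv w = j}
  have hc3 : c 3 * 2 ^ 30 ≤ K :=
    (Nat.mul_le_mul_right _ (card_le_card fun v hv => hlvE v (mem_filter.1 hv).2)).trans hExc
  have hc2 : c 2 * 2 ^ 38 ≤ 4 * dP := by
    refine card_mul_le_of_bad hne (Bad := Bo) (fun v hv => ?_) fun i _ => hbP i _ fun v hv => ?_
    · simpa using (hlv2 v (mem_filter.1 hv).2).2
    · rw [mem_filter, mem_filter] at hv
      exact ⟨(hlv2 v hv.1.2).1, (mem_filter.1 hv.2).2⟩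
  have hc1 : c 1 * 2 ^ 38 ≤ 4 * dM := by
    refine card_mul_le_of_bad hne (Bad := Bi) (fun v hv => ?_) fun i _ => hbM i _ fun v hv => ?_
    · simpa using (hlv1 v (mem_filter.1 hv).2).2.2
    · rw [mem_filter, mem_filter] at hv
      exact ⟨(hlv1 v hv.1.2).1, (mem_filter.1 hv.2).2⟩
  have hge : ∀ j, 1 ≤ j → #{w ∈ R | j ≤ lv w} ≤
      (if j ≤ 1 then c 1 else 0) + (if j ≤ 2 then c 2 else 0) + c 3 := fun j hj => by
    have h1 : ({w ∈ R | j ≤ lv w} : Finset V) ⊆ ((if j ≤ 1 then {w ∈ R | lv w = 1} else ∅) ∪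
        (if j ≤ 2 then {w ∈ R | lv w = 2} else ∅)) ∪ {w ∈ R | lv w = 3} := fun v hv => by
      rw [mem_filter] at hv
      have h3 := hlv3 v
      have h4 : lv v = 1 ∨ lv v = 2 ∨ lv v = 3 := by omega
      rcases h4 with h | h | h
      · have : j ≤ 1 := by omega
        simp [this, hv.1, h]
      · have : j ≤ 2 := by omega
        simp [this, hv.1, h]
      · simp [hv.1, h]
    refine (card_le_card h1).trans ((card_union_le _ _).trans (Nat.add_le_add_right
      ((card_union_le _ _).trans (Nat.add_le_add ?_ ?_)) _))
    · split_ifs <;> simp [c]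
    · split_ifs <;> simp [c]
  have hcores : #(univ.biUnion C) * 2 ^ 30 ≤ n := by
    have h1 : (∑ i, #(C i)) * (2 ^ 30 * t) ≤ t * n := by
      rw [sum_mul]
      exact (sum_le_sum fun i _ => hCn i).trans (by simp [hn])
    have h2 : t * (#(univ.biUnion C) * 2 ^ 30) ≤ t * n := by
      refine le_trans ?_ h1
      calc t * (#(univ.biUnion C) * 2 ^ 30) = #(univ.biUnion C) * (2 ^ 30 * t) := by ring
        _ ≤ _ := Nat.mul_le_mul_right _ card_biUnion_le
    exact Nat.le_of_mul_le_mul_left h2 ht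
  have hL0 : #(univ \ {w ∈ R | lv w = 0}) * 2 ^ 30 ≤ 10 * n := by
    have h1 : univ \ ({w ∈ R | lv w = 0} : Finset V) ⊆ univ.biUnion C ∪ {w ∈ R | 1 ≤ lv w} :=
      fun v hv => by
        rw [mem_sdiff, mem_filter] at hv
        by_cases hvR : v ∈ R
        · refine mem_union_right _ (mem_filter.2 ⟨hvR, ?_⟩)
          by_contra h
          exact hv.2 ⟨hvR, by omega⟩
        · refine mem_union_left _ ?_
          by_contra h
          exact hvR (mem_sdiff.2 ⟨mem_univ _, h⟩)
    have h2 := (card_le_card h1).trans (card_union_le _ _)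
    have h3 := hge 1 le_rfl
    simp only [le_refl, if_true, show (1 : ℕ) ≤ 2 by norm_num] at h3
    linarith
  let Δ : ℕ → ℝ := fun j => if j = 1 then dM else if j = 2 then dP else K
  let x : ℕ → ℝ := fun j => if j = 0 then (n : ℝ) / 16 else if j = 1 then dM / 1000 else
    if j = 2 then dP / 16000 else K / 256000
  have hKP' : (K : ℝ) ≤ dP := by exact_mod_cast hKP
  have hPM' : (dP : ℝ) ≤ dM := by exact_mod_cast hPM
  have hMn' : (dM : ℝ) ≤ n := by exact_mod_cast hMn
  have hK' : (2 : ℝ) ^ 30 * (k * t) ≤ K := by exact_mod_cast hK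
  have hkt' : (1 : ℝ) ≤ k * t := by exact_mod_cast hkt
  have hK0 : (1 : ℝ) ≤ K := by linarith
  have hx0 : ∀ j, 0 < x j := fun j => by
    simp only [x]
    split_ifs <;> linarith
  have hΔK : ∀ j, (K : ℝ) ≤ Δ j := fun j => by
    simp only [Δ]
    split_ifs <;> linarith
  have hxΔ : ∀ j, 1 ≤ j → 1000 * x j ≤ Δ j ∧ Δ j / 256000 ≤ x j := fun j hj => by
    simp only [x, Δ, show j ≠ 0 by omega, if_false]
    split_ifs <;> constructor <;> linarith
  have hcΔ : ∀ j, 1 ≤ j → j ≤ 3 → (#{w ∈ R | j ≤ lv w} : ℝ) * 2 ^ 30 ≤ 9 * Δ j := fun j h1 h3 => by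
    have h4 := hge j h1
    have h5 : (c 1 : ℝ) * 2 ^ 38 ≤ 4 * dM := by exact_mod_cast hc1
    have h6 : (c 2 : ℝ) * 2 ^ 38 ≤ 4 * dP := by exact_mod_cast hc2
    have h7 : (c 3 : ℝ) * 2 ^ 30 ≤ K := by exact_mod_cast hc3
    have h8 : (#{w ∈ R | j ≤ lv w} : ℝ) ≤
      (if j ≤ 1 then (c 1 : ℝ) else 0) + (if j ≤ 2 then (c 2 : ℝ) else 0) + c 3 := by
      exact_mod_cast h4
    obtain rfl | rfl | rfl : j = 1 ∨ j = 2 ∨ j = 3 := by omega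
    all_goals
      simp only [Δ, Nat.reduceLeDiff, Nat.reduceEqDiff, if_true, if_false, zero_add] at h8 ⊢
      linarith
  have hcc : ∀ j, 1 ≤ j → j ≤ 3 → (c j : ℝ) ≤ Δ j := fun j h1 h3 => by
    have h4 := hcΔ j h1 h3
    have h5 : (c j : ℝ) ≤ #{w ∈ R | j ≤ lv w} := by
      exact_mod_cast card_le_card (fun w hw => by
        rw [mem_filter] at hw ⊢
        exact ⟨hw.1, hw.2.ge⟩)
    have h6 : (0 : ℝ) ≤ c j := Nat.cast_nonneg _
    have h7 := hΔK j
    linarith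
  have hpoor : ∀ g, ∀ J : Finset (Fin t), #{v ∈ {w ∈ R | lv w = 0} |
      2 * #(admissible E k C R lv g v ∩ J) < #J} * 2 ^ 30 ≤ 4 * n := fun g J => by
    rcases J.eq_empty_or_nonempty with rfl | hJ
    · simp
    have h1 := card_mul_le_of_bad (S := {v ∈ {w ∈ R | lv w = 0} |
      2 * #(admissible E k C R lv g v ∩ J) < #J}) (Bad := fun v => Bo v ∪ Bi v) (c := 2)
      (d := dP + dM) (q := 2 ^ 38) hJ (fun v hv => ?_) fun i _ => ?_
    · linarith
    · have h2 := (mem_filter.1 hv).2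
      have h3 : J ⊆ (admissible E k C R lv g v ∩ J) ∪ ((Bo v ∪ Bi v) ∩ J) := fun i hi => by
        by_cases hb : i ∈ Bo v ∪ Bi v
        · exact mem_union_right _ (mem_inter.2 ⟨hb, hi⟩)
        · rw [mem_union, not_or] at hb
          refine mem_union_left _ (mem_inter.2 ⟨mem_admissible_of_core ?_ ?_, hi⟩)
          · simpa [Bo] using hb.1
          · simpa [Bi] using hb.2
      have h4 := (card_le_card h3).trans (card_union_le _ _)
      omega
    · rw [filter_congr fun _ _ => mem_union, filter_or]
      refine (Nat.mul_le_mul_right _ (card_union_le _ _)).trans ?_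
      rw [add_mul]
      refine Nat.add_le_add (hbP i _ fun v hv => ?_) (hbM i _ fun v hv => ?_)
      all_goals
        rw [mem_filter, mem_filter, mem_filter] at hv
        exact ⟨(hlv0 v hv.1.1.2).1, (mem_filter.1 hv.2).2⟩
  have hxx : ∀ j, 1 ≤ j → j ≤ 3 → ∀ l < j, 26 * x j ≤ 8 * x l := fun j hj hj3 l hl => by
    simp only [x, show j ≠ 0 by omega, if_false]
    split_ifs <;> first | omega | linarith
  have hadm : ∀ j < 4, ∀ g, StageValid E k C R lv x j g → ∀ v ∈ R, lv v = j →
      8 * x j * t ≤ #(admissible E k C R lv g v) * Fintype.card V := by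
    intro j hj g hg v hv hvj
    rcases Nat.eq_zero_or_pos j with rfl | hj0
    · obtain ⟨-, h1, h2⟩ := hlv0 v hvj
      have h3 : (univ : Finset (Fin t)) ⊆ admissible E k C R lv g v ∪ (Bo v ∪ Bi v) :=
        fun i _ => by
          by_cases hb : i ∈ Bo v ∪ Bi v
          · exact mem_union_right _ hb
          · rw [mem_union, not_or] at hb
            refine mem_union_left _ (mem_admissible_of_core ?_ ?_)
            · simpa [Bo] using hb.1
            · simpa [Bi] using hb.2
      have h4 := (card_le_card h3).trans (card_union_le _ _)
      have h5 := card_union_le (Bo v) (Bi v)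
      rw [card_univ, Fintype.card_fin] at h4
      have h6 : t ≤ 2 * #(admissible E k C R lv g v) := by omega
      have h7 : (t : ℝ) ≤ 2 * #(admissible E k C R lv g v) := by exact_mod_cast h6
      have h8 := mul_le_mul_of_nonneg_right h7 (Nat.cast_nonneg (α := ℝ) n)
      simp only [x, if_true]
      linarith
    · have hΔkt : (k : ℝ) * t * 2 ^ 30 ≤ Δ j := by
        have := hΔK j
        linarith
      have hdeg : (#(Bi v) ≤ #(Bo v) ∧ Δ j ≤ #(nb E univ v)) ∨
          (#(Bo v) ≤ #(Bi v) ∧ Δ j ≤ #(nb (flip E) univ v)) := by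
        obtain rfl | rfl | rfl : j = 1 ∨ j = 2 ∨ j = 3 := by omega
        · obtain ⟨h1, h2, h3⟩ := hlv1 v hvj
          refine Or.inr ⟨by omega, ?_⟩
          simpa [Δ] using hdM v h1
        · have h1 := (hlv2 v hvj).1
          have h2 := hdP v h1
          have h3 := hPM.trans (hdM v h1)
          simp only [Δ, Nat.cast_le, if_true, show (2 : ℕ) ≠ 1 by norm_num, if_false]
          omega
        · have h2 := hV v
          simp only [Δ, Nat.cast_le, show (3 : ℕ) ≠ 1 by norm_num, show (3 : ℕ) ≠ 2 by norm_num,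
            if_false]
          omega
      rcases hdeg with ⟨hB, hd⟩ | ⟨hB, hd⟩
      · exact hg.card_admissible_ge hE ht hj0 (by omega) hCn hCk hR (hpoor g) (hxx j hj0 (by omega))
          (hcΔ j hj0 (by omega)) hL0 (hxΔ j hj0).1 (hx0 j) hΔkt hv hvj hd hB
      · have hA : ∀ v, admissible (flip E) k C R lv g v = admissible E k C R lv g v := fun v =>
          filter_congr fun _ _ => and_comm
        have := hg.rev.card_admissible_ge hE.rev ht hj0 (by omega) hCn hCk hR
          (by simpa only [hA] using hpoor g) (hxx j hj0 (by omega))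
          (hcΔ j hj0 (by omega)) hL0 (hxΔ j hj0).1 (hx0 j) hΔkt hv hvj hd hB
        rwa [hA] at this
  have hsum : ∑ u ∈ R with 0 < lv u,
      (2 : ℝ) ^ (1 + t + k * t) * Real.exp (-(x (lv u) / 2)) < 1 := by
    rw [← sum_fiberwise_of_maps_to (t := Icc 1 3) (g := lv) (fun u hu => by
      have h1 := (mem_filter.1 hu).2
      have h2 := hlv3 u
      rw [mem_Icc]
      omega)]
    refine lt_of_le_of_lt (sum_le_card_nsmul _ _ (1 / 4 : ℝ) fun j hj => ?_) (by norm_num)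
    rw [mem_Icc] at hj
    have h1 := card_mul_two_pow_mul_exp_le hk ht (hK'.trans (hΔK j)) (hcc j hj.1 hj.2)
      (hxΔ j hj.1).2
    refine le_trans (le_of_eq ?_) h1
    rw [sum_congr rfl fun u hu => by rw [(mem_filter.1 hu).2], sum_const, nsmul_eq_mul,
      filter_filter]
    congr 3
    refine filter_congr fun u _ => ?_
    omega
  obtain ⟨g, hg⟩ := exists_stageValid ht (fun j _ => hx0 j) hsum hadm 4 le_rfl
  refine ⟨fun i => C i ∪ {w ∈ R | lv w < 4 ∧ g w = i}, fun i j hij => ?_, ?_,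
    fun i => hg.stronglyKConnectedOn hCs i le_rfl⟩
  · rw [disjoint_left]
    intro v hvi hvj
    rw [mem_union, mem_filter] at hvi hvj
    rcases hvi with hvi | hvi <;> rcases hvj with hvj | hvj
    · exact disjoint_left.1 (hCd i j hij) hvi hvj
    · exact (hR v).1 hvj.1 i hvi
    · exact (hR v).1 hvi.1 j hvj
    · exact hij (hvi.2.2.symm.trans hvj.2.2)
  · refine eq_univ_of_forall fun v => mem_biUnion.2 ?_
    by_cases hv : v ∈ R
    · have := hlv3 v
      exact ⟨g v, mem_univ _, mem_union_right _ (mem_filter.2 ⟨hv, by omega, rfl⟩)⟩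
    · obtain ⟨i, hi⟩ : ∃ i, v ∈ C i := by
        by_contra! h
        exact hv ((hR v).2 h)
      exact ⟨i, mem_univ _, mem_union_left _ hi⟩

lemma exists_partition_of_gadgetFamily {E : V → V → Prop} (hE : IsTournament E) {k t K : ℕ}
    (hk : 1 ≤ k) (ht : 1 ≤ t) {Exc : Finset V}
    {A B R I : Fin (4 * 2 ^ 30 * t) × Fin (4 * k) → Finset V}
    {eh bh : Fin (4 * 2 ^ 30 * t) × Fin (4 * k) → V} {dP dM : ℕ}
    (G : GadgetFamily E 40 Exc A B R I eh bh dP dM)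
    (hsp : ∀ α, ∀ z ∈ R α, ∀ T : Finset (Fin (4 * 2 ^ 30 * t) × Fin (4 * k)), α ∉ T →
      4 * ∑ β ∈ T, #(nb E (I β) z) ≤ #(nb E univ z) ∧
      4 * ∑ β ∈ T, #(nb (flip E) (I β) z) ≤ #(nb (flip E) univ z))
    (hExc : #Exc * 2 ^ 30 ≤ K) (hK : 2 ^ 50 * (k * t) ≤ K) (hKP : K ≤ dP) (hPM : dP ≤ dM)
    (hV : ∀ v, K + 1 ≤ #(nb E univ v) ∧ K + 1 ≤ #(nb (flip E) univ v)) :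
    ∃ P : Fin t → Finset V, (∀ i j, i ≠ j → Disjoint (P i) (P j)) ∧ univ.biUnion P = univ ∧
      ∀ i, StronglyKConnectedOn E k (P i) := by
  obtain ⟨C, hCd, hCs, hCk, hCn, hbP, hbM⟩ := exists_cores_of_sparse hE hk ht
    (Nat.one_le_two_pow (n := 30)) rfl G hsp (by
      have : k * 2 ^ 30 * t = 2 ^ 30 * (k * t) := by ring
      rw [this]
      linarith) hKP hPM hV
  exact exists_partition_of_cores hE hk ht hCd hCs hCk hCn hbP hbM hExc (by linarith) hKP hPM hV
    G.degP G.degM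

lemma exists_partition {E : V → V → Prop} (hE : IsTournament E) {k t K : ℕ} (hk : 1 ≤ k)
    (ht : 1 ≤ t) (hK : 2 ^ 100 * (k * t) ≤ K) (h : StronglyKConnectedOn E K univ) :
    ∃ P : Fin t → Finset V, (∀ i j, i ≠ j → Disjoint (P i) (P j)) ∧ univ.biUnion P = univ ∧
      ∀ i, StronglyKConnectedOn E k (P i) := by
  have hkt : 1 ≤ k * t := Nat.mul_pos hk ht
  have hcard : Fintype.card (Fin (4 * 2 ^ 30 * t) × Fin (4 * k)) = 2 ^ 34 * (k * t) := by
    simp only [Fintype.card_prod, Fintype.card_fin]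
    ring
  have : Nonempty (Fin (4 * 2 ^ 30 * t) × Fin (4 * k)) := by
    rw [← Fintype.card_pos_iff, hcard]
    positivity
  have hK1 : 1 ≤ K := by linarith
  have hV : ∀ v, K + 1 ≤ #(nb E univ v) ∧ K + 1 ≤ #(nb (flip E) univ v) := fun v =>
    ⟨h.card_nb hE hK1 (mem_univ v), h.rev.card_nb hE.rev hK1 (mem_univ v)⟩
  obtain ⟨Exc, A, B, R, I, eh, bh, dP, dM, G, hExc, hKP, hKM⟩ :=
    exists_gadgetFamily (N := 33 * 88 * (2 ^ 34 * (k * t))) (s := 40) hE (by linarith) h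
      (by linarith)
  obtain ⟨g, hg, hsp⟩ := exists_sparse_family (κ := Fin (4 * 2 ^ 30 * t) × Fin (4 * k))
    G.disjI G.card_R (by norm_num) (by rw [hcard, Fintype.card_fin]) E
  have hExc' : #Exc * 2 ^ 30 ≤ K := by linarith
  rcases le_total dP dM with hPM | hMP
  · exact exists_partition_of_gadgetFamily hE hk ht (G.comp hg) hsp hExc' (by linarith) hKP hPM hV
  · obtain ⟨P, hPd, hPu, hPs⟩ := exists_partition_of_gadgetFamily hE.rev hk ht (G.comp hg).rev
      (fun α z hz T hT => (hsp α z hz T hT).symm) hExc' (by linarith) hKM hMP fun v => (hV v).symm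
    exact ⟨P, hPd, hPu, fun i => (hPs i).rev⟩

end Assembly

/-- Theorem 1.1. There is a constant `c > 0` such that the vertex set of
every strongly `c·k·t`-connected tournament can be partitioned into `t` parts, each of which
induces a strongly `k`-connected subtournament. -/
theorem statement0 :
    ∃ c : ℕ, 0 < c ∧
      ∀ (k t : ℕ), 0 < k → 0 < t →
        ∀ (V : Type) [Fintype V] [DecidableEq V] (E : V → V → Prop) [DecidableRel E],
          IsTournament E → StronglyKConnected E (c * k * t) →
          ∃ P : Fin t → Finset V,
            (∀ i j : Fin t, i ≠ j → Disjoint (P i) (P j)) ∧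
            Finset.univ.biUnion P = (Finset.univ : Finset V) ∧
            ∀ i : Fin t, StronglyKConnectedOn E k (P i) := by
  exact ⟨2 ^ 100, by positivity, fun k t hk ht V _ _ E _ hE h =>
    exists_partition hE hk ht (by rw [mul_assoc]) h⟩

end TournamentPartition
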